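/- Let D and D′ be domains in ℝ^n, n ≥ 3, let φ be nondecreasing with ∫_{t_*}^∞ (t/φ(t))^{1/(n−2)} dt < ∞, let p ∈ (n, n + 1/(n−2)), and let f:D→D′ be a homeomorphism of finite distortion of class W^{1,φ}_loc. Then there is a positive constant c_2 depending only on n and p such that for every x_0 ∈ D and every ε > 0 with B(x_0,4ε) ⊂ D: m(f B(x_0,2ε))/m(B(x_0,2ε)) ≤ c_2 · [⨍_{B(x_0,4ε)} K_p(x,f)^{(n−1)/(p−n+1)} dm(x)]^{n(p−n+1)/(n(p−n+1)−p)}. -/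

import Mathlib

open MeasureTheory Metric Set Filter
open scoped ENNReal NNReal Topology RealInnerProductSpace Classical

noncomputable section

abbrev Eucl (n : ℕ) : Type := EuclideanSpace ℝ (Fin n)

/-- A `k`-dimensional surface in `ℝⁿ`: a continuous map defined on an open subset of the
one-point compactification of `ℝᵏ`. -/
structure Surface (n k : ℕ) where
  dom : Set (OnePoint (Eucl k))
  isOpen_dom : IsOpen dom
  toFun : OnePoint (Eucl k) → Eucl n
  continuousOn : ContinuousOn toFun dom

namespace Surface

variable {n k : ℕ}

/-- The multiplicity function `N(S,y)` of a surface. -/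
def mult (S : Surface n k) (y : Eucl n) : ℝ≥0∞ :=
  ((S.dom ∩ S.toFun ⁻¹' {y}).encard : ℕ∞)

/-- The integral `∫_S ρ dA = ∫ ρ(y) N(S,y) dH^k(y)` of `ρ` over the surface `S`. -/
def sint (S : Surface n k) (ρ : Eucl n → ℝ≥0∞) : ℝ≥0∞ :=
  ∫⁻ y, ρ y * S.mult y ∂(μH[(k : ℝ)] : Measure (Eucl n))

end Surface

/-- Admissible functions for a family of `k`-surfaces. -/
def surfAdm {n : ℕ} (k : ℕ) (Γ : Set (Surface n k)) : Set (Eucl n → ℝ≥0∞) :=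
  {ρ | Measurable ρ ∧ ∀ S ∈ Γ, 1 ≤ S.sint fun y => ρ y ^ k}

/-- The `p`-modulus of a family of `k`-surfaces. -/
def surfModulus {n : ℕ} (p : ℝ) (k : ℕ) (Γ : Set (Surface n k)) : ℝ≥0∞ :=
  ⨅ ρ ∈ surfAdm k Γ, ∫⁻ x, ρ x ^ p

/-- Extensively `p`-admissible functions: admissibility may fail on a subfamily of
`p`-modulus zero. -/
def extAdm {n : ℕ} (p : ℝ) (k : ℕ) (Γ : Set (Surface n k)) : Set (Eucl n → ℝ≥0∞) :=
  {ρ | Measurable ρ ∧ surfModulus p k {S ∈ Γ | ¬ 1 ≤ S.sint fun y => ρ y ^ k} = 0}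

/-- The family of the (injectively parametrized, nonempty) surfaces `S(x₀,r) ∩ D`,
`r ∈ I`. -/
def sphereFam {n : ℕ} (D : Set (Eucl n)) (x₀ : Eucl n) (I : Set ℝ) :
    Set (Surface n (n - 1)) :=
  {S | ∃ r ∈ I, S.dom.Nonempty ∧ Set.InjOn S.toFun S.dom ∧
      S.toFun '' S.dom = sphere x₀ r ∩ D}

/-- The image of a family of surfaces under a map `f`. -/
def imageFam {n k : ℕ} (f : Eucl n → Eucl n) (Γ : Set (Surface n k)) :
    Set (Surface n k) :=
  {S' | ∃ S ∈ Γ, S'.dom = S.dom ∧ Set.EqOn S'.toFun (f ∘ S.toFun) S.dom}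

/-- The spherical ring `R(x₀,a,b)`. -/
def ringA {n : ℕ} (x₀ : Eucl n) (a b : ℝ) : Set (Eucl n) :=
  {x | a < dist x x₀ ∧ dist x x₀ < b}

/-- `‖Q‖_α(r) = (∫_{D ∩ S(x₀,r)} Q^α dA)^{1/α}`. -/
def sphNorm {n : ℕ} (D : Set (Eucl n)) (x₀ : Eucl n) (Q : Eucl n → ℝ≥0∞)
    (α : ℝ) (r : ℝ) : ℝ≥0∞ :=
  (∫⁻ x in D ∩ sphere x₀ r, Q x ^ α ∂(μH[((n : ℝ) - 1)] : Measure (Eucl n))) ^ (1 / α)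

/-- `f` is a lower `Q`-homeomorphism w.r.t. the `p`-modulus at `x₀`. -/
def IsLowerQHomeoAt {n : ℕ} (D : Set (Eucl n)) (f : Eucl n → Eucl n)
    (Q : Eucl n → ℝ≥0∞) (p : ℝ) (x₀ : Eucl n) (d₀ : ℝ≥0∞) : Prop :=
  ∀ ε ε₀ : ℝ, 0 < ε → ε < ε₀ → ENNReal.ofReal ε₀ < d₀ →
    (⨅ ρ ∈ extAdm p (n - 1) (sphereFam D x₀ (Ioo ε ε₀)),
        ∫⁻ x in ringA x₀ ε ε₀, ρ x ^ p / Q x) ≤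
      surfModulus p (n - 1) (imageFam f (sphereFam D x₀ (Ioo ε ε₀)))

/-- `f` is a homeomorphism of `D` onto `D'`. -/
structure IsHomeoOn {n : ℕ} (f : Eucl n → Eucl n) (D D' : Set (Eucl n)) : Prop where
  continuousOn : ContinuousOn f D
  injOn : Set.InjOn f D
  image_eq : f '' D = D'
  isOpenMapOn : ∀ U : Set (Eucl n), U ⊆ D → IsOpen U → IsOpen (f '' U)

/-- `Df` is the weak (Sobolev) derivative of `f` on `D`, and `f ∈ W^{1,1}_loc(D)`. -/
def IsWeakDerivOn {n m : ℕ} (D : Set (Eucl n)) (f : Eucl n → Eucl m)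
    (Df : Eucl n → Eucl n →L[ℝ] Eucl m) : Prop :=
  LocallyIntegrableOn f D volume ∧ LocallyIntegrableOn Df D volume ∧
  ∀ ψ : Eucl n → ℝ, ContDiff ℝ (⊤ : ℕ∞) ψ → HasCompactSupport ψ → tsupport ψ ⊆ D →
    ∀ v : Eucl n, ∫ x, ψ x • Df x v = - ∫ x, fderiv ℝ ψ x v • f x

/-- The Frobenius norm `|∇f| = (Σ_{i,j} (∂f_i/∂x_j)²)^{1/2}` of a linear map. -/
def frobNorm {n m : ℕ} (A : Eucl n →L[ℝ] Eucl m) : ℝ :=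
  Real.sqrt (∑ i : Fin m, ∑ j : Fin n, (A (EuclideanSpace.single j 1) i) ^ 2)

/-- The Orlicz–Sobolev class `W^{1,φ}_loc(D)` (with explicit weak derivative `Df`). -/
def MemOrliczSobolevOn {n m : ℕ} (φ : ℝ → ℝ) (D : Set (Eucl n))
    (f : Eucl n → Eucl m) (Df : Eucl n → Eucl n →L[ℝ] Eucl m) : Prop :=
  IsWeakDerivOn D f Df ∧
  ∀ K : Set (Eucl n), K ⊆ D → IsCompact K →
    (∫⁻ x in K, ENNReal.ofReal (φ (frobNorm (Df x)))) < ⊤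

/-- `φ` is nondecreasing and positive on `(0,∞)`. -/
def NondecPos (φ : ℝ → ℝ) : Prop :=
  (∀ s t : ℝ, 0 < s → s ≤ t → φ s ≤ φ t) ∧ ∀ t : ℝ, 0 < t → 0 < φ t

/-- The Calderón-type condition `∫_{t₀}^∞ (t/φ(t))^{1/(n-2)} dt < ∞`. -/
def CalderonCond (n : ℕ) (φ : ℝ → ℝ) : Prop :=
  ∃ t₀ : ℝ, 0 < t₀ ∧
    IntegrableOn (fun t => (t / φ t) ^ (1 / ((n : ℝ) - 2))) (Ioi t₀) volume

/-- `f` (with a.e. derivative `Df`) has finite distortion on `D`. -/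
def HasFiniteDistortionOn {n : ℕ} (D : Set (Eucl n))
    (Df : Eucl n → Eucl n →L[ℝ] Eucl n) : Prop :=
  ∃ K : Eucl n → ℝ, AEMeasurable K (volume.restrict D) ∧
    ∀ᵐ x ∂volume.restrict D, 1 ≤ K x ∧ ‖Df x‖ ^ n ≤ K x * (Df x).det

/-- The distortion `K_p(x,f)` for a map with derivative `Df`. -/
def distortionKp {n : ℕ} (p : ℝ) (Df : Eucl n → Eucl n →L[ℝ] Eucl n)
    (x : Eucl n) : ℝ≥0∞ :=
  if (Df x).det ≠ 0 then ENNReal.ofReal (‖Df x‖ ^ p / (Df x).det)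
  else if Df x = 0 then 1 else ⊤

/-- The multiplicity function of a curve `γ : [0,1] → ℝⁿ`. -/
def curveMult {n : ℕ} (γ : ℝ → Eucl n) (y : Eucl n) : ℝ≥0∞ :=
  (({t ∈ Icc (0:ℝ) 1 | γ t = y}).encard : ℕ∞)

/-- The line integral `∫_γ ρ ds = ∫ ρ(y) N(γ,y) dH¹(y)`. -/
def curveInt {n : ℕ} (γ : ℝ → Eucl n) (ρ : Eucl n → ℝ≥0∞) : ℝ≥0∞ :=
  ∫⁻ y, ρ y * curveMult γ y ∂(μH[(1 : ℝ)] : Measure (Eucl n))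

/-- The family of curves joining `A` and `B` in `G`. -/
def curveJoin {n : ℕ} (A B G : Set (Eucl n)) : Set (ℝ → Eucl n) :=
  {γ | ContinuousOn γ (Icc 0 1) ∧ γ 0 ∈ A ∧ γ 1 ∈ B ∧ Set.MapsTo γ (Icc 0 1) G}

/-- The `q`-modulus of a family of curves. -/
def curveModulus {n : ℕ} (q : ℝ) (Γ : Set (ℝ → Eucl n)) : ℝ≥0∞ :=
  ⨅ ρ ∈ {ρ : Eucl n → ℝ≥0∞ | Measurable ρ ∧ ∀ γ ∈ Γ, 1 ≤ curveInt γ ρ},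
    ∫⁻ x, ρ x ^ q

/-- The `q`-capacity of the condenser `(A,C)`, via the modulus of joining curves. -/
def condenserCap {n : ℕ} (q : ℝ) (A C : Set (Eucl n)) : ℝ≥0∞ :=
  curveModulus q (curveJoin (frontier A) (frontier C) (A \ C))

/-- `L(x₀,f) = limsup_{x→x₀} |f(x)-f(x₀)|/|x-x₀|`. -/
def LAt {n : ℕ} (f : Eucl n → Eucl n) (x₀ : Eucl n) : ℝ≥0∞ :=
  limsup (fun x => edist (f x) (f x₀) / edist x x₀) (𝓝[≠] x₀)

/-- `k_p(x₀) = limsup_{ε→0} (⨍_{B(x₀,ε)} K_p(x,f)^{(n-1)/(p-n+1)} dm)^{(p-n+1)/(n-1)}`. -/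
def kpAt {n : ℕ} (p : ℝ) (Df : Eucl n → Eucl n →L[ℝ] Eucl n) (x₀ : Eucl n) : ℝ≥0∞ :=
  limsup (fun ε : ℝ =>
      ((∫⁻ x in ball x₀ ε, distortionKp p Df x ^ (((n:ℝ)-1)/(p-(n:ℝ)+1))) /
        volume (ball x₀ ε)) ^ ((p-(n:ℝ)+1)/((n:ℝ)-1)))
    (𝓝[>] (0:ℝ))

/-- `f` is absolutely continuous on `S` w.r.t. `d`-dimensional Hausdorff measure. -/
def ACOnSet {n m : ℕ} (f : Eucl n → Eucl m) (S : Set (Eucl n)) (d : ℝ) : Prop :=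
  ∀ ε : ℝ, 0 < ε → ∃ δ : ℝ, 0 < δ ∧ ∀ A : Set (Eucl n), A ⊆ S →
    (μH[d] : Measure (Eucl n)) A < ENNReal.ofReal δ →
      (μH[d] : Measure (Eucl m)) (f '' A) < ENNReal.ofReal ε

/-- `f` is locally absolutely continuous on `S` w.r.t. `H^d`. -/
def LocACOnSet {n m : ℕ} (f : Eucl n → Eucl m) (S : Set (Eucl n)) (d : ℝ) : Prop :=
  ∀ x ∈ S, ∃ V ∈ 𝓝 x, ACOnSet f (S ∩ V) d

/-- The Luzin (N)-property of `f` on `S` w.r.t. `d`-dimensional Hausdorff measure. -/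
def LusinNOn {n m : ℕ} (f : Eucl n → Eucl m) (S : Set (Eucl n)) (d : ℝ) : Prop :=
  ∀ A : Set (Eucl n), A ⊆ S → (μH[d] : Measure (Eucl n)) A = 0 →
    (μH[d] : Measure (Eucl m)) (f '' A) = 0

end

section PA

lemma lintegral_homothety {d : ℕ} (F : (Fin d → ℝ) → ℝ≥0∞) (hF : Measurable F)
    (x : Fin d → ℝ) {t : ℝ} (ht : 0 < t) :
    ∫⁻ y, F (x + t • (y - x)) = ENNReal.ofReal ((t ^ d)⁻¹) * ∫⁻ z, F z := by
  have h1 : ∫⁻ y, F (x + t • (y - x)) = ∫⁻ y, F (x + t • y) :=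
    lintegral_sub_right_eq_self (fun y => F (x + t • y)) x
  have h2 : ∫⁻ y, F (x + t • y) = ∫⁻ w, F (x + w) ∂(Measure.map (fun y => t • y) volume) := by
    rw [lintegral_map (f := fun w => F (x + w)) (by fun_prop) (by fun_prop)]
  rw [h1, h2, Measure.map_addHaar_smul _ ht.ne', lintegral_smul_measure,
    lintegral_add_left_eq_self]
  simp [abs_of_pos ht]

/-- potential -/
noncomputable def Phi {d : ℕ} (h : (Fin d → ℝ) → ℝ≥0∞) (c : Fin d → ℝ) (ρ : ℝ) (x : Fin d → ℝ) : ℝ≥0∞ :=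
  ENNReal.ofReal (2 * ρ) * ∫⁻ t in Ioo (0:ℝ) 1, ENNReal.ofReal ((t ^ d)⁻¹) *
    ∫⁻ z in closedBall c ρ ∩ closedBall x (2 * ρ * t), h z

lemma potential_smooth {d m : ℕ} (v : (Fin d → ℝ) → (Fin m → ℝ)) (hv : ContDiff ℝ 1 v)
    (c x : Fin d → ℝ) (ρ : ℝ) (hρ : 0 < ρ) (hx : x ∈ closedBall c ρ) (τ : ℝ) (hτ : 0 < τ) (hτ1 : τ < 1) :
    ∫⁻ y in closedBall c ρ, ‖v (x + τ • (y - x)) - v y‖ₑ ≤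
      ENNReal.ofReal (2 * ρ) * ∫⁻ t in Ioo τ 1, ENNReal.ofReal ((t ^ d)⁻¹) *
        ∫⁻ z in closedBall c ρ ∩ closedBall x (2 * ρ * t), ‖fderiv ℝ v z‖ₑ := by
  have hDc : Continuous (fderiv ℝ v) := hv.continuous_fderiv (by norm_num)
  have hd : ∀ y ∈ closedBall c ρ, ‖y - x‖ ≤ 2 * ρ := by
    intro y hy
    have := dist_triangle_right y x c
    rw [mem_closedBall] at hx hy
    rw [← dist_eq_norm]; linarith
  have step1 : ∀ y ∈ closedBall c ρ, ‖v (x + τ • (y - x)) - v y‖ₑ ≤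
      ENNReal.ofReal (2 * ρ) * ∫⁻ t in Ioo τ 1, ‖fderiv ℝ v (x + t • (y - x))‖ₑ := by
    intro y hy
    have hder : ∀ t ∈ uIcc τ 1, HasDerivAt (fun t : ℝ => v (x + t • (y - x)))
        (fderiv ℝ v (x + t • (y - x)) (y - x)) t := by
      intro t _
      have h1 : HasFDerivAt v (fderiv ℝ v (x + t • (y - x))) (x + t • (y - x)) :=
        (hv.differentiable (by norm_num) _).hasFDerivAt
      have h2 : HasDerivAt (fun t : ℝ => x + t • (y - x)) (y - x) t := by
        simpa using ((hasDerivAt_id t).smul_const (y - x)).const_add x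
      exact h1.comp_hasDerivAt t h2
    have hcont : Continuous (fun t : ℝ => fderiv ℝ v (x + t • (y - x)) (y - x)) := by fun_prop
    have hint := intervalIntegral.integral_eq_sub_of_hasDerivAt hder (hcont.intervalIntegrable _ _)
    have e1 : x + (1:ℝ) • (y - x) = y := by simp
    rw [e1] at hint
    rw [← enorm_neg, neg_sub, ← hint, intervalIntegral.integral_of_le hτ1.le, integral_Ioc_eq_integral_Ioo]
    refine (enorm_integral_le_lintegral_enorm _).trans ?_
    rw [← lintegral_const_mul _ (by fun_prop)]
    refine lintegral_mono fun t => ?_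
    rw [mul_comm]
    refine (ContinuousLinearMap.le_opENorm _ _).trans ?_
    gcongr
    rw [← ofReal_norm]
    exact ENNReal.ofReal_le_ofReal (hd y hy)
  calc _ ≤ ∫⁻ y in closedBall c ρ, ENNReal.ofReal (2 * ρ) * ∫⁻ t in Ioo τ 1, ‖fderiv ℝ v (x + t • (y - x))‖ₑ :=
        setLIntegral_mono' measurableSet_closedBall step1
    _ = ENNReal.ofReal (2 * ρ) * ∫⁻ y in closedBall c ρ, ∫⁻ t in Ioo τ 1, ‖fderiv ℝ v (x + t • (y - x))‖ₑ := by
        rw [lintegral_const_mul']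
        exact ENNReal.ofReal_ne_top
    _ = ENNReal.ofReal (2 * ρ) * ∫⁻ t in Ioo τ 1, ∫⁻ y in closedBall c ρ, ‖fderiv ℝ v (x + t • (y - x))‖ₑ := by
        rw [lintegral_lintegral_swap]
        apply Continuous.aemeasurable
        fun_prop
    _ ≤ _ := by
        refine mul_le_mul_right ?_ _
        refine setLIntegral_mono' measurableSet_Ioo fun t ht => ?_
        have ht0 : 0 < t := hτ.trans ht.1
        set T := closedBall c ρ ∩ closedBall x (2 * ρ * t) with hT
        have hTm : MeasurableSet T := measurableSet_closedBall.inter measurableSet_closedBall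
        have hm : Measurable (T.indicator fun z => ‖fderiv ℝ v z‖ₑ) :=
          (hDc.enorm.measurable).indicator hTm
        rw [← lintegral_indicator hTm, ← lintegral_homothety _ hm x ht0,
          ← lintegral_indicator measurableSet_closedBall]
        refine lintegral_mono fun y => ?_
        by_cases hy : y ∈ closedBall c ρ
        · rw [indicator_of_mem hy, indicator_of_mem]
          refine ⟨?_, ?_⟩
          · exact (convex_closedBall c ρ).add_smul_sub_mem hx hy ⟨ht0.le, ht.2.le⟩
          · rw [mem_closedBall, dist_eq_norm]
            simp only [add_sub_cancel_left, norm_smul, Real.norm_eq_abs, abs_of_pos ht0]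
            nlinarith [hd y hy]
        · rw [indicator_of_notMem hy]; exact zero_le

lemma potential_est {d m : ℕ} (u : (Fin d → ℝ) → (Fin m → ℝ)) (v : ℕ → (Fin d → ℝ) → (Fin m → ℝ))
    (hv : ∀ j, ContDiff ℝ 1 (v j)) (c x : Fin d → ℝ) (ρ : ℝ) (hρ : 0 < ρ) (hx : x ∈ closedBall c ρ)
    (hu : ContinuousWithinAt u (closedBall c ρ) x)
    (hlim : ∀ y ∈ closedBall c ρ, Tendsto (fun j => v j y) atTop (𝓝 (u y)))
    (h : (Fin d → ℝ) → ℝ≥0∞) (hh : Measurable h) (e : ℕ → (Fin d → ℝ) → ℝ≥0∞)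
    (hle : ∀ j, ∀ z ∈ closedBall c ρ, ‖fderiv ℝ (v j) z‖ₑ ≤ h z + e j z)
    (he : Tendsto (fun j => ∫⁻ z in closedBall c ρ, e j z) atTop (𝓝 0)) :
    ∫⁻ y in closedBall c ρ, ‖u x - u y‖ₑ ≤ Phi h c ρ x := by
  set B := closedBall c ρ with hB
  have main : ∀ τ : ℝ, 0 < τ → τ < 1 →
      ∫⁻ y in B, liminf (fun j => ‖v j (x + τ • (y - x)) - v j y‖ₑ) atTop ≤ Phi h c ρ x := by
    intro τ hτ hτ1
    refine (lintegral_liminf_le (fun j => ?_)).trans ?_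
    · have := (hv j).continuous
      apply Continuous.measurable; fun_prop
    set C : ℝ≥0∞ := ENNReal.ofReal (2 * ρ) * (ENNReal.ofReal ((τ ^ d)⁻¹)) with hC
    have b : ∀ j, ∫⁻ y in B, ‖v j (x + τ • (y - x)) - v j y‖ₑ ≤ Phi h c ρ x + C * ∫⁻ z in B, e j z := by
      intro j
      refine (potential_smooth (v j) (hv j) c x ρ hρ hx τ hτ hτ1).trans ?_
      have k1 : ∀ t ∈ Ioo τ 1, ENNReal.ofReal ((t ^ d)⁻¹) * ∫⁻ z in B ∩ closedBall x (2 * ρ * t), ‖fderiv ℝ (v j) z‖ₑ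
          ≤ ENNReal.ofReal ((t ^ d)⁻¹) * (∫⁻ z in B ∩ closedBall x (2 * ρ * t), h z) +
            ENNReal.ofReal ((τ ^ d)⁻¹) * ∫⁻ z in B, e j z := by
        intro t ht
        have q1 : ∫⁻ z in B ∩ closedBall x (2 * ρ * t), ‖fderiv ℝ (v j) z‖ₑ ≤
          (∫⁻ z in B ∩ closedBall x (2 * ρ * t), h z) + ∫⁻ z in B, e j z := by
          calc _ ≤ ∫⁻ z in B ∩ closedBall x (2 * ρ * t), (h z + e j z) :=
                setLIntegral_mono' (measurableSet_closedBall.inter measurableSet_closedBall)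
                  (fun z hz => hle j z hz.1)
            _ = (∫⁻ z in B ∩ closedBall x (2 * ρ * t), h z) + ∫⁻ z in B ∩ closedBall x (2 * ρ * t), e j z :=
                lintegral_add_left hh _
            _ ≤ _ := by gcongr; exact inter_subset_left
        calc _ ≤ ENNReal.ofReal ((t ^ d)⁻¹) * ((∫⁻ z in B ∩ closedBall x (2 * ρ * t), h z) + ∫⁻ z in B, e j z) := by gcongr
          _ = _ := mul_add _ _ _
          _ ≤ _ := by gcongr; exact ht.1.le
      calc _ ≤ ENNReal.ofReal (2 * ρ) * ∫⁻ t in Ioo τ 1, (ENNReal.ofReal ((t ^ d)⁻¹) * (∫⁻ z in B ∩ closedBall x (2 * ρ * t), h z) +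
            ENNReal.ofReal ((τ ^ d)⁻¹) * ∫⁻ z in B, e j z) := by
            exact mul_le_mul_right (setLIntegral_mono' measurableSet_Ioo k1) _
        _ = ENNReal.ofReal (2 * ρ) * ((∫⁻ t in Ioo τ 1, (ENNReal.ofReal ((t ^ d)⁻¹) * (∫⁻ z in B ∩ closedBall x (2 * ρ * t), h z))) +
            ENNReal.ofReal ((τ ^ d)⁻¹) * (∫⁻ z in B, e j z) * volume (Ioo τ 1)) := by
            rw [lintegral_add_right _ measurable_const, setLIntegral_const]
        _ ≤ ENNReal.ofReal (2 * ρ) * ((∫⁻ t in Ioo (0:ℝ) 1, (ENNReal.ofReal ((t ^ d)⁻¹) * (∫⁻ z in B ∩ closedBall x (2 * ρ * t), h z))) +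
            ENNReal.ofReal ((τ ^ d)⁻¹) * (∫⁻ z in B, e j z) * 1) := by
            gcongr
            rw [Real.volume_Ioo]
            exact ENNReal.ofReal_le_one.2 (by linarith)
        _ = _ := by rw [Phi, hC]; ring
    have hl : Tendsto (fun j => Phi h c ρ x + C * ∫⁻ z in B, e j z) atTop (𝓝 (Phi h c ρ x + C * 0)) := by
      refine tendsto_const_nhds.add (ENNReal.Tendsto.const_mul he (Or.inr ?_))
      exact ENNReal.mul_ne_top ENNReal.ofReal_ne_top ENNReal.ofReal_ne_top
    calc _ ≤ liminf (fun j => Phi h c ρ x + C * ∫⁻ z in B, e j z) atTop := liminf_le_liminf (Eventually.of_forall b)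
      _ = Phi h c ρ x + C * 0 := hl.liminf_eq
      _ = _ := by simp
  -- let tau -> 0
  set τ : ℕ → ℝ := fun k => 1 / ((k : ℝ) + 2) with hτd
  have hτ0 : ∀ k, 0 < τ k := fun k => by positivity
  have hτ1 : ∀ k, τ k < 1 := fun k => by
    rw [hτd]; simp only; rw [div_lt_one (by positivity)]; have : (0:ℝ) ≤ k := by positivity
    linarith
  have hτlim : Tendsto τ atTop (𝓝 0) := by
    have := tendsto_one_div_add_atTop_nhds_zero_nat (𝕜 := ℝ)
    refine squeeze_zero (fun k => (hτ0 k).le) (fun k => ?_) this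
    exact one_div_le_one_div_of_le (by positivity) (by linarith)
  have hmem : ∀ k, ∀ y ∈ B, x + τ k • (y - x) ∈ B := fun k y hy =>
    (convex_closedBall c ρ).add_smul_sub_mem hx hy ⟨(hτ0 k).le, (hτ1 k).le⟩
  have e1 : ∀ k, ∀ y ∈ B, liminf (fun j => ‖v j (x + τ k • (y - x)) - v j y‖ₑ) atTop = ‖u (x + τ k • (y - x)) - u y‖ₑ := by
    intro k y hy
    exact ((hlim _ (hmem k y hy)).sub (hlim y hy)).enorm.liminf_eq
  have e2 : ∀ y ∈ B, Tendsto (fun k => liminf (fun j => ‖v j (x + τ k • (y - x)) - v j y‖ₑ) atTop) atTop (𝓝 ‖u x - u y‖ₑ) := by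
    intro y hy
    simp_rw [fun k => e1 k y hy]
    have : Tendsto (fun k => x + τ k • (y - x)) atTop (𝓝[B] x) := by
      refine tendsto_nhdsWithin_iff.2 ⟨?_, Eventually.of_forall fun k => hmem k y hy⟩
      have := (tendsto_const_nhds (x := x)).add (hτlim.smul_const (y - x))
      simpa using this
    exact ((hu.tendsto.comp this).sub_const (u y)).enorm
  calc ∫⁻ y in B, ‖u x - u y‖ₑ = ∫⁻ y in B, liminf (fun k => liminf (fun j => ‖v j (x + τ k • (y - x)) - v j y‖ₑ) atTop) atTop :=
        setLIntegral_congr_fun measurableSet_closedBall (fun y hy => (e2 y hy).liminf_eq.symm)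
    _ ≤ liminf (fun k => ∫⁻ y in B, liminf (fun j => ‖v j (x + τ k • (y - x)) - v j y‖ₑ) atTop) atTop := by
        refine lintegral_liminf_le fun k => ?_
        refine Measurable.liminf fun j => ?_
        have := (hv j).continuous
        apply Continuous.measurable; fun_prop
    _ ≤ liminf (fun k : ℕ => Phi h c ρ x) atTop := liminf_le_liminf (Eventually.of_forall fun k => main _ (hτ0 k) (hτ1 k))
    _ = _ := by simp

/-- two point estimate -/
lemma two_point {d m : ℕ} (u : (Fin d → ℝ) → (Fin m → ℝ)) (c x y : Fin d → ℝ) (ρ : ℝ)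
    (A : ℝ≥0∞) (hum : ContinuousOn u (closedBall c ρ))
    (h1 : ∫⁻ z in closedBall c ρ, ‖u x - u z‖ₑ ≤ A) (h2 : ∫⁻ z in closedBall c ρ, ‖u y - u z‖ₑ ≤ A) :
    ‖u x - u y‖ₑ * volume (closedBall c ρ) ≤ 2 * A := by
  calc ‖u x - u y‖ₑ * volume (closedBall c ρ) = ∫⁻ z in closedBall c ρ, ‖u x - u y‖ₑ := by
        rw [setLIntegral_const]
    _ ≤ ∫⁻ z in closedBall c ρ, (‖u x - u z‖ₑ + ‖u y - u z‖ₑ) := by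
        refine lintegral_mono fun z => ?_
        have : u x - u y = (u x - u z) - (u y - u z) := by abel
        rw [this]; exact enorm_sub_le
    _ = (∫⁻ z in closedBall c ρ, ‖u x - u z‖ₑ) + ∫⁻ z in closedBall c ρ, ‖u y - u z‖ₑ := by
        refine lintegral_add_left' ?_ _
        exact ((continuousOn_const.sub hum).aestronglyMeasurable measurableSet_closedBall).enorm
    _ ≤ A + A := add_le_add h1 h2
    _ = 2 * A := (two_mul A).symm

end PA

section PB

def badSet {d : ℕ} (h : (Fin d → ℝ) → ℝ≥0∞) (ε : ℝ≥0∞) (R : ℝ) : Set (Fin d → ℝ) :=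
  {x | ∃ r, 0 < r ∧ r ≤ R ∧ ε * volume (closedBall x r) < ∫⁻ z in closedBall x r, h z}

lemma vol_cb {d : ℕ} (x : Fin d → ℝ) {r : ℝ} (hr : 0 ≤ r) :
    volume (closedBall x r) = ENNReal.ofReal ((2 * r) ^ d) := by
  rw [Real.volume_pi_closedBall _ hr]; simp

lemma weak_type {d : ℕ} (h : (Fin d → ℝ) → ℝ≥0∞) (ε : ℝ≥0∞) (R : ℝ) :
    ε * volume (badSet h ε R) ≤ 4 ^ d * ∫⁻ z, h z := by
  have hch : ∀ x ∈ badSet h ε R, ∃ r, 0 < r ∧ r ≤ R ∧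
    ε * volume (closedBall x r) < ∫⁻ z in closedBall x r, h z := fun x hx => hx
  choose! r hr0 hrR hr using hch
  obtain ⟨u, hut, hdisj, hcov⟩ := Vitali.exists_disjoint_subfamily_covering_enlargement_closedBall
    (badSet h ε R) (fun x => x) r R hrR 4 (by norm_num)
  have hcount : u.Countable := by
    refine hdisj.countable_of_nonempty_interior fun x hx => ?_
    exact ⟨x, mem_interior_iff_mem_nhds.2 (closedBall_mem_nhds _ (hr0 x (hut hx)))⟩
  have hsub : badSet h ε R ⊆ ⋃ x ∈ u, closedBall x (4 * r x) := by
    intro x hx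
    obtain ⟨b, hb, hxb⟩ := hcov x hx
    exact mem_biUnion hb (hxb (mem_closedBall_self (hr0 x hx).le))
  have := hcount.to_subtype
  calc ε * volume (badSet h ε R) ≤ ε * ∑' x : u, volume (closedBall (x : Fin d → ℝ) (4 * r x)) := by
        gcongr
        exact (measure_mono hsub).trans (measure_biUnion_le _ hcount _)
    _ = ∑' x : u, 4 ^ d * (ε * volume (closedBall (x : Fin d → ℝ) (r x))) := by
        rw [← ENNReal.tsum_mul_left]
        refine tsum_congr fun x => ?_
        have h0 := (hr0 x (hut x.2)).le
        rw [vol_cb _ (by positivity), vol_cb _ h0, show (2 * (4 * r x)) ^ d = 4 ^ d * (2 * r x) ^ d by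
          rw [← mul_pow]; ring_nf, ENNReal.ofReal_mul (by positivity), ENNReal.ofReal_pow (by norm_num)]
        simp only [ENNReal.ofReal_ofNat]
        ring
    _ ≤ ∑' x : u, 4 ^ d * ∫⁻ z in closedBall (x : Fin d → ℝ) (r x), h z := by
        refine ENNReal.tsum_le_tsum fun x => ?_
        gcongr
        exact (hr x (hut x.2)).le
    _ = 4 ^ d * ∫⁻ z in ⋃ x : u, closedBall (x : Fin d → ℝ) (r x), h z := by
        rw [ENNReal.tsum_mul_left, lintegral_iUnion (fun _ => measurableSet_closedBall)]
        intro x y hxy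
        exact hdisj x.2 y.2 (fun hh => hxy (Subtype.ext hh))
    _ ≤ _ := by gcongr; exact Measure.restrict_le_self

lemma Phi_le_of_good {d : ℕ} (h : (Fin d → ℝ) → ℝ≥0∞) (ε : ℝ≥0∞) (R ρ : ℝ) (c x : Fin d → ℝ)
    (hρ : 0 < ρ) (hR : 2 * ρ ≤ R) (hx : x ∉ badSet h ε R) :
    Phi h c ρ x ≤ ENNReal.ofReal (2 * ρ) * (ε * ENNReal.ofReal ((4 * ρ) ^ d)) := by
  rw [Phi]
  refine mul_le_mul_right ?_ _
  calc _ ≤ ∫⁻ t in Ioo (0:ℝ) 1, ε * ENNReal.ofReal ((4 * ρ) ^ d) := by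
        refine setLIntegral_mono' measurableSet_Ioo fun t ht => ?_
        have ht0 := ht.1
        have h1 : ∫⁻ z in closedBall c ρ ∩ closedBall x (2 * ρ * t), h z ≤ ε * volume (closedBall x (2 * ρ * t)) := by
          refine (lintegral_mono_set inter_subset_right).trans ?_
          by_contra hcon
          refine hx ⟨2 * ρ * t, by positivity, ?_, not_le.1 hcon⟩
          nlinarith [ht.2]
        calc _ ≤ ENNReal.ofReal ((t ^ d)⁻¹) * (ε * volume (closedBall x (2 * ρ * t))) := by gcongr
          _ = ε * (ENNReal.ofReal ((t ^ d)⁻¹) * ENNReal.ofReal ((2 * (2 * ρ * t)) ^ d)) := by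
            rw [vol_cb _ (by positivity)]; ring
          _ = _ := by
            rw [← ENNReal.ofReal_mul (by positivity)]
            congr 2
            rw [show 2 * (2 * ρ * t) = (4 * ρ) * t by ring, mul_pow]
            field_simp
      _ = _ := by rw [setLIntegral_const, Real.volume_Ioo]; simp

lemma good_lip {d m : ℕ} (u : (Fin d → ℝ) → (Fin m → ℝ)) (v : ℕ → (Fin d → ℝ) → (Fin m → ℝ))
    (hv : ∀ j, ContDiff ℝ 1 (v j)) (x y : Fin d → ℝ) (K : Set (Fin d → ℝ)) (hK : closedBall x (dist y x) ⊆ K)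
    (hu : ContinuousOn u K)
    (hlim : ∀ y ∈ K, Tendsto (fun j => v j y) atTop (𝓝 (u y)))
    (h : (Fin d → ℝ) → ℝ≥0∞) (hh : Measurable h) (e : ℕ → (Fin d → ℝ) → ℝ≥0∞)
    (hle : ∀ j, ∀ z ∈ K, ‖fderiv ℝ (v j) z‖ₑ ≤ h z + e j z)
    (he : Tendsto (fun j => ∫⁻ z in K, e j z) atTop (𝓝 0))
    (ε R : ℝ) (hε : 0 ≤ ε) (hR : 2 * dist y x ≤ R) (hx : x ∉ badSet h (ENNReal.ofReal ε) R)
    (hy : y ∉ badSet h (ENNReal.ofReal ε) R) :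
    ‖u y - u x‖ ≤ 4 * 2 ^ d * ε * ‖y - x‖ := by
  rcases eq_or_ne y x with rfl | hne
  · simp
  set ρ := dist y x with hρd
  have hρ : 0 < ρ := dist_pos.2 hne
  have he' : Tendsto (fun j => ∫⁻ z in closedBall x ρ, e j z) atTop (𝓝 0) :=
    tendsto_of_tendsto_of_tendsto_of_le_of_le tendsto_const_nhds he (fun _ => zero_le)
      (fun j => lintegral_mono_set hK)
  have P : ∀ w ∈ closedBall x ρ, ∫⁻ z in closedBall x ρ, ‖u w - u z‖ₑ ≤ Phi h x ρ w := fun w hw =>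
    potential_est u v hv x w ρ hρ hw ((hu.mono hK) w hw) (fun z hz => hlim z (hK hz)) h hh e
      (fun j z hz => hle j z (hK hz)) he'
  have hyB : y ∈ closedBall x ρ := by simp [hρd]
  have hxB : x ∈ closedBall x ρ := mem_closedBall_self hρ.le
  have := two_point u x y x ρ _ (hu.mono hK) ((P y hyB).trans (Phi_le_of_good h _ R ρ x y hρ hR hy))
    ((P x hxB).trans (Phi_le_of_good h _ R ρ x x hρ hR hx))
  rw [vol_cb _ hρ.le, ← ofReal_norm, ← ENNReal.ofReal_mul hε, ← ENNReal.ofReal_mul (by positivity), ← ENNReal.ofReal_mul (by positivity),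
    show (2 : ℝ≥0∞) = ENNReal.ofReal 2 by simp, ← ENNReal.ofReal_mul (by positivity), ENNReal.ofReal_le_ofReal_iff (by positivity)] at this
  rw [← dist_eq_norm y x, ← hρd]
  have hp : 0 < (2 * ρ) ^ d := by positivity
  refine le_of_mul_le_mul_right (this.trans (le_of_eq ?_)) hp
  rw [show 4 * ρ = 2 * (2 * ρ) by ring, mul_pow 2 (2 * ρ)]
  ring

lemma area_lower {d : ℕ} (f : (Fin d → ℝ) → (Fin d → ℝ)) (v : ℕ → (Fin d → ℝ) → (Fin d → ℝ))
    (hv : ∀ j, ContDiff ℝ 1 (v j)) (x₀ : Fin d → ℝ) (R : ℝ) (hR : 0 < R)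
    (hf : ContinuousOn f (closedBall x₀ R)) (hinj : InjOn f (closedBall x₀ R))
    (hlim : ∀ y ∈ closedBall x₀ R, Tendsto (fun j => v j y) atTop (𝓝 (f y)))
    (G : (Fin d → ℝ) → (Fin d → ℝ) →L[ℝ] (Fin d → ℝ)) (hG : Measurable G)
    (he : ∀ j, ∫⁻ z in closedBall x₀ R, ‖fderiv ℝ (v j) z - G z‖ₑ ≤ ENNReal.ofReal ((1/4) ^ j))
    (S : Set (Fin d → ℝ)) (hS : MeasurableSet S) (hSB : S ⊆ ball x₀ R) :
    ∫⁻ x in S, ENNReal.ofReal |(G x).det| ≤ volume (f '' S) := by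
  set Q := closedBall x₀ R with hQ
  have hQm : MeasurableSet Q := measurableSet_closedBall
  have hDc : ∀ j, Continuous (fderiv ℝ (v j)) := fun j => (hv j).continuous_fderiv (by norm_num)
  set e : ℕ → (Fin d → ℝ) → ℝ≥0∞ := fun j z => ‖fderiv ℝ (v j) z - G z‖ₑ with hed
  have hem : ∀ j, Measurable (e j) := fun j => ((hDc j).measurable.sub hG).enorm
  set h : ℕ → (Fin d → ℝ) → ℝ≥0∞ := fun j => Q.indicator (e j) with hhd
  have hhm : ∀ j, Measurable (h j) := fun j => (hem j).indicator hQm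
  have hhint : ∀ j, ∫⁻ z, h j z ≤ ENNReal.ofReal ((1/4) ^ j) := fun j => by
    rw [hhd]; simp only; rw [lintegral_indicator hQm]; exact he j
  have hsum : Summable (fun j : ℕ => (1/4 : ℝ) ^ j) := summable_geometric_of_lt_one (by norm_num) (by norm_num)
  have hsum2 : Summable (fun j : ℕ => (1/2 : ℝ) ^ j) := summable_geometric_of_lt_one (by norm_num) (by norm_num)
  have he0 : Tendsto (fun j => ∫⁻ z in Q, e j z) atTop (𝓝 0) := by
    refine tendsto_of_tendsto_of_tendsto_of_le_of_le tendsto_const_nhds ?_ (fun _ => zero_le) he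
    have := ENNReal.tendsto_ofReal hsum.tendsto_atTop_zero
    simpa using this
  -- bad sets
  set bad : ℕ → Set (Fin d → ℝ) := fun j => toMeasurable volume (badSet (h j) (ENNReal.ofReal ((1/2)^j)) R) with hbad
  have hbadm : ∀ j, MeasurableSet (bad j) := fun j => measurableSet_toMeasurable _ _
  have hbadv : ∀ j, volume (bad j) ≤ 4 ^ d * ENNReal.ofReal ((1/2)^j) := by
    intro j
    rw [hbad]; simp only; rw [measure_toMeasurable]
    have h1 := (weak_type (h j) (ENNReal.ofReal ((1/2)^j)) R).trans (mul_le_mul_right (hhint j) _)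
    have h2 : ENNReal.ofReal ((1/4 : ℝ)^j) = ENNReal.ofReal ((1/2)^j) * ENNReal.ofReal ((1/2)^j) := by
      rw [← ENNReal.ofReal_mul (by positivity), ← mul_pow]; norm_num
    rw [h2] at h1
    have h3 : ENNReal.ofReal ((1/2 : ℝ)^j) ≠ 0 := by simp
    rw [show (4 : ℝ≥0∞) ^ d * (ENNReal.ofReal ((1/2)^j) * ENNReal.ofReal ((1/2)^j)) = ENNReal.ofReal ((1/2)^j) * (4 ^ d * ENNReal.ofReal ((1/2)^j)) by ring] at h1
    exact (ENNReal.mul_le_mul_iff_right h3 ENNReal.ofReal_ne_top).1 h1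
  -- pointwise convergence
  have hptw : ∀ᵐ z, Tendsto (fun j => h j z) atTop (𝓝 0) := by
    have : ∫⁻ z, ∑' j, h j z ≠ ⊤ := by
      rw [lintegral_tsum (fun j => (hhm j).aemeasurable)]
      refine ne_top_of_le_ne_top ?_ (ENNReal.tsum_le_tsum hhint)
      rw [← ENNReal.ofReal_tsum_of_nonneg (fun j => by positivity) hsum]
      exact ENNReal.ofReal_ne_top
    have h2 := ae_lt_top (Measurable.ennreal_tsum hhm) this
    filter_upwards [h2] with z hz
    exact ENNReal.tendsto_atTop_zero_of_tsum_ne_top hz.ne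
  obtain ⟨N, hNsub, hNm, hN0⟩ := exists_measurable_superset_of_null (ae_iff.1 hptw)
  set E : ℕ → Set (Fin d → ℝ) := fun J => S \ (N ∪ ⋃ j, ⋃ (_ : J ≤ j), bad j) with hE
  have hEm : ∀ J, MeasurableSet (E J) := fun J =>
    hS.diff (hNm.union (MeasurableSet.iUnion fun j => MeasurableSet.iUnion fun _ => hbadm j))
  have hEmono : Monotone E := by
    intro J J' hJ
    refine diff_subset_diff_right (union_subset_union_right _ ?_)
    refine iUnion_mono fun j => ?_
    intro z hz
    simp only [mem_iUnion] at hz ⊢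
    exact ⟨hJ.trans hz.1, hz.2⟩
  have hder : ∀ J, ∀ x ∈ E J, HasFDerivWithinAt f (G x) (E J) x := by
    intro J x hx
    have hxS : x ∈ ball x₀ R := hSB hx.1
    have hxN : Tendsto (fun j => h j x) atTop (𝓝 0) := by
      by_contra hcon
      exact hx.2 (Or.inl (hNsub hcon))
    rw [hasFDerivWithinAt_iff_isLittleO, Asymptotics.isLittleO_iff]
    intro c hc
    have ev1 : ∀ᶠ j in atTop, ‖fderiv ℝ (v j) x - G x‖ ≤ c / 3 := by
      have := (ENNReal.tendsto_nhds_zero.1 hxN) (ENNReal.ofReal (c/3)) (by simpa using by positivity)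
      filter_upwards [this] with j hj
      rw [hhd] at hj; simp only at hj
      rw [indicator_of_mem (ball_subset_closedBall hxS), hed] at hj
      simp only [← ofReal_norm] at hj
      exact (ENNReal.ofReal_le_ofReal_iff (by positivity)).1 hj
    have ev2 : ∀ᶠ j : ℕ in atTop, 4 * 2 ^ d * (1/2 : ℝ)^j ≤ c / 3 := by
      have := hsum2.tendsto_atTop_zero.const_mul (4 * 2 ^ d : ℝ)
      rw [mul_zero] at this
      exact (this.eventually (gt_mem_nhds (by positivity : 0 < c/3))).mono fun j hj => hj.le
    obtain ⟨j, ⟨hj1, hj2⟩, hjJ⟩ := ((ev1.and ev2).and (eventually_ge_atTop J)).exists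
    have hvj : HasFDerivAt (v j) (fderiv ℝ (v j) x) x := ((hv j).differentiable (by norm_num) x).hasFDerivAt
    have ev3 := (Asymptotics.isLittleO_iff.1 (hasFDerivAt_iff_isLittleO.1 hvj)) (by positivity : 0 < c/3)
    have hxR : 0 < R - dist x x₀ := by rw [mem_ball] at hxS; linarith
    have ev4 : ∀ᶠ y in 𝓝 x, dist y x < min (R - dist x x₀) (R / 2) := by
      exact ball_mem_nhds x (lt_min hxR (by positivity))
    filter_upwards [mem_nhdsWithin_of_mem_nhds ev3, mem_nhdsWithin_of_mem_nhds ev4, self_mem_nhdsWithin] with y hy3 hy4 hyE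
    have good : ∀ z ∈ E J, z ∉ badSet (h j) (ENNReal.ofReal ((1/2)^j)) R := by
      intro z hz hzb
      refine hz.2 (Or.inr ?_)
      simp only [mem_iUnion]
      exact ⟨j, hjJ, subset_toMeasurable _ _ hzb⟩
    have hl := good_lip (fun z => f z - v j z) (fun i z => v i z - v j z) (fun i => (hv i).sub (hv j)) x y Q
      (fun z hz => by
        have := dist_triangle z x x₀
        have h4 := hy4.trans_le (min_le_left _ _)
        rw [mem_closedBall] at hz
        rw [hQ, mem_closedBall]; linarith)
      (hf.sub (hv j).continuous.continuousOn)
      (fun z hz => (hlim z hz).sub_const _) (h j) (hhm j) e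
      (fun i z hz => by
        rw [fderiv_fun_sub ((hv i).differentiable (by norm_num) z) ((hv j).differentiable (by norm_num) z), hhd]
        simp only
        rw [indicator_of_mem hz, hed]
        simp only
        have : fderiv ℝ (v i) z - fderiv ℝ (v j) z = (fderiv ℝ (v i) z - G z) - (fderiv ℝ (v j) z - G z) := by abel
        rw [this, add_comm]; exact enorm_sub_le)
      he0 ((1/2)^j) R (by positivity) (by have := hy4.trans_le (min_le_right _ _); linarith)
      (good x hx) (good y hyE)
    have k1 : f y - f x - G x (y - x) = ((f y - v j y) - (f x - v j x)) +
        ((v j y - v j x - fderiv ℝ (v j) x (y - x)) + (fderiv ℝ (v j) x - G x) (y - x)) := by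
      rw [ContinuousLinearMap.sub_apply]; abel
    have k2 : ‖(fderiv ℝ (v j) x - G x) (y - x)‖ ≤ c / 3 * ‖y - x‖ :=
      ((fderiv ℝ (v j) x - G x).le_opNorm _).trans (by gcongr)
    have k3 : 4 * 2 ^ d * (1/2 : ℝ)^j * ‖y - x‖ ≤ c / 3 * ‖y - x‖ := by gcongr
    rw [k1]
    refine (norm_add_le _ _).trans ?_
    have := norm_add_le (v j y - v j x - fderiv ℝ (v j) x (y - x)) ((fderiv ℝ (v j) x - G x) (y - x))
    linarith
  have hunion : volume (S \ ⋃ J, E J) = 0 := by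
    have hlimsup : volume (limsup bad atTop) = 0 := by
      refine measure_limsup_atTop_eq_zero ?_
      refine ne_top_of_le_ne_top ?_ (ENNReal.tsum_le_tsum hbadv)
      rw [ENNReal.tsum_mul_left, ← ENNReal.ofReal_tsum_of_nonneg (fun j => by positivity) hsum2]
      exact ENNReal.mul_ne_top (by simp) ENNReal.ofReal_ne_top
    refine measure_mono_null (t := N ∪ limsup bad atTop) ?_ (measure_union_null hN0 hlimsup)
    rintro z ⟨hzS, hz⟩
    by_cases hzN : z ∈ N
    · exact Or.inl hzN
    · refine Or.inr ?_
      rw [mem_limsup_iff_frequently_mem, frequently_atTop]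
      intro J
      simp only [hE, mem_iUnion, mem_diff, mem_union, not_exists, not_and, not_not] at hz
      rcases hz J hzS with h1 | ⟨j, h1, h2⟩
      · exact absurd h1 hzN
      · exact ⟨j, h1, h2⟩
  have hsubU : (⋃ J, E J) ⊆ S := iUnion_subset fun J => diff_subset
  calc ∫⁻ x in S, ENNReal.ofReal |(G x).det| = ∫⁻ x in ⋃ J, E J, ENNReal.ofReal |(G x).det| := by
        refine setLIntegral_congr ?_
        refine ((ae_eq_set).2 ⟨hunion, ?_⟩)
        rw [diff_eq_empty.2 hsubU]; simp
    _ = ⨆ J, ∫⁻ x in E J, ENNReal.ofReal |(G x).det| :=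
        setLIntegral_iUnion_of_directed _ hEmono.directed_le
    _ ≤ volume (f '' S) := by
        refine iSup_le fun J => ?_
        have hEQ : E J ⊆ Q := fun z hz => ball_subset_closedBall (hSB hz.1)
        rw [lintegral_abs_det_fderiv_eq_addHaar_image volume (hEm J) (hder J) (hinj.mono hEQ)]
        exact measure_mono (image_mono diff_subset)

end PB

section PC

lemma lint_inv_sq (a : ℝ) (ha : 0 < a) : ∫⁻ t in Ioi a, ENNReal.ofReal ((t ^ 2)⁻¹) ≤ ENNReal.ofReal (a⁻¹) := by
  have h1 : ∀ t ∈ Ioi a, (t^2)⁻¹ = t ^ (-2 : ℝ) := by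
    intro t ht
    have : 0 < t := ha.trans ht
    rw [Real.rpow_neg this.le]; norm_cast
  have h2 : IntegrableOn (fun t : ℝ => t ^ (-2 : ℝ)) (Ioi a) := integrableOn_Ioi_rpow_of_lt (by norm_num) ha
  rw [setLIntegral_congr_fun measurableSet_Ioi (fun t ht => by rw [h1 t ht]),
    ← ofReal_integral_eq_lintegral_ofReal h2, integral_Ioi_rpow_of_lt (by norm_num) ha]
  · apply ENNReal.ofReal_le_ofReal
    norm_num
    rw [Real.rpow_neg_one]
  · filter_upwards [ae_restrict_mem measurableSet_Ioi] with t ht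
    exact Real.rpow_nonneg (ha.trans ht).le _

/-- the kernel -/
noncomputable def Jk {k : ℕ} (ρ : ℝ) (x : Fin k → ℝ) (t : ℝ) (z : Fin k → ℝ) : ℝ≥0∞ :=
  if dist z x ≤ 2 * ρ * t then ENNReal.ofReal ((t ^ k)⁻¹) else 0

lemma Jk_meas {k : ℕ} (ρ : ℝ) (x : Fin k → ℝ) : Measurable (fun q : ℝ × (Fin k → ℝ) => Jk ρ x q.1 q.2) := by
  refine Measurable.ite ?_ ?_ measurable_const
  · exact measurableSet_le (by fun_prop) (by fun_prop)
  · fun_prop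

lemma kappa_le {k : ℕ} (hk : 2 ≤ k) (ρ : ℝ) (hρ : 0 < ρ) (x z : Fin k → ℝ) (hz : z ≠ x) :
    ∫⁻ t in Ioo (0:ℝ) 1, Jk ρ x t z ≤ ENNReal.ofReal ((2 * ρ / dist z x) ^ (k - 1)) := by
  obtain ⟨j, rfl⟩ : ∃ j, k = j + 2 := ⟨k - 2, by omega⟩
  have hs : 0 < dist z x := dist_pos.2 hz
  set a := dist z x / (2 * ρ) with ha
  have ha0 : 0 < a := by positivity
  have h1 : ∀ t ∈ Ioo (0:ℝ) 1, Jk ρ x t z ≤ (Ici a).indicator (fun t => ENNReal.ofReal ((a ^ j)⁻¹) * ENNReal.ofReal ((t^2)⁻¹)) t := by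
    intro t ht
    have ht0 := ht.1
    rw [Jk]
    split_ifs with hc
    · have hat : a ≤ t := by rw [ha, div_le_iff₀ (by positivity)]; linarith
      rw [indicator_of_mem (by exact hat), ← ENNReal.ofReal_mul (by positivity)]
      apply ENNReal.ofReal_le_ofReal
      rw [← mul_inv]
      apply inv_anti₀ (by positivity)
      rw [pow_add]; gcongr
    · exact zero_le
  calc _ ≤ ∫⁻ t in Ioo (0:ℝ) 1, (Ici a).indicator (fun t => ENNReal.ofReal ((a ^ j)⁻¹) * ENNReal.ofReal ((t^2)⁻¹)) t :=
        setLIntegral_mono' measurableSet_Ioo h1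
    _ ≤ ∫⁻ t, (Ici a).indicator (fun t => ENNReal.ofReal ((a ^ j)⁻¹) * ENNReal.ofReal ((t^2)⁻¹)) t :=
        lintegral_mono' Measure.restrict_le_self le_rfl
    _ = ENNReal.ofReal ((a ^ j)⁻¹) * ∫⁻ t in Ioi a, ENNReal.ofReal ((t^2)⁻¹) := by
        rw [lintegral_indicator measurableSet_Ici, setLIntegral_congr Ioi_ae_eq_Ici.symm, lintegral_const_mul' _ _ ENNReal.ofReal_ne_top]
    _ ≤ ENNReal.ofReal ((a ^ j)⁻¹) * ENNReal.ofReal (a⁻¹) := mul_le_mul_right (lint_inv_sq a ha0) _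
    _ = _ := by
        rw [← ENNReal.ofReal_mul (by positivity)]
        congr 1
        rw [show j + 2 - 1 = j + 1 by omega, ← mul_inv, ← pow_succ, ← inv_pow, ha, inv_div]

lemma L2_le {k : ℕ} (hk : 2 ≤ k) (ρ σ : ℝ) (hρ : 0 < ρ) (hσ : 0 ≤ σ) (x : Fin k → ℝ) :
    ∫⁻ t in Ioo (0:ℝ) 1, ENNReal.ofReal ((t ^ k)⁻¹) * volume (closedBall x (2 * ρ * t) ∩ closedBall x σ) ≤
      ENNReal.ofReal (2 * (4 * ρ) ^ k * (σ / (2 * ρ))) := by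
  obtain ⟨j, rfl⟩ : ∃ j, k = j + 2 := ⟨k - 2, by omega⟩
  rcases hσ.eq_or_lt with rfl | hσ
  · have : ∀ t : ℝ, volume (closedBall x (2 * ρ * t) ∩ closedBall x 0) = 0 := fun t =>
      measure_mono_null inter_subset_right (by rw [vol_cb _ le_rfl]; simp)
    simp only [this, mul_zero, lintegral_zero]; exact zero_le
  set a := σ / (2 * ρ) with ha
  have ha0 : 0 < a := by positivity
  have h1 : ∀ t ∈ Ioo (0:ℝ) 1, ENNReal.ofReal ((t ^ (j+2))⁻¹) * volume (closedBall x (2 * ρ * t) ∩ closedBall x σ) ≤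
     ENNReal.ofReal ((4 * ρ) ^ (j+2)) * (Ioc 0 a).indicator 1 t +
       ENNReal.ofReal ((4 * ρ) ^ (j+2) * a ^ 2) * (Ioi a).indicator (fun t => ENNReal.ofReal ((t^2)⁻¹)) t := by
    intro t ht
    have ht0 := ht.1
    rcases le_or_gt t a with hta | hta
    · rw [indicator_of_mem (show t ∈ Ioc 0 a from ⟨ht0, hta⟩)]
      refine le_add_right ?_
      calc _ ≤ ENNReal.ofReal ((t ^ (j+2))⁻¹) * volume (closedBall x (2 * ρ * t)) := by gcongr; exact inter_subset_left
        _ = _ := by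
          rw [vol_cb _ (by positivity), ← ENNReal.ofReal_mul (by positivity), Pi.one_apply, mul_one]
          congr 1
          rw [show 2 * (2 * ρ * t) = (4 * ρ) * t by ring, mul_pow]
          field_simp
    · rw [indicator_of_mem (show t ∈ Ioi a from hta)]
      refine le_add_left ?_
      calc _ ≤ ENNReal.ofReal ((t ^ (j+2))⁻¹) * volume (closedBall x σ) := by gcongr; exact inter_subset_right
        _ = ENNReal.ofReal ((4 * ρ) ^ (j+2) * a ^ 2 * ((t^2)⁻¹ * (a/t)^j)) := by
          rw [vol_cb _ hσ.le, ← ENNReal.ofReal_mul (by positivity)]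
          congr 1
          have hsa : 2 * σ = (4 * ρ) * a := by rw [ha]; field_simp; ring
          clear_value a
          rw [hsa, mul_pow, div_pow, pow_add t, pow_add a]
          field_simp
        _ ≤ _ := by
          rw [← ENNReal.ofReal_mul (by positivity)]
          apply ENNReal.ofReal_le_ofReal
          have : (a/t)^j ≤ 1 := pow_le_one₀ (by positivity) (by rw [div_le_one ht0]; exact hta.le)
          have h2 : 0 ≤ (t^2)⁻¹ := by positivity
          gcongr
          nlinarith
  calc _ ≤ ∫⁻ t in Ioo (0:ℝ) 1, (ENNReal.ofReal ((4 * ρ) ^ (j+2)) * (Ioc 0 a).indicator 1 t +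
       ENNReal.ofReal ((4 * ρ) ^ (j+2) * a ^ 2) * (Ioi a).indicator (fun t => ENNReal.ofReal ((t^2)⁻¹)) t) :=
        setLIntegral_mono' measurableSet_Ioo h1
    _ ≤ ∫⁻ t, (ENNReal.ofReal ((4 * ρ) ^ (j+2)) * (Ioc 0 a).indicator 1 t +
       ENNReal.ofReal ((4 * ρ) ^ (j+2) * a ^ 2) * (Ioi a).indicator (fun t => ENNReal.ofReal ((t^2)⁻¹)) t) :=
        lintegral_mono' Measure.restrict_le_self le_rfl
    _ = ENNReal.ofReal ((4 * ρ) ^ (j+2)) * ENNReal.ofReal a + ENNReal.ofReal ((4 * ρ) ^ (j+2) * a ^ 2) * ∫⁻ t in Ioi a, ENNReal.ofReal ((t^2)⁻¹) := by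
        rw [lintegral_add_left (by
            exact (measurable_one.indicator measurableSet_Ioc).const_mul _),
          lintegral_const_mul' _ _ ENNReal.ofReal_ne_top, lintegral_const_mul' _ _ ENNReal.ofReal_ne_top,
          lintegral_indicator_one measurableSet_Ioc, lintegral_indicator measurableSet_Ioi, Real.volume_Ioc, sub_zero]
    _ ≤ ENNReal.ofReal ((4 * ρ) ^ (j+2)) * ENNReal.ofReal a + ENNReal.ofReal ((4 * ρ) ^ (j+2) * a ^ 2) * ENNReal.ofReal (a⁻¹) := by
        gcongr; exact lint_inv_sq a ha0
    _ = _ := by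
        rw [← ENNReal.ofReal_mul (by positivity), ← ENNReal.ofReal_mul (by positivity), ← ENNReal.ofReal_add (by positivity) (by positivity)]
        congr 1
        field_simp
        ring

end PC

section PC2

lemma tonelli_Jk {k : ℕ} (H : (Fin k → ℝ) → ℝ≥0∞) (hHm : Measurable H) (B : Set (Fin k → ℝ)) (ρ : ℝ) (x : Fin k → ℝ) :
    ∫⁻ t in Ioo (0:ℝ) 1, ENNReal.ofReal ((t ^ k)⁻¹) * ∫⁻ z in B ∩ closedBall x (2 * ρ * t), H z
      = ∫⁻ z in B, H z * ∫⁻ t in Ioo (0:ℝ) 1, Jk ρ x t z := by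
  have hJm := Jk_meas ρ x
  have a1 : ∀ t, ENNReal.ofReal ((t ^ k)⁻¹) * ∫⁻ z in B ∩ closedBall x (2 * ρ * t), H z = ∫⁻ z in B, H z * Jk ρ x t z := by
    intro t
    rw [inter_comm, ← Measure.restrict_restrict measurableSet_closedBall, ← lintegral_indicator measurableSet_closedBall,
      ← lintegral_const_mul' _ _ ENNReal.ofReal_ne_top]
    refine lintegral_congr fun z => ?_
    by_cases hz : dist z x ≤ 2 * ρ * t
    · rw [indicator_of_mem (show z ∈ closedBall x (2 * ρ * t) from hz), Jk, if_pos hz, mul_comm]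
    · rw [indicator_of_notMem (show z ∉ closedBall x (2 * ρ * t) from hz), Jk, if_neg hz]; simp
  simp_rw [a1]
  rw [lintegral_lintegral_swap]
  · refine lintegral_congr fun z => ?_
    rw [lintegral_const_mul]
    exact hJm.comp (measurable_id.prodMk measurable_const)
  · exact ((hHm.comp measurable_snd).mul hJm).aemeasurable

set_option maxHeartbeats 1000000 in
lemma W_bound {k : ℕ} (hk : 2 ≤ k) (φ : ℝ → ℝ) (hφ : Monotone φ) (hpos : ∀ t, 0 < φ t) (lam : ℝ) (hlam : 0 < lam)
    (h : (Fin k → ℝ) → ℝ) (hh : Measurable h) (c x : Fin k → ℝ) (ρ r0 : ℝ) (hρ : 0 < ρ) (hr0 : 0 < r0)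
    (hM : ∫⁻ z in closedBall c ρ, {z | lam < h z}.indicator (fun z => ENNReal.ofReal (φ (h z))) z ≤ ENNReal.ofReal (r0 ^ k)) :
    ∫⁻ t in Ioo (0:ℝ) 1, ENNReal.ofReal ((t ^ k)⁻¹) *
      ∫⁻ z in closedBall c ρ ∩ closedBall x (2 * ρ * t), {z | lam < h z}.indicator (fun z => ENNReal.ofReal (h z)) z ≤
    ENNReal.ofReal ((2 * ρ) ^ (k - 1) * r0) +
     2 * ∫⁻ t in Ioi (lam / 2), ENNReal.ofReal (2 * (4 * ρ) ^ k * (r0 * (2 * t / φ t) ^ (1 / ((k:ℝ) - 1)) / (2 * ρ))) := by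
  set B := closedBall c ρ with hB
  have hBm : MeasurableSet B := measurableSet_closedBall
  have hset : MeasurableSet {z | lam < h z} := measurableSet_lt measurable_const hh
  set H : (Fin k → ℝ) → ℝ≥0∞ := {z | lam < h z}.indicator (fun z => ENNReal.ofReal (h z)) with hH
  have hHm : Measurable H := (hh.ennreal_ofReal).indicator hset
  set P : (Fin k → ℝ) → ℝ≥0∞ := {z | lam < h z}.indicator (fun z => ENNReal.ofReal (φ (h z))) with hP
  have hPm : Measurable P := ((hφ.measurable.comp hh).ennreal_ofReal).indicator hset
  set κ : (Fin k → ℝ) → ℝ≥0∞ := fun z => ∫⁻ t in Ioo (0:ℝ) 1, Jk ρ x t z with hκ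
  have hJm := Jk_meas ρ x
  have hJm' : Measurable (fun q : (Fin k → ℝ) × ℝ => Jk ρ x q.2 q.1) := hJm.comp measurable_swap
  have hκm : Measurable κ := hJm'.lintegral_prod_right'
  set S : ℝ → ℝ := fun t => (2 * t / φ t) ^ (1 / ((k:ℝ) - 1)) with hS
  have hSm : Measurable S := by
    have := hφ.measurable
    fun_prop
  have hk1 : (0:ℝ) < (k:ℝ) - 1 := by
    have : (2:ℝ) ≤ k := by exact_mod_cast hk
    linarith
  -- Tonelli
  rw [tonelli_Jk H hHm B ρ x]
  change ∫⁻ z in B, H z * κ z ≤ _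
  set Bt : (Fin k → ℝ) → ℝ≥0∞ := fun z => 2 * ∫⁻ t in Ioi (lam / 2), κ z * (if dist z x ≤ r0 * S t then 1 else 0) with hBt
  have hifm : Measurable (fun q : (Fin k → ℝ) × ℝ => (if dist q.1 x ≤ r0 * S q.2 then (1:ℝ≥0∞) else 0)) := by
    refine Measurable.ite ?_ measurable_const measurable_const
    exact measurableSet_le (by fun_prop) (by fun_prop)
  have hBtm : Measurable Bt := by
    refine Measurable.const_mul ?_ _
    exact ((hκm.comp measurable_fst).mul hifm).lintegral_prod_right'
  have pw : ∀ z, z ≠ x → H z * κ z ≤ ENNReal.ofReal ((2 * ρ) ^ (k-1) * (r0 ^ (k-1))⁻¹) * P z + Bt z := by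
    intro z hz
    by_cases hzl : lam < h z
    swap
    · rw [hH, indicator_of_notMem (show z ∉ {z | lam < h z} from hzl)]; simp
    have hs : 0 < dist z x := dist_pos.2 hz
    have hh0 : 0 < h z := hlam.trans hzl
    have eH : H z = ENNReal.ofReal (h z) := by rw [hH, indicator_of_mem (show z ∈ {z | lam < h z} from hzl)]
    have eP : P z = ENNReal.ofReal (φ (h z)) := by rw [hP, indicator_of_mem (show z ∈ {z | lam < h z} from hzl)]
    rw [eH, eP]
    by_cases hc : h z * r0 ^ (k-1) ≤ φ (h z) * dist z x ^ (k-1)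
    · refine le_add_right ?_
      calc _ ≤ ENNReal.ofReal (h z) * ENNReal.ofReal ((2 * ρ / dist z x) ^ (k - 1)) :=
            mul_le_mul_right (kappa_le hk ρ hρ x z hz) _
        _ ≤ _ := by
          rw [← ENNReal.ofReal_mul (by positivity), ← ENNReal.ofReal_mul (by positivity)]
          apply ENNReal.ofReal_le_ofReal
          rw [div_pow]
          have : h z / dist z x ^ (k-1) ≤ φ (h z) / r0 ^ (k-1) := by
            rw [div_le_div_iff₀ (by positivity) (by positivity)]; exact hc
          calc h z * ((2 * ρ) ^ (k-1) / dist z x ^ (k-1)) = (2 * ρ) ^ (k-1) * (h z / dist z x ^ (k-1)) := by ring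
            _ ≤ (2 * ρ) ^ (k-1) * (φ (h z) / r0 ^ (k-1)) := by gcongr
            _ = _ := by field_simp
    · refine le_add_left ?_
      rw [not_le] at hc
      have key : ∀ t ∈ Ioo (h z / 2) (h z), dist z x ≤ r0 * S t := by
        intro t ht
        have ht0 : 0 < t := by linarith [ht.1]
        have h1 : φ t ≤ φ (h z) := hφ ht.2.le
        have h2 : (dist z x / r0) ^ (k - 1) ≤ 2 * t / φ t := by
          rw [div_pow, div_le_div_iff₀ (by positivity) (hpos t)]
          have : dist z x ^ (k-1) * φ t ≤ φ (h z) * dist z x ^ (k-1) := by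
            rw [mul_comm]; gcongr
          refine this.trans (hc.le.trans ?_)
          gcongr
          linarith [ht.1]
        have h3 : dist z x / r0 ≤ S t := by
          rw [hS]; simp only
          have h4 : ((dist z x / r0) ^ (k - 1)) ^ (1 / ((k:ℝ) - 1)) = dist z x / r0 := by
            rw [← Real.rpow_natCast, ← Real.rpow_mul (by positivity)]
            rw [Nat.cast_sub (by omega)]
            simp only [Nat.cast_one]
            rw [mul_one_div_cancel hk1.ne', Real.rpow_one]
          rw [← h4]
          exact Real.rpow_le_rpow (by positivity) h2 (by positivity)
        rw [div_le_iff₀ hr0] at h3; linarith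
      have a1 : ENNReal.ofReal (h z) = 2 * ∫⁻ t in Ioo (h z / 2) (h z), (1:ℝ≥0∞) := by
        rw [setLIntegral_one, Real.volume_Ioo, show (2:ℝ≥0∞) = ENNReal.ofReal 2 by simp, ← ENNReal.ofReal_mul (by norm_num)]
        congr 1; ring
      have a2 : ∫⁻ t in Ioo (h z / 2) (h z), (1:ℝ≥0∞) ≤ ∫⁻ t in Ioi (lam/2), (if dist z x ≤ r0 * S t then 1 else 0) := by
        calc _ ≤ ∫⁻ t in Ioo (h z / 2) (h z), (if dist z x ≤ r0 * S t then 1 else 0) :=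
              setLIntegral_mono' measurableSet_Ioo fun t ht => by rw [if_pos (key t ht)]
          _ ≤ _ := lintegral_mono_set (fun t ht => by
              have := ht.1
              rw [mem_Ioi]; linarith)
      rw [a1, hBt]
      simp only
      rw [lintegral_const_mul]
      · calc _ ≤ 2 * (∫⁻ t in Ioi (lam/2), (if dist z x ≤ r0 * S t then 1 else 0)) * κ z := by gcongr
          _ = _ := by ring
      · exact hifm.comp (measurable_const.prodMk measurable_id)
  have hae : ∀ᵐ z : Fin k → ℝ, z ≠ x := by
    have : Nonempty (Fin k) := ⟨⟨0, by omega⟩⟩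
    rw [ae_iff]; simp
  calc ∫⁻ z in B, H z * κ z ≤ ∫⁻ z in B, (ENNReal.ofReal ((2 * ρ) ^ (k-1) * (r0 ^ (k-1))⁻¹) * P z + Bt z) := by
        refine lintegral_mono_ae ?_
        exact (ae_restrict_of_ae hae).mono pw
    _ = ENNReal.ofReal ((2 * ρ) ^ (k-1) * (r0 ^ (k-1))⁻¹) * (∫⁻ z in B, P z) + ∫⁻ z in B, Bt z := by
        rw [lintegral_add_right _ hBtm, lintegral_const_mul' _ _ ENNReal.ofReal_ne_top]
    _ ≤ _ := by
        refine add_le_add ?_ ?_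
        · refine (mul_le_mul_right hM _).trans ?_
          rw [← ENNReal.ofReal_mul (by positivity)]
          apply ENNReal.ofReal_le_ofReal
          obtain ⟨j, rfl⟩ : ∃ j, k = j + 1 := ⟨k - 1, by omega⟩
          simp only [Nat.add_sub_cancel]
          rw [pow_succ]
          apply le_of_eq
          field_simp
        · rw [hBt]
          simp only
          rw [lintegral_const_mul' _ _ (by simp)]
          refine mul_le_mul_right ?_ _
          rw [lintegral_lintegral_swap ((hκm.comp measurable_fst).mul hifm).aemeasurable]
          refine setLIntegral_mono' measurableSet_Ioi fun t ht => ?_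
          have ht0 : 0 < t := lt_trans (by positivity) ht
          have hσ : 0 ≤ r0 * S t := by
            have := hpos t
            rw [hS]; simp only; positivity
          refine le_trans ?_ (L2_le hk ρ (r0 * S t) hρ hσ x)
          have b1 : ∀ z, κ z * (if dist z x ≤ r0 * S t then 1 else 0) = ∫⁻ s in Ioo (0:ℝ) 1, Jk ρ x s z * (if dist z x ≤ r0 * S t then 1 else 0) := by
            intro z
            rw [lintegral_mul_const' _ _ (by split_ifs <;> simp)]
          simp_rw [b1]
          refine (lintegral_mono' Measure.restrict_le_self le_rfl).trans ?_
          rw [lintegral_lintegral_swap]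
          · refine lintegral_mono fun s => ?_
            have hTm : MeasurableSet (closedBall x (2 * ρ * s) ∩ closedBall x (r0 * S t)) := measurableSet_closedBall.inter measurableSet_closedBall
            rw [← lintegral_indicator_const hTm]
            refine lintegral_mono fun z => ?_
            rw [Jk]
            split_ifs with q1 q2
            · rw [indicator_of_mem (show z ∈ closedBall x (2 * ρ * s) ∩ closedBall x (r0 * S t) from ⟨q1, q2⟩)]; simp
            · simp
            · simp
            · simp
          · refine (hJm'.mul ?_).aemeasurable
            exact hifm.comp (measurable_fst.prodMk measurable_const)

end PC2

section PC3

lemma Phi_split {k : ℕ} (lam : ℝ) (hlam : 0 < lam)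
    (h : (Fin k → ℝ) → ℝ) (c x : Fin k → ℝ) (ρ : ℝ) (hρ : 0 < ρ) :
    Phi (fun z => ENNReal.ofReal (h z)) c ρ x ≤ ENNReal.ofReal (2 * ρ) * (ENNReal.ofReal (lam * (4 * ρ) ^ k) +
      ∫⁻ t in Ioo (0:ℝ) 1, ENNReal.ofReal ((t ^ k)⁻¹) *
      ∫⁻ z in closedBall c ρ ∩ closedBall x (2 * ρ * t), {z | lam < h z}.indicator (fun z => ENNReal.ofReal (h z)) z) := by
  rw [Phi]
  refine mul_le_mul_right ?_ _
  have h1 : ∀ t ∈ Ioo (0:ℝ) 1, ENNReal.ofReal ((t ^ k)⁻¹) * ∫⁻ z in closedBall c ρ ∩ closedBall x (2 * ρ * t), ENNReal.ofReal (h z) ≤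
      ENNReal.ofReal (lam * (4 * ρ) ^ k) + ENNReal.ofReal ((t ^ k)⁻¹) *
      ∫⁻ z in closedBall c ρ ∩ closedBall x (2 * ρ * t), {z | lam < h z}.indicator (fun z => ENNReal.ofReal (h z)) z := by
    intro t ht
    have ht0 := ht.1
    have h2 : ∫⁻ z in closedBall c ρ ∩ closedBall x (2 * ρ * t), ENNReal.ofReal (h z) ≤ ENNReal.ofReal (lam * (4 * ρ * t)^k) +
        ∫⁻ z in closedBall c ρ ∩ closedBall x (2 * ρ * t), {z | lam < h z}.indicator (fun z => ENNReal.ofReal (h z)) z := by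
      calc _ ≤ ∫⁻ z in closedBall c ρ ∩ closedBall x (2 * ρ * t), (ENNReal.ofReal lam + {z | lam < h z}.indicator (fun z => ENNReal.ofReal (h z)) z) := by
            refine lintegral_mono fun z => ?_
            by_cases hz : lam < h z
            · rw [indicator_of_mem (show z ∈ {z | lam < h z} from hz)]; exact le_add_self
            · exact le_add_right (ENNReal.ofReal_le_ofReal (not_lt.1 hz))
        _ = ENNReal.ofReal lam * volume (closedBall c ρ ∩ closedBall x (2 * ρ * t)) + ∫⁻ z in closedBall c ρ ∩ closedBall x (2 * ρ * t), {z | lam < h z}.indicator (fun z => ENNReal.ofReal (h z)) z := by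
            rw [lintegral_add_left measurable_const, setLIntegral_const]
        _ ≤ _ := by
            gcongr
            refine (mul_le_mul_right (measure_mono inter_subset_right) _).trans ?_
            rw [vol_cb _ (by positivity), ← ENNReal.ofReal_mul (by positivity)]
            apply ENNReal.ofReal_le_ofReal
            apply le_of_eq; ring
    refine (mul_le_mul_right h2 _).trans ?_
    rw [mul_add, ← ENNReal.ofReal_mul (by positivity)]
    refine add_le_add (le_of_eq ?_) le_rfl
    congr 1
    rw [mul_pow (4 * ρ)]; field_simp
  refine (setLIntegral_mono' measurableSet_Ioo h1).trans ?_
  rw [lintegral_add_left measurable_const, setLIntegral_const]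
  simp

lemma ball_est0 {k : ℕ} (hk : 2 ≤ k) (φ : ℝ → ℝ) (hφ : Monotone φ) (hpos : ∀ t, 0 < φ t) (lam : ℝ) (hlam : 0 < lam)
    (hI : ∫⁻ t in Ioi (lam / 2), ENNReal.ofReal ((2 * t / φ t) ^ (1 / ((k:ℝ) - 1))) ≠ ⊤)
    (h : (Fin k → ℝ) → ℝ) (hh : Measurable h) (c : Fin k → ℝ) (ρ r0 : ℝ) (hρ : 0 < ρ) (hr0 : 0 < r0)
    (hM : ∫⁻ z in closedBall c ρ, {z | lam < h z}.indicator (fun z => ENNReal.ofReal (φ (h z))) z ≤ ENNReal.ofReal (r0 ^ k))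
    (u : (Fin k → ℝ) → (Fin k → ℝ)) (v : ℕ → (Fin k → ℝ) → (Fin k → ℝ))
    (hv : ∀ j, ContDiff ℝ 1 (v j)) 
    (hu : ContinuousOn u (closedBall c ρ))
    (hlim : ∀ y ∈ closedBall c ρ, Tendsto (fun j => v j y) atTop (𝓝 (u y)))
    (e : ℕ → (Fin k → ℝ) → ℝ≥0∞)
    (hle : ∀ j, ∀ z ∈ closedBall c ρ, ‖fderiv ℝ (v j) z‖ₑ ≤ ENNReal.ofReal (h z) + e j z)
    (he : Tendsto (fun j => ∫⁻ z in closedBall c ρ, e j z) atTop (𝓝 0)) :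
    volume (u '' closedBall c ρ) ≤ ENNReal.ofReal (8 ^ k * 2 ^ (k * k) * lam ^ k) * volume (closedBall c ρ) +
      ENNReal.ofReal ((8 * (1 + 4 * 2 ^ k * (∫⁻ t in Ioi (lam / 2), ENNReal.ofReal ((2 * t / φ t) ^ (1 / ((k:ℝ) - 1)))).toReal)) ^ k) * ENNReal.ofReal (r0 ^ k) := by
  set I := ∫⁻ t in Ioi (lam / 2), ENNReal.ofReal ((2 * t / φ t) ^ (1 / ((k:ℝ) - 1))) with hIdef
  set Ir := I.toReal with hIr
  have hIr0 : 0 ≤ Ir := ENNReal.toReal_nonneg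
  have hII : I = ENNReal.ofReal Ir := (ENNReal.ofReal_toReal hI).symm
  clear_value Ir
  set A : ℝ := (2 * ρ) ^ k * (2 ^ k * (2 * ρ) * lam + r0 * (1 + 4 * 2 ^ k * Ir)) with hA
  have hPhi : ∀ x, Phi (fun z => ENNReal.ofReal (h z)) c ρ x ≤ ENNReal.ofReal A := by
    intro x
    have hW := W_bound hk φ hφ hpos lam hlam h hh c x ρ r0 hρ hr0 hM
    have e1 : ∫⁻ t in Ioi (lam / 2), ENNReal.ofReal (2 * (4 * ρ) ^ k * (r0 * (2 * t / φ t) ^ (1 / ((k:ℝ) - 1)) / (2 * ρ)))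
       = ENNReal.ofReal (2 * (4 * ρ) ^ k * r0 / (2 * ρ)) * I := by
      rw [hIdef, ← lintegral_const_mul' _ _ ENNReal.ofReal_ne_top]
      refine lintegral_congr fun t => ?_
      rw [← ENNReal.ofReal_mul (by positivity)]
      congr 1; ring
    rw [e1, hII, ← ENNReal.ofReal_mul (by positivity), show (2:ℝ≥0∞) = ENNReal.ofReal 2 by simp, ← ENNReal.ofReal_mul (by norm_num),
      ← ENNReal.ofReal_add (by positivity) (by positivity)] at hW
    refine (Phi_split lam hlam h c x ρ hρ).trans ?_
    refine (mul_le_mul_right (add_le_add le_rfl hW) _).trans ?_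
    rw [← ENNReal.ofReal_add (by positivity) (by positivity), ← ENNReal.ofReal_mul (by positivity)]
    apply ENNReal.ofReal_le_ofReal
    rw [hA]
    obtain ⟨j, rfl⟩ : ∃ j, k = j + 1 := ⟨k - 1, by omega⟩
    simp only [Nat.add_sub_cancel]
    apply le_of_eq
    rw [show 4 * ρ = 2 * (2 * ρ) by ring, mul_pow 2 (2 * ρ)]
    have hw' : 2 * ρ ≠ 0 := by positivity
    generalize 2 * ρ = w at *
    field_simp
    ring
  set ω : ℝ := 2 * (2 ^ k * (2 * ρ) * lam + r0 * (1 + 4 * 2 ^ k * Ir)) with hω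
  have hω0 : 0 ≤ ω := by positivity
  have hsub : u '' closedBall c ρ ⊆ closedBall (u c) ω := by
    rintro _ ⟨x, hx, rfl⟩
    have hcx : c ∈ closedBall c ρ := mem_closedBall_self hρ.le
    have q : ∀ x ∈ closedBall c ρ, ∫⁻ y in closedBall c ρ, ‖u x - u y‖ₑ ≤ ENNReal.ofReal A := fun x hx =>
      (potential_est u v hv c x ρ hρ hx (hu x hx) hlim _ hh.ennreal_ofReal e hle he).trans (hPhi x)
    have := two_point u c x c ρ _ hu (q x hx) (q c hcx)
    rw [vol_cb _ hρ.le, ← ofReal_norm, ← ENNReal.ofReal_mul (norm_nonneg _), show (2:ℝ≥0∞) = ENNReal.ofReal 2 by simp, ← ENNReal.ofReal_mul (by norm_num),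
      ENNReal.ofReal_le_ofReal_iff (by positivity)] at this
    rw [mem_closedBall, dist_eq_norm]
    have hp : 0 < (2 * ρ) ^ k := by positivity
    rw [← mul_le_mul_iff_left₀ hp]
    refine this.trans (le_of_eq ?_)
    rw [hA, hω]; ring
  refine (measure_mono hsub).trans ?_
  rw [vol_cb _ hω0, vol_cb _ hρ.le, ← ENNReal.ofReal_mul (by positivity), ← ENNReal.ofReal_mul (by positivity), ← ENNReal.ofReal_add (by positivity) (by positivity)]
  apply ENNReal.ofReal_le_ofReal
  have h0 : 2 * ω = 4 * (2 ^ k * (2 * ρ) * lam + r0 * (1 + 4 * 2 ^ k * Ir)) := by rw [hω]; ring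
  rw [h0, mul_pow]
  have h3 : (2 ^ k * (2 * ρ) * lam + r0 * (1 + 4 * 2 ^ k * Ir)) ^ k ≤ 2 ^ k * ((2 ^ k * (2 * ρ) * lam)^k + (r0 * (1 + 4 * 2 ^ k * Ir))^k) := by
    refine (add_pow_le (by positivity) (by positivity) k).trans ?_
    gcongr
    · norm_num
    · omega
  calc _ ≤ 4 ^ k * (2 ^ k * ((2 ^ k * (2 * ρ) * lam)^k + (r0 * (1 + 4 * 2 ^ k * Ir))^k)) := by gcongr
    _ = _ := by
      rw [show (8:ℝ) = 4 * 2 by norm_num]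
      simp only [mul_pow, pow_mul]
      ring

lemma ball_est {k : ℕ} (hk : 2 ≤ k) (φ : ℝ → ℝ) (hφ : Monotone φ) (hpos : ∀ t, 0 < φ t) (lam : ℝ) (hlam : 0 < lam)
    (hI : ∫⁻ t in Ioi (lam / 2), ENNReal.ofReal ((2 * t / φ t) ^ (1 / ((k:ℝ) - 1))) ≠ ⊤) :
    ∃ C : ℝ≥0∞, C ≠ ⊤ ∧ ∀ (h : (Fin k → ℝ) → ℝ) (_ : Measurable h) (c : Fin k → ℝ) (ρ : ℝ) (_ : 0 < ρ) (η : ℝ≥0∞) (_ : η ≠ 0) (_ : η ≠ ⊤)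
    (_ : ∫⁻ z in closedBall c ρ, {z | lam < h z}.indicator (fun z => ENNReal.ofReal (φ (h z))) z ≠ ⊤)
    (u : (Fin k → ℝ) → (Fin k → ℝ)) (v : ℕ → (Fin k → ℝ) → (Fin k → ℝ))
    (_ : ∀ j, ContDiff ℝ 1 (v j)) 
    (_ : ContinuousOn u (closedBall c ρ))
    (_ : ∀ y ∈ closedBall c ρ, Tendsto (fun j => v j y) atTop (𝓝 (u y)))
    (e : ℕ → (Fin k → ℝ) → ℝ≥0∞)
    (_ : ∀ j, ∀ z ∈ closedBall c ρ, ‖fderiv ℝ (v j) z‖ₑ ≤ ENNReal.ofReal (h z) + e j z)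
    (_ : Tendsto (fun j => ∫⁻ z in closedBall c ρ, e j z) atTop (𝓝 0)),
    volume (u '' closedBall c ρ) ≤ ∫⁻ z in closedBall c ρ, (ENNReal.ofReal (8 ^ k * 2 ^ (k * k) * lam ^ k) +
      C * ({z | lam < h z}.indicator (fun z => ENNReal.ofReal (φ (h z))) z + η)) := by
  refine ⟨_, ENNReal.ofReal_ne_top (r := (8 * (1 + 4 * 2 ^ k * (∫⁻ t in Ioi (lam / 2), ENNReal.ofReal ((2 * t / φ t) ^ (1 / ((k:ℝ) - 1)))).toReal)) ^ k), ?_⟩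
  intro h hh c ρ hρ η hη hη' hM u v hv hu hlim e hle he
  have hBpos : volume (closedBall c ρ) ≠ 0 := (measure_closedBall_pos _ _ hρ).ne'
  have hBfin : volume (closedBall c ρ) ≠ ⊤ := measure_closedBall_lt_top.ne
  set M := ∫⁻ z in closedBall c ρ, {z | lam < h z}.indicator (fun z => ENNReal.ofReal (φ (h z))) z with hMdef
  set T := M + η * volume (closedBall c ρ) with hT
  have hT0 : T ≠ 0 := by rw [hT]; simp [hη, hBpos]
  have hTf : T ≠ ⊤ := by rw [hT]; exact ENNReal.add_ne_top.2 ⟨hM, ENNReal.mul_ne_top hη' hBfin⟩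
  have hTr : 0 < T.toReal := ENNReal.toReal_pos hT0 hTf
  set r0 := T.toReal ^ (1 / (k:ℝ)) with hr0
  have hr0p : 0 < r0 := Real.rpow_pos_of_pos hTr _
  have hrk : ENNReal.ofReal (r0 ^ k) = T := by
    rw [hr0, ← Real.rpow_natCast, ← Real.rpow_mul hTr.le, one_div_mul_cancel (by positivity), Real.rpow_one, ENNReal.ofReal_toReal hTf]
  have := ball_est0 hk φ hφ hpos lam hlam hI h hh c ρ r0 hρ hr0p (by rw [hrk, hT]; exact le_self_add) u v hv hu hlim e hle he
  refine this.trans ?_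
  rw [hrk, hT]
  have hm : Measurable ({z | lam < h z}.indicator (fun z => ENNReal.ofReal (φ (h z)))) :=
    ((hφ.measurable.comp hh).ennreal_ofReal).indicator (measurableSet_lt measurable_const hh)
  rw [lintegral_add_left measurable_const, setLIntegral_const, lintegral_const_mul' _ _ ENNReal.ofReal_ne_top, lintegral_add_right _ measurable_const,
    setLIntegral_const]

lemma level_est {k : ℕ} (hk : 2 ≤ k) (φ : ℝ → ℝ) (hφ : Monotone φ) (hpos : ∀ t, 0 < φ t) (lam : ℝ) (hlam : 0 < lam)
    (hI : ∫⁻ t in Ioi (lam / 2), ENNReal.ofReal ((2 * t / φ t) ^ (1 / ((k:ℝ) - 1))) ≠ ⊤)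
    (h : (Fin k → ℝ) → ℝ) (hh : Measurable h) (c : Fin k → ℝ) (R : ℝ)
    (hM : ∫⁻ z in closedBall c R, {z | lam < h z}.indicator (fun z => ENNReal.ofReal (φ (h z))) z ≠ ⊤)
    (u : (Fin k → ℝ) → (Fin k → ℝ)) (v : ℕ → (Fin k → ℝ) → (Fin k → ℝ))
    (hv : ∀ j, ContDiff ℝ 1 (v j)) 
    (hu : ContinuousOn u (closedBall c R))
    (hlim : ∀ y ∈ closedBall c R, Tendsto (fun j => v j y) atTop (𝓝 (u y)))
    (e : ℕ → (Fin k → ℝ) → ℝ≥0∞)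
    (hle : ∀ j, ∀ z ∈ closedBall c R, ‖fderiv ℝ (v j) z‖ₑ ≤ ENNReal.ofReal (h z) + e j z)
    (he : Tendsto (fun j => ∫⁻ z in closedBall c R, e j z) atTop (𝓝 0))
    (S : Set (Fin k → ℝ)) (hS : MeasurableSet S) (hSB : S ⊆ ball c R) (hSl : ∀ z ∈ S, h z ≤ lam) :
    volume (u '' S) ≤ ENNReal.ofReal (8 ^ k * 2 ^ (k * k) * lam ^ k) * volume S := by
  obtain ⟨C, hC, hball⟩ := ball_est hk φ hφ hpos lam hlam hI
  set P : (Fin k → ℝ) → ℝ≥0∞ := {z | lam < h z}.indicator (fun z => ENNReal.ofReal (φ (h z))) with hP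
  set a := ENNReal.ofReal (8 ^ k * 2 ^ (k * k) * lam ^ k) with ha
  have haf : a ≠ ⊤ := ENNReal.ofReal_ne_top
  have hPm : Measurable P :=
    ((hφ.measurable.comp hh).ennreal_ofReal).indicator (measurableSet_lt measurable_const hh)
  have hVf : volume S ≠ ⊤ := ((measure_mono (hSB.trans ball_subset_closedBall)).trans_lt measure_closedBall_lt_top).ne
  have key : ∀ η : ℝ≥0∞, η ≠ 0 → η ≠ ⊤ → volume (u '' S) ≤ a * volume S + (C * η * volume S + η) := by
    intro η hη hη'
    set g : (Fin k → ℝ) → ℝ≥0∞ := fun z => a + C * (P z + η) with hg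
    have hgm : Measurable g := by fun_prop
    set ν := (volume.restrict (closedBall c R)).withDensity g with hν
    have hfin : ∫⁻ z in closedBall c R, g z ≠ ⊤ := by
      rw [hg]
      simp only
      rw [lintegral_add_left measurable_const, setLIntegral_const, lintegral_const_mul' _ _ hC, lintegral_add_right _ measurable_const,
        setLIntegral_const]
      have := (measure_closedBall_lt_top (μ := (volume : Measure (Fin k → ℝ))) (x := c) (r := R)).ne
      finiteness
    have : IsFiniteMeasure ν := isFiniteMeasure_withDensity hfin
    have hνB : ∀ x r, closedBall x r ⊆ closedBall c R → ν (closedBall x r) = ∫⁻ z in closedBall x r, g z := by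
      intro x r hs
      rw [hν, withDensity_apply _ measurableSet_closedBall, Measure.restrict_restrict measurableSet_closedBall, inter_eq_left.2 hs]
    have hνS : ν S = a * volume S + C * η * volume S := by
      rw [hν, withDensity_apply _ hS, Measure.restrict_restrict hS, inter_eq_left.2 (hSB.trans ball_subset_closedBall)]
      rw [setLIntegral_congr_fun hS (g := fun _ => a + C * η), setLIntegral_const, add_mul]
      intro z hz
      have : P z = 0 := by
        rw [hP]
        exact indicator_of_notMem (show z ∉ {z | lam < h z} from not_lt.2 (hSl z hz)) _
      simp [hg, this]
    obtain ⟨t, r, htc, hts, hrf, hcov, hsum⟩ := Besicovitch.exists_closedBall_covering_tsum_measure_le ν hη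
      (fun x => {r | closedBall x r ⊆ closedBall c R}) S (by
        intro x hx δ hδ
        have hx' := hSB hx
        rw [mem_ball] at hx'
        refine ⟨min (δ / 2) (R - dist x c), ?_, ?_, ?_⟩
        · show closedBall _ _ ⊆ _
          refine closedBall_subset_closedBall' ?_
          linarith [min_le_right (δ / 2) (R - dist x c)]
        · exact lt_min (by linarith) (by linarith)
        · exact (min_le_left _ _).trans_lt (by linarith))
    have hsum' : volume (u '' S) ≤ ∑' x : t, ν (closedBall x (r x)) := by
      have := htc.to_subtype
      calc volume (u '' S) ≤ volume (⋃ x : t, u '' closedBall (x : Fin k → ℝ) (r x)) := by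
            refine measure_mono ?_
            rw [← image_iUnion]
            refine image_mono ?_
            rw [iUnion_coe_set]; exact hcov
        _ ≤ ∑' x : t, volume (u '' closedBall (x : Fin k → ℝ) (r x)) := measure_iUnion_le _
        _ ≤ _ := by
            refine ENNReal.tsum_le_tsum fun x => ?_
            have hs : closedBall (x : Fin k → ℝ) (r x) ⊆ closedBall c R := hrf x x.2
            rcases lt_or_ge 0 (r x) with hr | hr
            · rw [hνB _ _ hs]
              refine hball h hh x (r x) hr η hη hη' ?_ u v hv (hu.mono hs) (fun y hy => hlim y (hs hy)) e (fun j z hz => hle j z (hs hz)) ?_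
              · exact ((lintegral_mono_set hs).trans_lt (lt_top_iff_ne_top.2 hM)).ne
              · exact tendsto_of_tendsto_of_tendsto_of_le_of_le tendsto_const_nhds he (fun j => zero_le) (fun j => lintegral_mono_set hs)
            · have : u '' closedBall (x : Fin k → ℝ) (r x) ⊆ {u x} := by
                rintro _ ⟨y, hy, rfl⟩
                have : dist y x ≤ 0 := le_trans (mem_closedBall.1 hy) hr
                rw [dist_le_zero] at this
                simp [this]
              refine (measure_mono this).trans ?_
              have : Nonempty (Fin k) := ⟨⟨0, by omega⟩⟩
              simp
    refine hsum'.trans (hsum.trans ?_)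
    rw [hνS, add_assoc]
  have ht : Tendsto (fun η : ℝ≥0∞ => a * volume S + (C * η * volume S + η)) (𝓝[>] 0) (𝓝 (a * volume S + (C * 0 * volume S + 0))) := by
    refine Tendsto.add tendsto_const_nhds (Tendsto.add ?_ (tendsto_id.mono_left nhdsWithin_le_nhds))
    refine ENNReal.Tendsto.mul_const ?_ (Or.inr hVf)
    refine ENNReal.Tendsto.const_mul (tendsto_id.mono_left nhdsWithin_le_nhds) (Or.inr hC)
  simp only [mul_zero, zero_mul, add_zero] at ht
  refine ge_of_tendsto ht ?_
  filter_upwards [self_mem_nhdsWithin, mem_nhdsWithin_of_mem_nhds (Iio_mem_nhds (show (0:ℝ≥0∞) < ⊤ by simp))] with η h1 h2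
  exact key η (ne_of_gt h1) (ne_of_lt h2)

end PC3

section PC4

lemma level_est' {k : ℕ} (hk : 2 ≤ k) (φ : ℝ → ℝ) (hφ : NondecPos φ)
    (hcal : ∃ t₀ : ℝ, 0 < t₀ ∧ IntegrableOn (fun t => (t / φ t) ^ (1 / ((k : ℝ) - 1))) (Ioi t₀) volume)
    (lam : ℝ) (hlam : 0 < lam)
    (h : (Fin k → ℝ) → ℝ) (hh : Measurable h) (c : Fin k → ℝ) (R : ℝ)
    (hM : ∫⁻ z in closedBall c R, ENNReal.ofReal (φ (h z)) ≠ ⊤)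
    (u : (Fin k → ℝ) → (Fin k → ℝ)) (v : ℕ → (Fin k → ℝ) → (Fin k → ℝ))
    (hv : ∀ j, ContDiff ℝ 1 (v j)) 
    (hu : ContinuousOn u (closedBall c R))
    (hlim : ∀ y ∈ closedBall c R, Tendsto (fun j => v j y) atTop (𝓝 (u y)))
    (e : ℕ → (Fin k → ℝ) → ℝ≥0∞)
    (hle : ∀ j, ∀ z ∈ closedBall c R, ‖fderiv ℝ (v j) z‖ₑ ≤ ENNReal.ofReal (h z) + e j z)
    (he : Tendsto (fun j => ∫⁻ z in closedBall c R, e j z) atTop (𝓝 0))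
    (S : Set (Fin k → ℝ)) (hS : MeasurableSet S) (hSB : S ⊆ ball c R) (hSl : ∀ z ∈ S, h z ≤ lam) :
    volume (u '' S) ≤ ENNReal.ofReal (8 ^ k * 2 ^ (k * k) * lam ^ k) * volume S := by
  have hk1 : (0:ℝ) < (k:ℝ) - 1 := by
    have : (2:ℝ) ≤ k := by exact_mod_cast hk
    linarith
  have hl2 : 0 < lam / 2 := by linarith
  set ψ : ℝ → ℝ := fun t => φ (max t (lam / 2)) with hψ
  have hmono : Monotone ψ := fun s t hst => hφ.1 _ _ (lt_of_lt_of_le hl2 (le_max_right _ _)) (max_le_max_right _ hst)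
  have hpos : ∀ t, 0 < ψ t := fun t => hφ.2 _ (lt_of_lt_of_le hl2 (le_max_right _ _))
  refine level_est hk ψ hmono hpos lam hlam ?_ h hh c R ?_ u v hv hu hlim e hle he S hS hSB hSl
  · obtain ⟨t₀, ht₀, hint⟩ := hcal
    set q := 1 / ((k:ℝ) - 1) with hq
    have hq0 : 0 < q := by positivity
    have hsub : Ioi (lam / 2) ⊆ Ioc (lam / 2) t₀ ∪ Ioi t₀ := by
      intro t ht
      rcases le_or_gt t t₀ with h1 | h1
      · exact Or.inl ⟨ht, h1⟩
      · exact Or.inr h1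
    have hsub2 : Ioi (lam/2) ⊆ Ioc (lam / 2) t₀ ∪ (Ioi t₀ ∩ Ioi (lam/2)) := by
      intro t ht
      rcases le_or_gt t t₀ with h1 | h1
      · exact Or.inl ⟨ht, h1⟩
      · exact Or.inr ⟨h1, ht⟩
    refine ne_of_lt ?_
    refine ((lintegral_mono_set hsub2).trans (lintegral_union_le _ _ _)).trans_lt ?_
    refine ENNReal.add_lt_top.2 ⟨?_, ?_⟩
    · calc _ ≤ ∫⁻ t in Ioc (lam/2) t₀, ENNReal.ofReal ((2 * t₀ / ψ (lam/2)) ^ q) := by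
            refine setLIntegral_mono' measurableSet_Ioc fun t ht => ?_
            apply ENNReal.ofReal_le_ofReal
            have h1 : 0 < t := hl2.trans ht.1
            have := hpos t
            have := hpos (lam/2)
            have h3 := hmono ht.1.le
            have h4 := ht.2
            refine Real.rpow_le_rpow (by positivity) ?_ hq0.le
            gcongr
        _ < ⊤ := by
            rw [setLIntegral_const, Real.volume_Ioc]
            finiteness
    · calc _ ≤ ∫⁻ t in Ioi t₀ ∩ Ioi (lam/2), ENNReal.ofReal (2 ^ q) * ENNReal.ofReal ((t / φ t) ^ q) := by
            refine setLIntegral_mono' (measurableSet_Ioi.inter measurableSet_Ioi) fun t ht => ?_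
            have h1 : 0 < t := hl2.trans ht.2
            have h2 : ψ t = φ t := by rw [hψ]; simp only; rw [max_eq_left (le_of_lt ht.2)]
            have h3 := hφ.2 t h1
            rw [← ENNReal.ofReal_mul (by positivity), h2, ← Real.mul_rpow (by norm_num) (by positivity)]
            rw [mul_div_assoc]
        _ ≤ ∫⁻ t in Ioi t₀, ENNReal.ofReal (2 ^ q) * ENNReal.ofReal ((t / φ t) ^ q) := lintegral_mono_set inter_subset_left
        _ < ⊤ := by
            rw [lintegral_const_mul' _ _ ENNReal.ofReal_ne_top]
            refine ENNReal.mul_lt_top ENNReal.ofReal_lt_top ?_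
            exact hint.lintegral_lt_top
  · refine ne_of_lt (lt_of_le_of_lt ?_ (lt_top_iff_ne_top.2 hM))
    refine lintegral_mono fun z => ?_
    by_cases hz : lam < h z
    · rw [indicator_of_mem (show z ∈ {z | lam < h z} from hz), hψ]
      simp only
      rw [max_eq_left (by linarith)]
    · rw [indicator_of_notMem (show z ∉ {z | lam < h z} from hz)]; exact zero_le

lemma area_upper {k : ℕ} (hk : 2 ≤ k) (φ : ℝ → ℝ) (hφ : NondecPos φ)
    (hcal : ∃ t₀ : ℝ, 0 < t₀ ∧ IntegrableOn (fun t => (t / φ t) ^ (1 / ((k : ℝ) - 1))) (Ioi t₀) volume)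
    (h : (Fin k → ℝ) → ℝ) (hh : Measurable h) (c : Fin k → ℝ) (R : ℝ)
    (hM : ∫⁻ z in closedBall c R, ENNReal.ofReal (φ (h z)) ≠ ⊤)
    (u : (Fin k → ℝ) → (Fin k → ℝ)) (v : ℕ → (Fin k → ℝ) → (Fin k → ℝ))
    (hv : ∀ j, ContDiff ℝ 1 (v j)) 
    (hu : ContinuousOn u (closedBall c R))
    (hlim : ∀ y ∈ closedBall c R, Tendsto (fun j => v j y) atTop (𝓝 (u y)))
    (e : ℕ → (Fin k → ℝ) → ℝ≥0∞)
    (hle : ∀ j, ∀ z ∈ closedBall c R, ‖fderiv ℝ (v j) z‖ₑ ≤ ENNReal.ofReal (h z) + e j z)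
    (he : Tendsto (fun j => ∫⁻ z in closedBall c R, e j z) atTop (𝓝 0))
    (S : Set (Fin k → ℝ)) (hS : MeasurableSet S) (hSB : S ⊆ ball c R) :
    volume (u '' S) ≤ ENNReal.ofReal (8 ^ k * 2 ^ (k * k) * 2 ^ k) * ∫⁻ z in S, ENNReal.ofReal (h z) ^ k := by
  have L : ∀ lam > 0, ∀ T, MeasurableSet T → T ⊆ S → (∀ z ∈ T, h z ≤ lam) → volume (u '' T) ≤ ENNReal.ofReal (8 ^ k * 2 ^ (k * k) * lam ^ k) * volume T :=
    fun lam hlam T hT hTS hTl => level_est' hk φ hφ hcal lam hlam h hh c R hM u v hv hu hlim e hle he T hT (hTS.trans hSB) hTl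
  set Z := S ∩ {z | h z ≤ 0} with hZ
  have hZm : MeasurableSet Z := hS.inter (measurableSet_le hh measurable_const)
  have hZf : volume Z ≠ ⊤ := ((measure_mono ((inter_subset_left.trans hSB).trans ball_subset_closedBall)).trans_lt measure_closedBall_lt_top).ne
  have hZ0 : volume (u '' Z) = 0 := by
    have ht : Tendsto (fun lam : ℝ => ENNReal.ofReal (8 ^ k * 2 ^ (k * k) * lam ^ k) * volume Z) (𝓝[>] 0) (𝓝 (ENNReal.ofReal (8 ^ k * 2 ^ (k * k) * 0 ^ k) * volume Z)) := by
      refine ENNReal.Tendsto.mul_const ?_ (Or.inr hZf)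
      refine (Continuous.tendsto (ENNReal.continuous_ofReal.comp (f := fun lam : ℝ => 8 ^ k * 2 ^ (k * k) * lam ^ k) (by fun_prop)) (0:ℝ)).mono_left nhdsWithin_le_nhds
    rw [zero_pow (by omega)] at ht
    simp only [mul_zero, ENNReal.ofReal_zero, zero_mul] at ht
    refine le_antisymm (ge_of_tendsto ht ?_) zero_le
    filter_upwards [self_mem_nhdsWithin] with lam hlam
    exact L lam hlam Z hZm inter_subset_left (fun z hz => (show h z ≤ 0 from hz.2).trans (le_of_lt hlam))
  set T : ℤ → Set (Fin k → ℝ) := fun i => S ∩ h ⁻¹' Ioc ((2:ℝ) ^ i) (2 ^ (i+1)) with hT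
  have hTm : ∀ i, MeasurableSet (T i) := fun i => hS.inter (hh measurableSet_Ioc)
  have hdisj : Pairwise (Function.onFun Disjoint T) := by
    have hm : Monotone (fun i : ℤ => (2:ℝ) ^ i) := fun i j hij => zpow_le_zpow_right₀ (by norm_num) hij
    intro i j hij
    have := hm.pairwise_disjoint_on_Ioc_succ hij
    exact (Disjoint.preimage h this).mono inter_subset_right inter_subset_right
  have hcov : S ⊆ Z ∪ ⋃ i, T i := by
    intro z hz
    rcases le_or_gt (h z) 0 with h0 | h0
    · exact Or.inl ⟨hz, h0⟩
    · obtain ⟨i, hi⟩ := exists_mem_Ioc_zpow h0 (one_lt_two)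
      exact Or.inr (mem_iUnion.2 ⟨i, hz, hi⟩)
  have hTi : ∀ i, volume (u '' T i) ≤ ENNReal.ofReal (8 ^ k * 2 ^ (k * k) * 2 ^ k) * ∫⁻ z in T i, ENNReal.ofReal (h z) ^ k := by
    intro i
    have h2 : (0:ℝ) < 2 ^ i := by positivity
    refine (L (2 ^ (i+1)) (by positivity) (T i) (hTm i) inter_subset_left (fun z hz => hz.2.2)).trans ?_
    have : ∫⁻ z in T i, ENNReal.ofReal ((2 ^ i) ^ k) ≤ ∫⁻ z in T i, ENNReal.ofReal (h z) ^ k := by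
      refine setLIntegral_mono' (hTm i) fun z hz => ?_
      rw [ENNReal.ofReal_pow h2.le]
      gcongr
      exact hz.2.1.le
    refine le_trans ?_ (mul_le_mul_right this _)
    rw [setLIntegral_const, ← mul_assoc, ← ENNReal.ofReal_mul (by positivity)]
    apply le_of_eq
    congr 2
    rw [zpow_add₀ (by norm_num), mul_pow]
    simp; ring
  calc volume (u '' S) ≤ volume (u '' Z ∪ ⋃ i, u '' T i) := by
        rw [← image_iUnion, ← image_union]; exact measure_mono (image_mono hcov)
    _ ≤ 0 + ∑' i, volume (u '' T i) := (measure_union_le _ _).trans (add_le_add hZ0.le (measure_iUnion_le _))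
    _ ≤ ∑' i, ENNReal.ofReal (8 ^ k * 2 ^ (k * k) * 2 ^ k) * ∫⁻ z in T i, ENNReal.ofReal (h z) ^ k := by
        rw [zero_add]; exact ENNReal.tsum_le_tsum hTi
    _ = ENNReal.ofReal (8 ^ k * 2 ^ (k * k) * 2 ^ k) * ∫⁻ z in ⋃ i, T i, ENNReal.ofReal (h z) ^ k := by
        rw [ENNReal.tsum_mul_left, lintegral_iUnion hTm hdisj]
    _ ≤ _ := by
        refine mul_le_mul_right (lintegral_mono_set (iUnion_subset fun i => inter_subset_left)) _

end PC4

section PD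

lemma measurable_removeNth {k : ℕ} (l : Fin (k+1)) : Measurable (fun x : Fin (k+1) → ℝ => l.removeNth x) := by
  refine measurable_pi_lambda _ fun i => ?_
  exact measurable_pi_apply _

lemma continuous_removeNth {k : ℕ} (l : Fin (k+1)) : Continuous (fun x : Fin (k+1) → ℝ => l.removeNth x) := by
  refine continuous_pi fun i => ?_
  exact continuous_apply _

lemma continuous_insertNth {k : ℕ} (l : Fin (k+1)) (t : ℝ) : Continuous (fun z : Fin k → ℝ => (l.insertNth t z : Fin (k+1) → ℝ)) := by
  refine continuous_pi fun i => ?_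
  refine Fin.succAboveCases l ?_ ?_ i
  · simp; exact continuous_const
  · intro j; simp; exact continuous_apply _

lemma removeNth_open {k : ℕ} (l : Fin (k+1)) (U : Set (Fin (k+1) → ℝ)) (hU : IsOpen U) :
    IsOpen ((fun x : Fin (k+1) → ℝ => l.removeNth x) '' U) := by
  have : (fun x : Fin (k+1) → ℝ => l.removeNth x) '' U = ⋃ t : ℝ, (fun z : Fin k → ℝ => (l.insertNth t z : Fin (k+1) → ℝ)) ⁻¹' U := by
    ext z
    simp only [mem_image, mem_iUnion, mem_preimage]
    constructor
    · rintro ⟨x, hx, rfl⟩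
      exact ⟨x l, by simpa using hx⟩
    · rintro ⟨t, ht⟩
      exact ⟨_, ht, by simp⟩
  rw [this]
  exact isOpen_iUnion fun t => hU.preimage (continuous_insertNth l t)

lemma lint_slice {k : ℕ} (l : Fin (k+1)) (g : (Fin (k+1) → ℝ) → ℝ≥0∞) (hg : Measurable g) :
    ∫⁻ x, g x = ∫⁻ t : ℝ, ∫⁻ z : Fin k → ℝ, g (l.insertNth t z) := by
  have e := volume_preserving_piFinSuccAbove (fun _ : Fin (k+1) => ℝ) l
  rw [← e.symm.lintegral_comp hg, Measure.volume_eq_prod, lintegral_prod _ (by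
    exact (hg.comp (MeasurableEquiv.measurable _)).aemeasurable)]
  rfl

lemma loomis {k : ℕ} (hk : 1 ≤ k) (U : Set (Fin (k+1) → ℝ)) (hU : IsOpen U) :
    volume U ≤ (∑ l : Fin (k+1), volume ((fun x : Fin (k+1) → ℝ => l.removeNth x) '' U)) ^ (((k:ℝ)+1)/k) := by
  have hk0 : (0:ℝ) < k := by exact_mod_cast hk
  set W : Fin (k+1) → Set (Fin k → ℝ) := fun l => (fun x : Fin (k+1) → ℝ => l.removeNth x) '' U with hW
  have hWm : ∀ l, MeasurableSet (W l) := fun l => (removeNth_open l U hU).measurableSet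
  set η : ℝ → ℝ≥0∞ := (Icc (0:ℝ) 1).indicator 1 with hη
  have hηm : Measurable η := measurable_one.indicator measurableSet_Icc
  have hη1 : ∫⁻ t, η t = 1 := by rw [hη, lintegral_indicator_one measurableSet_Icc]; simp
  set F : Fin (k+1) → (Fin (k+1) → ℝ) → ℝ≥0∞ := fun l x => (W l).indicator 1 (l.removeNth x) * η (x l) with hF
  have hFm : ∀ l, Measurable (F l) := fun l =>
    ((measurable_one.indicator (hWm l)).comp (measurable_removeNth l)).mul (hηm.comp (measurable_pi_apply l))
  set f : (Fin (k+1) → ℝ) → ℝ≥0∞ := fun x => ∑ l, F l x with hf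
  have hfm : Measurable f := Finset.measurable_sum _ fun l _ => hFm l
  have hp : Real.HolderConjugate (Fintype.card (Fin (k+1)) : ℝ) (((k:ℝ)+1)/k) := by
    rw [Fintype.card_fin, Real.holderConjugate_iff]
    push_cast
    constructor
    · linarith
    · field_simp
      ring
  have key := lintegral_prod_lintegral_pow_le (fun _ : Fin (k+1) => (volume : Measure ℝ)) hp hfm
  rw [← volume_pi] at key
  have hint : ∫⁻ x, f x = ∑ l, volume (W l) := by
    rw [hf, lintegral_finsetSum _ fun l _ => hFm l]
    refine Finset.sum_congr rfl fun l _ => ?_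
    rw [lint_slice l _ (hFm l)]
    simp only [hF, Fin.removeNth_insertNth, Fin.insertNth_apply_same]
    have : ∀ t, ∫⁻ z, (W l).indicator (1 : (Fin k → ℝ) → ℝ≥0∞) z * η t = volume (W l) * η t := by
      intro t
      rw [lintegral_mul_const _ (measurable_one.indicator (hWm l)), lintegral_indicator_one (hWm l)]
    simp_rw [this]
    rw [lintegral_const_mul _ hηm, hη1, mul_one]
  rw [hint] at key
  refine le_trans ?_ key
  rw [← lintegral_indicator_one hU.measurableSet]
  refine lintegral_mono fun x => ?_
  by_cases hx : x ∈ U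
  swap
  · rw [indicator_of_notMem hx]; exact zero_le
  rw [indicator_of_mem hx, Pi.one_apply]
  have : ∀ i ∈ Finset.univ, (1:ℝ≥0∞) ≤ (∫⁻ (xᵢ : ℝ), f (Function.update x i xᵢ)) ^ ((1:ℝ) / ((Fintype.card (Fin (k+1)) : ℝ) - 1)) := by
    intro i _
    apply ENNReal.one_le_rpow
    · rw [← hη1]
      refine lintegral_mono fun t => ?_
      rw [hf]
      refine le_trans ?_ (Finset.single_le_sum (fun _ _ => zero_le) (Finset.mem_univ i))
      rw [hF]
      simp only [Fin.removeNth_update, Function.update_self]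
      rw [indicator_of_mem (show i.removeNth x ∈ W i from ⟨x, hx, rfl⟩)]
      simp
    · rw [Fintype.card_fin]; push_cast; simp; omega
  exact Finset.one_le_prod'' (fun i => this i (Finset.mem_univ i))

end PD

section PE1

lemma measurable_insertNth {k : ℕ} (l : Fin (k+1)) : Measurable (fun q : ℝ × (Fin k → ℝ) => (l.insertNth q.1 q.2 : Fin (k+1) → ℝ)) := by
  refine measurable_pi_lambda _ fun i => ?_
  refine Fin.succAboveCases l ?_ ?_ i
  · simp; exact measurable_fst
  · intro j; simp; exact (measurable_pi_apply j).comp measurable_snd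

lemma insertNth_mem_cb {k : ℕ} (i : Fin (k+1)) (x₀ : Fin (k+1) → ℝ) (R s : ℝ) (z : Fin k → ℝ) (hR : 0 ≤ R) :
    (i.insertNth s z : Fin (k+1) → ℝ) ∈ closedBall x₀ R ↔ s ∈ closedBall (x₀ i) R ∧ z ∈ closedBall (i.removeNth x₀ : Fin k → ℝ) R := by
  simp only [mem_closedBall, dist_pi_le_iff hR]
  constructor
  · intro h
    refine ⟨by simpa using h i, fun j => by simpa [Fin.removeNth] using h (i.succAbove j)⟩
  · rintro ⟨h1, h2⟩ j
    refine Fin.succAboveCases i ?_ ?_ j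
    · simpa using h1
    · intro j; simpa [Fin.removeNth] using h2 j

lemma slice_cube {k : ℕ} (i : Fin (k+1)) (x₀ : Fin (k+1) → ℝ) (R : ℝ) (hR : 0 ≤ R) (g : (Fin (k+1) → ℝ) → ℝ≥0∞) (hg : Measurable g) :
    ∫⁻ x in closedBall x₀ R, g x = ∫⁻ s in closedBall (x₀ i) R, ∫⁻ z in closedBall (i.removeNth x₀ : Fin k → ℝ) R, g (i.insertNth s z) := by
  rw [← lintegral_indicator measurableSet_closedBall, lint_slice i _ (hg.indicator measurableSet_closedBall),
    ← lintegral_indicator measurableSet_closedBall]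
  refine lintegral_congr fun s => ?_
  by_cases hs : s ∈ closedBall (x₀ i) R
  · rw [indicator_of_mem hs, ← lintegral_indicator measurableSet_closedBall]
    refine lintegral_congr fun z => ?_
    by_cases hz : z ∈ closedBall (i.removeNth x₀ : Fin k → ℝ) R
    · rw [indicator_of_mem hz, indicator_of_mem ((insertNth_mem_cb i x₀ R s z hR).2 ⟨hs, hz⟩)]
    · rw [indicator_of_notMem hz, indicator_of_notMem (fun h => hz ((insertNth_mem_cb i x₀ R s z hR).1 h).2)]
  · rw [indicator_of_notMem hs]
    have : ∀ z, (closedBall x₀ R).indicator g (i.insertNth s z : Fin (k+1) → ℝ) = 0 := fun z =>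
      indicator_of_notMem (fun h => hs ((insertNth_mem_cb i x₀ R s z hR).1 h).1) _
    simp [this]

/-- removal of a coordinate as a linear map -/
noncomputable def remL {k : ℕ} (l : Fin (k+1)) : (Fin (k+1) → ℝ) →L[ℝ] (Fin k → ℝ) :=
  ContinuousLinearMap.pi fun j => ContinuousLinearMap.proj (l.succAbove j)

/-- insertion of zero as a linear map -/
noncomputable def insL {k : ℕ} (l : Fin (k+1)) : (Fin k → ℝ) →L[ℝ] (Fin (k+1) → ℝ) :=
  LinearMap.toContinuousLinearMap
  { toFun := fun z => l.insertNth (0:ℝ) z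
    map_add' := by
      intro x y
      ext j
      refine Fin.succAboveCases l ?_ ?_ j <;> simp
    map_smul' := by
      intro c x
      ext j
      refine Fin.succAboveCases l ?_ ?_ j <;> simp }

lemma insL_apply {k : ℕ} (l : Fin (k+1)) (z : Fin k → ℝ) : insL l z = (l.insertNth (0:ℝ) z : Fin (k+1) → ℝ) := rfl

lemma remL_norm {k : ℕ} (l : Fin (k+1)) : ‖remL l‖ ≤ 1 := by
  refine ContinuousLinearMap.opNorm_le_bound _ zero_le_one fun x => ?_
  rw [one_mul, pi_norm_le_iff_of_nonneg (norm_nonneg _)]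
  intro j
  exact norm_le_pi_norm x _

lemma insL_norm {k : ℕ} (l : Fin (k+1)) : ‖insL l‖ ≤ 1 := by
  refine ContinuousLinearMap.opNorm_le_bound _ zero_le_one fun x => ?_
  rw [one_mul, pi_norm_le_iff_of_nonneg (norm_nonneg _)]
  intro j
  rw [insL_apply]
  refine Fin.succAboveCases l ?_ ?_ j
  · simp
  · intro j; simpa using norm_le_pi_norm x _

lemma insertNth_eq {k : ℕ} (l : Fin (k+1)) (s : ℝ) (z : Fin k → ℝ) : (l.insertNth s z : Fin (k+1) → ℝ) = insL l z + l.insertNth s 0 := by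
  rw [insL_apply]
  ext j
  refine Fin.succAboveCases l ?_ ?_ j <;> simp

lemma slice_contDiff {k : ℕ} (i l : Fin (k+1)) (s : ℝ) (w : (Fin (k+1) → ℝ) → (Fin (k+1) → ℝ)) (hw : ContDiff ℝ 1 w) :
    ContDiff ℝ 1 (fun z : Fin k → ℝ => (l.removeNth (w (i.insertNth s z)) : Fin k → ℝ)) := by
  have : (fun z : Fin k → ℝ => (l.removeNth (w (i.insertNth s z)) : Fin k → ℝ)) = fun z => remL l (w (insL i z + i.insertNth s 0)) := by
    funext z; rw [← insertNth_eq]; rfl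
  rw [this]
  fun_prop

lemma slice_fderiv {k : ℕ} (i l : Fin (k+1)) (s : ℝ) (w : (Fin (k+1) → ℝ) → (Fin (k+1) → ℝ)) (hw : ContDiff ℝ 1 w) (z : Fin k → ℝ) :
    ‖fderiv ℝ (fun z : Fin k → ℝ => (l.removeNth (w (i.insertNth s z)) : Fin k → ℝ)) z‖ ≤ ‖fderiv ℝ w (i.insertNth s z)‖ := by
  have : (fun z : Fin k → ℝ => (l.removeNth (w (i.insertNth s z)) : Fin k → ℝ)) = fun z => remL l (w (insL i z + i.insertNth s 0)) := by
    funext z; rw [← insertNth_eq]; rfl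
  rw [this]
  have h1 : HasFDerivAt (fun z => insL i z + (i.insertNth s 0 : Fin (k+1) → ℝ)) (insL i) z := (insL i).hasFDerivAt.add_const _
  have h2 : HasFDerivAt w (fderiv ℝ w (i.insertNth s z)) (insL i z + (i.insertNth s 0 : Fin (k+1) → ℝ)) := by
    rw [← insertNth_eq]; exact (hw.differentiable (by norm_num)).differentiableAt.hasFDerivAt
  have h3 := (remL l).hasFDerivAt.comp z (h2.comp z h1)
  have h4 : fderiv ℝ (fun z => remL l (w (insL i z + i.insertNth s 0))) z = _ := h3.fderiv
  rw [h4]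
  calc _ ≤ ‖remL l‖ * ‖(fderiv ℝ w (i.insertNth s z)).comp (insL i)‖ := ContinuousLinearMap.opNorm_comp_le _ _
    _ ≤ 1 * (‖fderiv ℝ w (i.insertNth s z)‖ * ‖insL i‖) := by
        gcongr
        · exact remL_norm l
        · exact ContinuousLinearMap.opNorm_comp_le _ _
    _ ≤ 1 * (‖fderiv ℝ w (i.insertNth s z)‖ * 1) := by gcongr; exact insL_norm i
    _ = _ := by ring

lemma enorm_split {E : Type*} [NormedAddCommGroup E] (a b : E) : ‖a‖ₑ ≤ ‖b‖ₑ + ‖a - b‖ₑ := by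
  calc ‖a‖ₑ = ‖b + (a - b)‖ₑ := by congr 1; abel
    _ ≤ _ := enorm_add_le _ _

lemma slice_main {k : ℕ} (hk : 2 ≤ k) (φ : ℝ → ℝ) (hφ : NondecPos φ) 
    (hcal : ∃ t₀ : ℝ, 0 < t₀ ∧ IntegrableOn (fun t => (t / φ t) ^ (1 / ((k : ℝ) - 1))) (Ioi t₀) volume)
    (f : (Fin (k+1) → ℝ) → (Fin (k+1) → ℝ)) (v : ℕ → (Fin (k+1) → ℝ) → (Fin (k+1) → ℝ))
    (hv : ∀ j, ContDiff ℝ 1 (v j)) (x₀ : Fin (k+1) → ℝ) (R : ℝ) (hR : 0 < R)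
    (hf : ContinuousOn f (closedBall x₀ R))
    (hlim : ∀ y ∈ closedBall x₀ R, Tendsto (fun j => v j y) atTop (𝓝 (f y)))
    (G : (Fin (k+1) → ℝ) → (Fin (k+1) → ℝ) →L[ℝ] (Fin (k+1) → ℝ)) (hG : Measurable G)
    (he : ∀ j, ∫⁻ z in closedBall x₀ R, ‖fderiv ℝ (v j) z - G z‖ₑ ≤ ENNReal.ofReal ((1/4) ^ j))
    (hM : ∫⁻ z in closedBall x₀ R, ENNReal.ofReal (φ ‖G z‖) ≠ ⊤) (i : Fin (k+1)) :
    ∀ᵐ s ∂(volume.restrict (closedBall (x₀ i) R)), ∀ l : Fin (k+1), ∀ r < R,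
      volume ((fun z : Fin k → ℝ => (l.removeNth (f (i.insertNth s z)) : Fin k → ℝ)) '' closedBall (i.removeNth x₀) r) ≤
        ENNReal.ofReal (8 ^ k * 2 ^ (k * k) * 2 ^ k) * ∫⁻ z in closedBall (i.removeNth x₀ : Fin k → ℝ) r, ‖G (i.insertNth s z)‖ₑ ^ k := by
  have hφm : Measurable (fun z => ENNReal.ofReal (φ ‖G z‖)) := by
    set ψ : ℝ → ℝ := fun t => if 0 < t then φ t else φ 0 with hψ
    have hψm : Measurable ψ := by
      have hmon : MonotoneOn φ (Ioi 0) := fun s hs t ht hst => hφ.1 s t hs hst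
      obtain ⟨g, hg, hgφ⟩ : ∃ g : ℝ → ℝ, Measurable g ∧ ∀ t, 0 < t → g t = φ t := by
        have hr : Measurable ((Ioi (0:ℝ)).domRestrict φ) := by
          have : Monotone ((Ioi (0:ℝ)).domRestrict φ) := fun s t hst => hmon s.2 t.2 hst
          exact this.measurable
        refine ⟨fun t => if h : 0 < t then φ t else 0, ?_, fun t ht => by simp [ht]⟩
        exact Measurable.dite (s := fun t : ℝ => 0 < t) (f := fun t => φ t.1) (g := fun t => 0) hr measurable_const measurableSet_Ioi
      have : ψ = fun t => if 0 < t then g t else φ 0 := by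
        funext t
        simp only [hψ]
        split_ifs with h
        · exact (hgφ t h).symm
        · rfl
      rw [this]
      exact Measurable.ite measurableSet_Ioi hg measurable_const
    have : (fun z => ENNReal.ofReal (φ ‖G z‖)) = fun z => ENNReal.ofReal (ψ ‖G z‖) := by
      funext z
      rcases (norm_nonneg (G z)).eq_or_lt with h | h
      · simp [hψ, ← h]
      · simp [hψ, h]
    rw [this]
    exact (hψm.comp hG.norm).ennreal_ofReal
  have hem : ∀ j, Measurable (fun z => ‖fderiv ℝ (v j) z - G z‖ₑ) := fun j =>
    (((hv j).continuous_fderiv (by norm_num)).measurable.sub hG).enorm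
  have sl := fun (g : (Fin (k+1) → ℝ) → ℝ≥0∞) (hg : Measurable g) => slice_cube i x₀ R hR.le g hg
  have hsm : ∀ (g : (Fin (k+1) → ℝ) → ℝ≥0∞) (hg : Measurable g), Measurable (fun s => ∫⁻ z in closedBall (i.removeNth x₀ : Fin k → ℝ) R, g (i.insertNth s z)) :=
    fun g hg => (hg.comp (measurable_insertNth i)).lintegral_prod_right'
  have A1 : ∀ᵐ s ∂(volume.restrict (closedBall (x₀ i) R)), ∫⁻ z in closedBall (i.removeNth x₀ : Fin k → ℝ) R, ENNReal.ofReal (φ ‖G (i.insertNth s z)‖) < ⊤ := by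
    refine ae_lt_top (hsm _ hφm) ?_
    rw [← sl _ hφm]; exact hM
  have A2 : ∀ᵐ s ∂(volume.restrict (closedBall (x₀ i) R)), ∑' j, ∫⁻ z in closedBall (i.removeNth x₀ : Fin k → ℝ) R, ‖fderiv ℝ (v j) (i.insertNth s z) - G (i.insertNth s z)‖ₑ < ⊤ := by
    refine ae_lt_top (Measurable.tsum fun j => hsm _ (hem j)) ?_
    rw [lintegral_tsum (fun j => (hsm _ (hem j)).aemeasurable)]
    refine ne_of_lt (lt_of_le_of_lt (b := ∑' j, ENNReal.ofReal ((1/4) ^ j)) (ENNReal.tsum_le_tsum fun j => ?_) ?_)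
    · rw [← sl _ (hem j)]; exact he j
    · exact (summable_geometric_of_lt_one (by norm_num : (0:ℝ) ≤ 1/4) (by norm_num)).tsum_ofReal_lt_top
  filter_upwards [A1, A2, ae_restrict_mem measurableSet_closedBall] with s h1 h2 hs l r hr
  have hin : ∀ z ∈ closedBall (i.removeNth x₀ : Fin k → ℝ) R, (i.insertNth s z : Fin (k+1) → ℝ) ∈ closedBall x₀ R := fun z hz =>
    (insertNth_mem_cb i x₀ R s z hR.le).2 ⟨hs, hz⟩
  have := area_upper hk φ hφ hcal (fun z => ‖G (i.insertNth s z)‖) ((hG.comp ((measurable_insertNth i).comp (measurable_const.prodMk measurable_id))).norm)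
    (i.removeNth x₀) R h1.ne (fun z : Fin k → ℝ => (l.removeNth (f (i.insertNth s z)) : Fin k → ℝ))
    (fun j => (fun z : Fin k → ℝ => (l.removeNth (v j (i.insertNth s z)) : Fin k → ℝ))) (fun j => slice_contDiff i l s _ (hv j))
    (by
      exact (continuous_removeNth l).comp_continuousOn (hf.comp (continuous_insertNth i s).continuousOn hin))
    (by
      intro y hy
      exact ((continuous_removeNth l).tendsto _).comp (hlim _ (hin y hy)))
    (fun j z => ‖fderiv ℝ (v j) (i.insertNth s z) - G (i.insertNth s z)‖ₑ)
    (by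
      intro j z hz
      rw [ofReal_norm]
      refine le_trans (b := ‖fderiv ℝ (v j) (i.insertNth s z)‖ₑ) ?_ ?_
      · rw [enorm_le_iff_norm_le]; exact slice_fderiv i l s _ (hv j) z
      · exact enorm_split _ _)
    (ENNReal.tendsto_atTop_zero_of_tsum_ne_top h2.ne)
    (closedBall (i.removeNth x₀) r) measurableSet_closedBall (closedBall_subset_ball hr)
  simpa only [ofReal_norm] using this

end PE1

section PE2

/-- sign -/
def sg (b : Bool) : ℝ := if b then 1 else -1

lemma sg_sq (b : Bool) : sg b * sg b = 1 := by cases b <;> simp [sg]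
lemma sg_abs (b : Bool) : |sg b| = 1 := by cases b <;> simp [sg]

/-- integral over one face -/
noncomputable def face {k : ℕ} (g : (Fin (k+1) → ℝ) → ℝ≥0∞) (x₀ : Fin (k+1) → ℝ) (i : Fin (k+1)) (b : Bool) (r : ℝ) : ℝ≥0∞ :=
  ∫⁻ z in closedBall (i.removeNth x₀ : Fin k → ℝ) r, g (i.insertNth (x₀ i + sg b * r) z)

/-- sum over faces -/
noncomputable def faceS {k : ℕ} (g : (Fin (k+1) → ℝ) → ℝ≥0∞) (x₀ : Fin (k+1) → ℝ) (r : ℝ) : ℝ≥0∞ :=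
  ∑ i, ∑ b, face g x₀ i b r

lemma face_le {k : ℕ} (g : (Fin (k+1) → ℝ) → ℝ≥0∞) (x₀ : Fin (k+1) → ℝ) (i : Fin (k+1)) (b : Bool) (r : ℝ) : face g x₀ i b r ≤ faceS g x₀ r := by
  refine le_trans ?_ (Finset.single_le_sum (fun _ _ => zero_le) (Finset.mem_univ i))
  exact (Finset.single_le_sum (f := fun b => face g x₀ i b r) (fun _ _ => zero_le) (Finset.mem_univ b))

lemma face_meas {k : ℕ} (g : (Fin (k+1) → ℝ) → ℝ≥0∞) (hg : Measurable g) (x₀ : Fin (k+1) → ℝ) (i : Fin (k+1)) (b : Bool) : Measurable (face g x₀ i b) := by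
  have h1 : face g x₀ i b = fun r => ∫⁻ z : Fin k → ℝ, {q : ℝ × (Fin k → ℝ) | dist q.2 (i.removeNth x₀) ≤ q.1}.indicator
      (fun q => g (i.insertNth (x₀ i + sg b * q.1) q.2)) (r, z) := by
    funext r
    rw [face, ← lintegral_indicator measurableSet_closedBall]
    rfl
  rw [h1]
  refine Measurable.lintegral_prod_right' (f := {q : ℝ × (Fin k → ℝ) | dist q.2 (i.removeNth x₀) ≤ q.1}.indicator
      (fun q => g (i.insertNth (x₀ i + sg b * q.1) q.2))) ?_
  refine Measurable.indicator ?_ (measurableSet_le (by fun_prop) (by fun_prop))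
  exact hg.comp ((measurable_insertNth i).comp (Measurable.prodMk (by fun_prop) measurable_snd))

lemma faceS_meas {k : ℕ} (g : (Fin (k+1) → ℝ) → ℝ≥0∞) (hg : Measurable g) (x₀ : Fin (k+1) → ℝ) : Measurable (faceS g x₀) := by
  unfold faceS
  exact Finset.measurable_sum _ fun i _ => Finset.measurable_sum _ fun b _ => face_meas g hg x₀ i b

lemma face_dist {k : ℕ} (x₀ : Fin (k+1) → ℝ) (i : Fin (k+1)) (b : Bool) (r : ℝ) (hr : 0 ≤ r) (z : Fin k → ℝ) (hz : z ∈ closedBall (i.removeNth x₀ : Fin k → ℝ) r) :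
    dist (i.insertNth (x₀ i + sg b * r) z : Fin (k+1) → ℝ) x₀ = r := by
  have hd : dist (x₀ i + sg b * r) (x₀ i) = r := by
    rw [Real.dist_eq, add_sub_cancel_left, abs_mul, sg_abs, one_mul, abs_of_nonneg hr]
  refine le_antisymm ?_ ?_
  · rw [← mem_closedBall, insertNth_mem_cb i x₀ r _ z hr]
    exact ⟨by rw [mem_closedBall, hd], hz⟩
  · have := dist_le_pi_dist (i.insertNth (x₀ i + sg b * r) z : Fin (k+1) → ℝ) x₀ i
    simp only [Fin.insertNth_apply_same] at this
    rwa [hd] at this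

lemma face_int {k : ℕ} (g : (Fin (k+1) → ℝ) → ℝ≥0∞) (hg : Measurable g) (x₀ : Fin (k+1) → ℝ) (i : Fin (k+1)) (b : Bool)
    (I : Set ℝ) (hI : MeasurableSet I) (hI0 : I ⊆ Ioi 0) :
    ∫⁻ r in I, face g x₀ i b r ≤ ∫⁻ x in {x | dist x x₀ ∈ I}, g x := by
  have hT : MeasurableSet {x : Fin (k+1) → ℝ | dist x x₀ ∈ I} := (continuous_id.dist continuous_const).measurable hI
  set g' := {x : Fin (k+1) → ℝ | dist x x₀ ∈ I}.indicator g with hg'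
  have hgm' : Measurable g' := hg.indicator hT
  rw [← lintegral_indicator hT, ← hg', lint_slice i g' hgm']
  have h1 : ∀ r ∈ I, face g x₀ i b r ≤ ∫⁻ z : Fin k → ℝ, g' (i.insertNth (x₀ i + sg b * r) z) := by
    intro r hr
    rw [face]
    refine le_trans ?_ (lintegral_mono' (μ := volume.restrict (closedBall (i.removeNth x₀ : Fin k → ℝ) r)) Measure.restrict_le_self le_rfl)
    refine setLIntegral_mono' measurableSet_closedBall fun z hz => ?_
    rw [hg', indicator_of_mem]
    show dist _ _ ∈ I
    rw [face_dist x₀ i b r (le_of_lt (hI0 hr)) z hz]; exact hr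
  refine (setLIntegral_mono' hI h1).trans ?_
  refine (lintegral_mono' Measure.restrict_le_self le_rfl).trans ?_
  apply le_of_eq
  cases b
  · simp only [sg, Bool.false_eq_true, if_false, neg_mul, one_mul, ← sub_eq_add_neg]
    exact lintegral_sub_left_eq_self (fun s => ∫⁻ z : Fin k → ℝ, g' (i.insertNth s z)) (x₀ i)
  · simp only [sg, if_true, one_mul]
    exact lintegral_add_left_eq_self (fun s => ∫⁻ z : Fin k → ℝ, g' (i.insertNth s z)) (x₀ i)

lemma faceS_int {k : ℕ} (g : (Fin (k+1) → ℝ) → ℝ≥0∞) (hg : Measurable g) (x₀ : Fin (k+1) → ℝ) 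
    (I : Set ℝ) (hI : MeasurableSet I) (hI0 : I ⊆ Ioi 0) :
    ∫⁻ r in I, faceS g x₀ r ≤ (2 * (k + 1) : ℕ) * ∫⁻ x in {x | dist x x₀ ∈ I}, g x := by
  unfold faceS
  rw [lintegral_finsetSum _ fun i _ => Finset.measurable_sum _ fun b _ => face_meas g hg x₀ i b]
  have : ∀ i, ∫⁻ r in I, ∑ b, face g x₀ i b r ≤ 2 * ∫⁻ x in {x | dist x x₀ ∈ I}, g x := by
    intro i
    rw [lintegral_finsetSum _ fun b _ => face_meas g hg x₀ i b]
    refine (Finset.sum_le_sum fun b _ => face_int g hg x₀ i b I hI hI0).trans ?_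
    simp
  refine (Finset.sum_le_sum fun i _ => this i).trans ?_
  simp only [Finset.sum_const, Finset.card_univ, Fintype.card_fin, nsmul_eq_mul]
  push_cast
  apply le_of_eq; ring

lemma proj_sub {k : ℕ} (f : (Fin (k+1) → ℝ) → (Fin (k+1) → ℝ)) (x₀ : Fin (k+1) → ℝ) (r : ℝ) (hr : 0 < r)
    (hf : ContinuousOn f (closedBall x₀ r)) (hopen : IsOpen (f '' ball x₀ r)) (l : Fin (k+1)) :
    (fun x : Fin (k+1) → ℝ => (l.removeNth x : Fin k → ℝ)) '' (f '' ball x₀ r) ⊆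
      ⋃ i : Fin (k+1), ⋃ b : Bool, (fun z : Fin k → ℝ => (l.removeNth (f (i.insertNth (x₀ i + sg b * r) z)) : Fin k → ℝ)) '' closedBall (i.removeNth x₀) r := by
  rintro _ ⟨y, hy, rfl⟩
  set U := f '' ball x₀ r with hU
  have hKc : IsCompact (f '' closedBall x₀ r) := (isCompact_closedBall _ _).image_of_continuousOn hf
  have hUK : U ⊆ f '' closedBall x₀ r := image_mono ball_subset_closedBall
  have hclU : closure U ⊆ f '' closedBall x₀ r := hKc.isClosed.closure_subset_iff.2 hUK
  have hupd : Continuous (fun t : ℝ => Function.update y l t) := continuous_const.update l continuous_id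
  set T : Set ℝ := (fun t : ℝ => Function.update y l t) ⁻¹' U with hT
  have hTo : IsOpen T := hopen.preimage hupd
  have hTn : T.Nonempty := ⟨y l, by simpa [hT] using hy⟩
  have hTu : T ≠ univ := by
    intro h
    obtain ⟨C, hC⟩ := (hKc.isBounded.subset hUK).exists_norm_le
    have h1 : Function.update y l (C + 1) ∈ U := by
      have : C + 1 ∈ T := by rw [h]; trivial
      exact this
    have h2 := norm_le_pi_norm (Function.update y l (C + 1)) l
    have h3 := hC _ h1
    rw [Function.update_self, Real.norm_eq_abs] at h2
    have := le_abs_self (C + 1)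
    linarith
  obtain ⟨t, ht⟩ := nonempty_frontier_iff.2 ⟨hTn, hTu⟩
  rw [hTo.frontier_eq] at ht
  have ht1 : Function.update y l t ∈ closure U := 
    (closure_mono (image_preimage_subset _ U)) (image_closure_subset_closure_image hupd ⟨t, ht.1, rfl⟩)
  have ht2 : Function.update y l t ∉ U := ht.2
  obtain ⟨x, hx, hfx⟩ := hclU ht1
  have hxb : x ∉ ball x₀ r := fun h => ht2 (by rw [← hfx]; exact ⟨x, h, rfl⟩)
  have hex : ∃ i, r ≤ dist (x i) (x₀ i) := by
    by_contra hc
    push Not at hc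
    exact hxb (by rw [mem_ball, dist_pi_lt_iff hr]; exact hc)
  obtain ⟨i, hi⟩ := hex
  have hle : dist (x i) (x₀ i) ≤ r := (dist_le_pi_dist x x₀ i).trans hx
  have heq : |x i - x₀ i| = r := by rw [← Real.dist_eq]; exact le_antisymm hle hi
  have hb : ∃ b, x i = x₀ i + sg b * r := by
    rcases (abs_eq hr.le).1 heq with h | h
    · exact ⟨true, by simp [sg]; linarith⟩
    · exact ⟨false, by simp [sg]; linarith⟩
  obtain ⟨b, hb⟩ := hb
  refine mem_iUnion.2 ⟨i, mem_iUnion.2 ⟨b, i.removeNth x, ?_, ?_⟩⟩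
  · rw [mem_closedBall, dist_pi_le_iff hr.le]
    intro j
    exact (dist_le_pi_dist x x₀ _).trans hx
  · simp only
    rw [← hb, Fin.insertNth_self_removeNth, hfx, Fin.removeNth_update]

end PE2

section PE3

/-- the data of a good map on a cube -/
structure GoodMap (k : ℕ) (φ : ℝ → ℝ) (f : (Fin (k+1) → ℝ) → (Fin (k+1) → ℝ)) (v : ℕ → (Fin (k+1) → ℝ) → (Fin (k+1) → ℝ))
    (x₀ : Fin (k+1) → ℝ) (R : ℝ) (G : (Fin (k+1) → ℝ) → (Fin (k+1) → ℝ) →L[ℝ] (Fin (k+1) → ℝ)) : Prop where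
  hφ : NondecPos φ
  hcal : ∃ t₀ : ℝ, 0 < t₀ ∧ IntegrableOn (fun t => (t / φ t) ^ (1 / ((k : ℝ) - 1))) (Ioi t₀) volume
  hv : ∀ j, ContDiff ℝ 1 (v j)
  hR : 0 < R
  hf : ContinuousOn f (closedBall x₀ R)
  hinj : InjOn f (closedBall x₀ R)
  hopen : ∀ r, r ≤ R → IsOpen (f '' ball x₀ r)
  hlim : ∀ y ∈ closedBall x₀ R, Tendsto (fun j => v j y) atTop (𝓝 (f y))
  hG : Measurable G
  he : ∀ j, ∫⁻ z in closedBall x₀ R, ‖fderiv ℝ (v j) z - G z‖ₑ ≤ ENNReal.ofReal ((1/4) ^ j)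
  hM : ∫⁻ z in closedBall x₀ R, ENNReal.ofReal (φ ‖G z‖) ≠ ⊤

variable {k : ℕ} {φ : ℝ → ℝ} {f : (Fin (k+1) → ℝ) → (Fin (k+1) → ℝ)} {v : ℕ → (Fin (k+1) → ℝ) → (Fin (k+1) → ℝ)}
    {x₀ : Fin (k+1) → ℝ} {R : ℝ} {G : (Fin (k+1) → ℝ) → (Fin (k+1) → ℝ) →L[ℝ] (Fin (k+1) → ℝ)}

/-- constant -/
noncomputable def CN (k : ℕ) : ℝ≥0∞ := (k + 1 : ℕ) * ENNReal.ofReal (8 ^ k * 2 ^ (k * k) * 2 ^ k)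

lemma good_radius (hk : 2 ≤ k) (H : GoodMap k φ f v x₀ R G) :
    ∀ᵐ r : ℝ, r ∈ Ioo 0 R → volume (f '' ball x₀ r) ≤ (CN k * faceS (fun x => ‖G x‖ₑ ^ k) x₀ r) ^ (((k:ℝ)+1)/k) := by
  have h1 : ∀ i : Fin (k+1), ∀ b : Bool, ∀ᵐ r : ℝ, r ∈ Ioo 0 R → ∀ l : Fin (k+1),
      volume ((fun z : Fin k → ℝ => (l.removeNth (f (i.insertNth (x₀ i + sg b * r) z)) : Fin k → ℝ)) '' closedBall (i.removeNth x₀) r) ≤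
        ENNReal.ofReal (8 ^ k * 2 ^ (k * k) * 2 ^ k) * face (fun x => ‖G x‖ₑ ^ k) x₀ i b r := by
    intro i b
    have h0 := slice_main hk φ H.hφ H.hcal f v H.hv x₀ R H.hR H.hf H.hlim G H.hG H.he H.hM i
    rw [ae_restrict_iff' measurableSet_closedBall] at h0
    have hq : Measure.QuasiMeasurePreserving (fun r : ℝ => x₀ i + sg b * r) volume volume := by
      cases b
      · simp only [sg, Bool.false_eq_true, if_false, neg_mul, one_mul, ← sub_eq_add_neg]
        exact (Measure.measurePreserving_sub_left volume (x₀ i)).quasiMeasurePreserving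
      · simp only [sg, if_true, one_mul]
        exact (measurePreserving_add_left volume (x₀ i)).quasiMeasurePreserving
    filter_upwards [hq.ae h0] with r hr hrI l
    refine hr ?_ l r hrI.2
    rw [mem_closedBall, Real.dist_eq, add_sub_cancel_left, abs_mul, sg_abs, one_mul, abs_of_pos hrI.1]
    exact hrI.2.le
  have h2 : ∀ᵐ r : ℝ, ∀ i : Fin (k+1), ∀ b : Bool, r ∈ Ioo 0 R → ∀ l : Fin (k+1),
      volume ((fun z : Fin k → ℝ => (l.removeNth (f (i.insertNth (x₀ i + sg b * r) z)) : Fin k → ℝ)) '' closedBall (i.removeNth x₀) r) ≤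
        ENNReal.ofReal (8 ^ k * 2 ^ (k * k) * 2 ^ k) * face (fun x => ‖G x‖ₑ ^ k) x₀ i b r := by
    rw [ae_all_iff]; intro i
    rw [ae_all_iff]; intro b
    exact h1 i b
  filter_upwards [h2] with r hr hrI
  refine (loomis (by omega) _ (H.hopen r hrI.2.le)).trans ?_
  refine ENNReal.rpow_le_rpow ?_ (by positivity)
  have h3 : ∀ l : Fin (k+1), volume ((fun x : Fin (k+1) → ℝ => (l.removeNth x : Fin k → ℝ)) '' (f '' ball x₀ r)) ≤
      ENNReal.ofReal (8 ^ k * 2 ^ (k * k) * 2 ^ k) * faceS (fun x => ‖G x‖ₑ ^ k) x₀ r := by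
    intro l
    refine (measure_mono (proj_sub f x₀ r hrI.1 (H.hf.mono (closedBall_subset_closedBall hrI.2.le)) (H.hopen r hrI.2.le) l)).trans ?_
    refine (measure_iUnion_fintype_le _ _).trans ?_
    rw [faceS, Finset.mul_sum]
    refine Finset.sum_le_sum fun i _ => ?_
    refine (measure_iUnion_fintype_le _ _).trans ?_
    rw [Finset.mul_sum]
    exact Finset.sum_le_sum fun b _ => hr i b hrI l
  refine (Finset.sum_le_sum fun l _ => h3 l).trans ?_
  rw [Finset.sum_const, Finset.card_univ, Fintype.card_fin, nsmul_eq_mul, CN]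
  exact le_of_eq (mul_assoc _ _ _).symm

lemma face_holder (hk : 2 ≤ k) (p : ℝ) (hp : (k:ℝ) < p) (κ J : (Fin (k+1) → ℝ) → ℝ≥0∞) (hκ : Measurable κ) (hJ : Measurable J)
    (g : (Fin (k+1) → ℝ) → ℝ≥0∞) (hle : ∀ x, g x ^ p ≤ κ x * J x) (x₀ : Fin (k+1) → ℝ) (r : ℝ) :
    faceS (fun x => g x ^ k) x₀ r ≤ (2 * (k + 1) : ℕ) * (faceS J x₀ r ^ ((k:ℝ)/p) * faceS (fun x => κ x ^ ((k:ℝ)/(p-k))) x₀ r ^ ((p-k)/p)) := by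
  have hk0 : (0:ℝ) < k := by exact_mod_cast (by omega : 0 < k)
  have hp0 : 0 < p := hk0.trans hp
  have hpk : 0 < p - k := by linarith
  have h1 : ∀ i b, face (fun x => g x ^ k) x₀ i b r ≤ faceS J x₀ r ^ ((k:ℝ)/p) * faceS (fun x => κ x ^ ((k:ℝ)/(p-k))) x₀ r ^ ((p-k)/p) := by
    intro i b
    have hins : Measurable (fun z : Fin k → ℝ => (i.insertNth (x₀ i + sg b * r) z : Fin (k+1) → ℝ)) :=
      (measurable_insertNth i).comp (measurable_const.prodMk measurable_id)
    have hconj : Real.HolderConjugate (p / k) (p / (p - k)) := by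
      rw [Real.holderConjugate_iff]
      constructor
      · rw [one_lt_div hk0]; exact hp
      · field_simp
        ring
    have hh := ENNReal.lintegral_mul_le_Lp_mul_Lq (volume.restrict (closedBall (i.removeNth x₀ : Fin k → ℝ) r)) hconj
      (f := fun z => J (i.insertNth (x₀ i + sg b * r) z) ^ ((k:ℝ)/p)) (g := fun z => κ (i.insertNth (x₀ i + sg b * r) z) ^ ((k:ℝ)/p))
      ((hJ.comp hins).pow_const _).aemeasurable ((hκ.comp hins).pow_const _).aemeasurable
    simp only [← ENNReal.rpow_mul] at hh
    rw [show (k:ℝ)/p * (p/k) = 1 by field_simp, show (k:ℝ)/p * (p/(p-k)) = k/(p-k) by field_simp, one_div_div, one_div_div] at hh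
    simp only [ENNReal.rpow_one] at hh
    calc face (fun x => g x ^ k) x₀ i b r ≤ ∫⁻ z in closedBall (i.removeNth x₀ : Fin k → ℝ) r, 
          ((fun z => J (i.insertNth (x₀ i + sg b * r) z) ^ ((k:ℝ)/p)) * (fun z => κ (i.insertNth (x₀ i + sg b * r) z) ^ ((k:ℝ)/p))) z := by
          rw [face]
          refine lintegral_mono fun z => ?_
          simp only [Pi.mul_apply]
          rw [← ENNReal.mul_rpow_of_nonneg _ _ (by positivity), mul_comm (J (i.insertNth (x₀ i + sg b * r) z))]
          refine le_trans ?_ (ENNReal.rpow_le_rpow (hle _) (by positivity))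
          rw [← ENNReal.rpow_mul, mul_div_cancel₀ _ hp0.ne', ENNReal.rpow_natCast]
      _ ≤ _ := hh
      _ ≤ _ := by
          refine mul_le_mul' (ENNReal.rpow_le_rpow (face_le J x₀ i b r) (by positivity)) (ENNReal.rpow_le_rpow (face_le (fun x => κ x ^ ((k:ℝ)/(p-k))) x₀ i b r) (by positivity))
  rw [faceS]
  refine (Finset.sum_le_sum fun i _ => Finset.sum_le_sum fun b _ => h1 i b).trans ?_
  simp only [Finset.sum_const, Finset.card_univ, Fintype.card_fin, nsmul_eq_mul, Fintype.card_bool]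
  push_cast
  apply le_of_eq; ring

lemma good_radius2 (hk : 2 ≤ k) (H : GoodMap k φ f v x₀ R G) (p : ℝ) (hp : (k:ℝ) < p) (κ : (Fin (k+1) → ℝ) → ℝ≥0∞) (hκ : Measurable κ)
    (hle : ∀ x, ‖G x‖ₑ ^ p ≤ κ x * ENNReal.ofReal |(G x).det|) :
    ∀ᵐ r : ℝ, r ∈ Ioo 0 R → volume (f '' ball x₀ r) ^ (p/((k:ℝ)+1)) ≤
      (CN k * (2 * (k + 1) : ℕ)) ^ (p/k) * (faceS (fun x => ENNReal.ofReal |(G x).det|) x₀ r * faceS (fun x => κ x ^ ((k:ℝ)/(p-k))) x₀ r ^ ((p-k)/k)) := by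
  have hk0 : (0:ℝ) < k := by exact_mod_cast (by omega : 0 < k)
  have hp0 : 0 < p := hk0.trans hp
  have hdet : Measurable (fun x => ENNReal.ofReal |(G x).det|) := by
    have := (ContinuousLinearMap.continuous_det (𝕜 := ℝ) (E := Fin (k+1) → ℝ)).measurable.comp H.hG
    exact this.abs.ennreal_ofReal
  filter_upwards [good_radius hk H] with r hr hrI
  have h1 := hr hrI
  have h2 := face_holder hk p hp κ _ hκ hdet (fun x => ‖G x‖ₑ) hle x₀ r
  calc volume (f '' ball x₀ r) ^ (p/((k:ℝ)+1)) ≤ ((CN k * faceS (fun x => ‖G x‖ₑ ^ k) x₀ r) ^ (((k:ℝ)+1)/k)) ^ (p/((k:ℝ)+1)) :=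
        ENNReal.rpow_le_rpow h1 (by positivity)
    _ = (CN k * faceS (fun x => ‖G x‖ₑ ^ k) x₀ r) ^ (p/k) := by
        rw [← ENNReal.rpow_mul]; congr 1; field_simp
    _ ≤ (CN k * ((2 * (k + 1) : ℕ) * (faceS (fun x => ENNReal.ofReal |(G x).det|) x₀ r ^ ((k:ℝ)/p) * faceS (fun x => κ x ^ ((k:ℝ)/(p-k))) x₀ r ^ ((p-k)/p)))) ^ (p/k) := 
        ENNReal.rpow_le_rpow (mul_le_mul_right h2 _) (by positivity)
    _ = _ := by
        rw [← mul_assoc, ENNReal.mul_rpow_of_nonneg _ _ (by positivity), ENNReal.mul_rpow_of_nonneg (_ ^ _) _ (by positivity), ← ENNReal.rpow_mul, ← ENNReal.rpow_mul]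
        rw [show (k:ℝ)/p * (p/k) = 1 by field_simp, show (p-k)/p * (p/k) = (p-k)/k by field_simp, ENNReal.rpow_one]

end PE3

section PE4

lemma degiorgi (δ M q : ℝ) (hδ : 0 < δ) (hM : 0 < M) (hq : 1 < q) (E : Set ℝ) (V : ℝ → ℝ)
    (hV0 : ∀ r, 0 ≤ V r) (hVb : ∀ r ∈ Icc δ (2*δ), V r ≤ V (2*δ))
    (hstep : ∀ r₁ r₂, δ ≤ r₁ → r₁ < r₂ → r₂ ≤ 2*δ → (volume (E ∩ Ioo r₁ r₂)).toReal * V r₁ ^ q ≤ M * V r₂) :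
    (volume (E ∩ Ioo δ (2*δ))).toReal * V δ ^ (q - 1) ≤ 2 * M * 2 ^ (1/(q-1)) := by
  by_contra hcon
  push Not at hcon
  set l : ℝ := 2 ^ (1/(q-1)) with hl
  have hq1 : 0 < q - 1 := by linarith
  have hl1 : 1 < l := Real.one_lt_rpow (by norm_num) (by positivity)
  have hl0 : 0 < l := by linarith
  have hlq : l ^ (q-1) = 2 := by
    rw [hl, ← Real.rpow_mul (by norm_num), one_div, inv_mul_cancel₀ hq1.ne', Real.rpow_one]
  set m : ℝ → ℝ := fun r => (volume (E ∩ Ioo r (2*δ))).toReal with hm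
  set m0 := m δ with hm0
  have hfin : ∀ a b : ℝ, volume (E ∩ Ioo a b) ≠ ⊤ := fun a b =>
    ((measure_mono inter_subset_right).trans_lt (by rw [Real.volume_Ioo]; exact ENNReal.ofReal_lt_top)).ne
  have hmono : ∀ r s, r ≤ s → m s ≤ m r := fun r s h =>
    ENNReal.toReal_mono (hfin _ _) (measure_mono (inter_subset_inter_right _ (Ioo_subset_Ioo_left h)))
  have hcov : ∀ r s, r ≤ s → s ≤ 2*δ → m r ≤ m s + (volume (E ∩ Ioo r s)).toReal := by
    intro r s hrs hs
    rw [hm]; simp only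
    rw [← ENNReal.toReal_add (hfin _ _) (hfin _ _)]
    refine ENNReal.toReal_mono (ENNReal.add_ne_top.2 ⟨hfin _ _, hfin _ _⟩) ?_
    calc volume (E ∩ Ioo r (2*δ)) ≤ volume ((E ∩ Ioo s (2*δ)) ∪ (E ∩ Ioo r s) ∪ {s}) := by
          refine measure_mono ?_
          rintro x ⟨hx, h1, h2⟩
          rcases lt_trichotomy x s with h | h | h
          · exact Or.inl (Or.inr ⟨hx, h1, h⟩)
          · exact Or.inr h
          · exact Or.inl (Or.inl ⟨hx, h, h2⟩)
      _ ≤ volume ((E ∩ Ioo s (2*δ)) ∪ (E ∩ Ioo r s)) + volume {s} := measure_union_le _ _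
      _ ≤ _ := by
          rw [Real.volume_singleton, add_zero]; exact measure_union_le _ _
  have hcont : ContinuousOn m (Icc δ (2*δ)) := by
    have hL : LipschitzOnWith 1 m (Icc δ (2*δ)) := by
      refine LipschitzOnWith.of_le_add_mul _ fun x hx y hy => ?_
      simp only [NNReal.coe_one, one_mul]
      rcases le_total x y with h | h
      · refine (hcov x y h hy.2).trans ?_
        gcongr
        have : (volume (E ∩ Ioo x y)).toReal ≤ (ENNReal.ofReal (y - x)).toReal := by
          refine ENNReal.toReal_mono ENNReal.ofReal_ne_top ?_
          rw [← Real.volume_Ioo]; exact measure_mono inter_subset_right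
        rw [ENNReal.toReal_ofReal (by linarith)] at this
        rw [Real.dist_eq, abs_sub_comm]
        exact this.trans (le_abs_self _)
      · have := hmono y x h
        have := dist_nonneg (x := x) (y := y)
        linarith
    exact hL.continuousOn
  have hm2 : m (2*δ) = 0 := by simp [hm]
  have hVδ : V δ ≠ 0 := by
    intro h
    rw [h, Real.zero_rpow hq1.ne', mul_zero] at hcon
    have : 0 < 2 * M * l := by positivity
    linarith
  have hVp : 0 < V δ := lt_of_le_of_ne (hV0 _) hVδ.symm
  have hm0p : 0 < m0 := by
    by_contra h
    have h1 : m0 * V δ ^ (q-1) ≤ 0 := mul_nonpos_of_nonpos_of_nonneg (by linarith) (by positivity)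
    have : 0 < 2 * M * l := by positivity
    linarith
  have hex : ∀ i : ℕ, ∃ r ∈ Icc δ (2*δ), m r = m0 * (1/2) ^ i := by
    intro i
    have := intermediate_value_Icc' (by linarith : δ ≤ 2*δ) hcont
    rw [hm2] at this
    have h2 : m0 * (1/2)^i ∈ Icc 0 (m δ) := by
      refine ⟨by positivity, ?_⟩
      rw [← hm0]
      have : ((1:ℝ)/2)^i ≤ 1 := pow_le_one₀ (by norm_num) (by norm_num)
      nlinarith
    obtain ⟨r, hr, h⟩ := this h2
    exact ⟨r, hr, h⟩
  choose r' hr' hmr' using hex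
  set r : ℕ → ℝ := fun i => if i = 0 then δ else r' i with hrdef
  have hr : ∀ i, r i ∈ Icc δ (2*δ) := by
    intro i
    by_cases h : i = 0
    · simp only [hrdef, h, if_true]; exact ⟨le_refl _, by linarith⟩
    · simp only [hrdef, h, if_false]; exact hr' i
  have hmr : ∀ i, m (r i) = m0 * (1/2) ^ i := by
    intro i
    by_cases h : i = 0
    · simp only [hrdef, h, if_true, pow_zero, mul_one]; rfl
    · simp only [hrdef, h, if_false]; exact hmr' i
  have hgrow : ∀ i, V δ * l ^ i ≤ V (r i) := by
    intro i
    induction i with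
    | zero => simp [hrdef]
    | succ i ih =>
      have hlt : r i < r (i+1) := by
        by_contra h
        have := hmono _ _ (not_lt.1 h)
        rw [hmr, hmr, pow_succ] at this
        have : 0 < m0 * (1/2)^i := by positivity
        linarith
      have h1 := hstep _ _ (hr i).1 hlt (hr (i+1)).2
      have h2 := hcov _ _ hlt.le (hr (i+1)).2
      rw [hmr, hmr, pow_succ] at h2
      have h3 : m0 * (1/2)^i * (1/2) ≤ (volume (E ∩ Ioo (r i) (r (i+1)))).toReal := by linarith
      have h4 : (V δ * l ^ i) ^ q ≤ V (r i) ^ q := Real.rpow_le_rpow (by positivity) ih (by linarith)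
      have h5 : m0 * (1/2)^i * (1/2) * (V δ * l ^ i) ^ q ≤ M * V (r (i+1)) :=
        (mul_le_mul h3 h4 (by positivity) ENNReal.toReal_nonneg).trans h1
      have h6 : (V δ * l ^ i) ^ q = V δ ^ (q-1) * V δ * (2 ^ i * l ^ i) := by
        rw [Real.mul_rpow (by positivity) (by positivity)]
        have e1 : V δ ^ q = V δ ^ (q-1) * V δ := by
          rw [← Real.rpow_add_one hVp.ne']; congr 1; ring
        have e2 : (l ^ i) ^ q = 2 ^ i * l ^ i := by
          rw [show q = (q - 1) + 1 by ring, Real.rpow_add_one (by positivity), ← Real.rpow_natCast l i, ← Real.rpow_mul hl0.le, mul_comm (i:ℝ),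
            Real.rpow_mul hl0.le, hlq, Real.rpow_natCast]
        rw [e1, e2]
      rw [h6] at h5
      have h7 : m0 * (1/2)^i * (1/2) * (V δ ^ (q-1) * V δ * (2 ^ i * l ^ i)) = (m0 * V δ ^ (q-1)) * (V δ * l ^ i) / 2 := by
        have : ((1:ℝ)/2)^i * 2^i = 1 := by rw [← mul_pow]; norm_num
        linear_combination (m0 * (1/2) * V δ ^ (q-1) * V δ * l ^ i) * this
      rw [h7] at h5
      have h8 : 2 * M * l * (V δ * l ^ i) / 2 ≤ (m0 * V δ ^ (q-1)) * (V δ * l ^ i) / 2 := by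
        gcongr
      have h9 : M * (V δ * l ^ (i+1)) ≤ M * V (r (i+1)) := by
        rw [pow_succ]; linarith
      exact le_of_mul_le_mul_left h9 hM
  have htop : Tendsto (fun i : ℕ => V δ * l ^ i) atTop atTop :=
    (tendsto_pow_atTop_atTop_of_one_lt hl1).const_mul_atTop hVp
  obtain ⟨i, hi⟩ := (htop.eventually_gt_atTop (V (2*δ))).exists
  have := hgrow i
  have := hVb _ (hr i)
  linarith

end PE4

section PE5

/-- constant -/
noncomputable def NF (k : ℕ) : ℝ≥0∞ := (2 * (k + 1) : ℕ)

lemma NF_ne_zero (k : ℕ) : NF k ≠ 0 := by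
  unfold NF; exact_mod_cast (by omega : 2 * (k+1) ≠ 0)
lemma NF_ne_top (k : ℕ) : NF k ≠ ⊤ := ENNReal.natCast_ne_top _
lemma CN_ne_zero (k : ℕ) : CN k ≠ 0 := by
  unfold CN
  refine mul_ne_zero (by exact_mod_cast (by omega : k+1 ≠ 0)) ?_
  rw [Ne, ENNReal.ofReal_eq_zero, not_le]; positivity
lemma CN_ne_top (k : ℕ) : CN k ≠ ⊤ := ENNReal.mul_ne_top (ENNReal.natCast_ne_top _) ENNReal.ofReal_ne_top

/-- constant -/
noncomputable def C1 (k : ℕ) (p : ℝ) : ℝ≥0∞ :=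
  4 * ENNReal.ofReal (2 ^ (1/(p/((k:ℝ)+1) - 1))) * ((CN k * NF k) ^ (p/k) * (2 * NF k) ^ ((p-k)/k) * NF k)

lemma C1_ne_top (k : ℕ) (hk : 2 ≤ k) (p : ℝ) (hp : (k:ℝ) + 1 < p) : C1 k p ≠ ⊤ := by
  have hk0 : (0:ℝ) < k := by exact_mod_cast (by omega : 0 < k)
  have h1 := CN_ne_top k
  have h2 := NF_ne_top k
  have e1 : 0 ≤ p / k := div_nonneg (by linarith) hk0.le
  have e2 : 0 ≤ (p-k) / k := div_nonneg (by linarith) hk0.le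
  have h3 : (CN k * NF k) ^ (p/k) ≠ ⊤ := ENNReal.rpow_ne_top_of_nonneg e1 (ENNReal.mul_ne_top h1 h2)
  have h4 : (2 * NF k) ^ ((p-k)/k) ≠ ⊤ := ENNReal.rpow_ne_top_of_nonneg e2 (ENNReal.mul_ne_top (by norm_num) h2)
  exact ENNReal.mul_ne_top (ENNReal.mul_ne_top (by norm_num) ENNReal.ofReal_ne_top) (ENNReal.mul_ne_top (ENNReal.mul_ne_top h3 h4) h2)

lemma cheb (δ : ℝ) (hδ : 0 < δ) (A : ℝ → ℝ≥0∞) (hA : Measurable A) (Y : ℝ≥0∞) (hY0 : Y ≠ 0) (hYt : Y ≠ ⊤)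
    (h : ∫⁻ r in Ioo δ (2*δ), A r ≤ Y) :
    ENNReal.ofReal (δ/2) ≤ volume ({r | A r ≤ 2 * Y / ENNReal.ofReal δ} ∩ Ioo δ (2*δ)) := by
  set A0 := 2 * Y / ENNReal.ofReal δ with hA0
  have hd0 : ENNReal.ofReal δ ≠ 0 := by simpa using hδ
  have hA0' : A0 ≠ 0 := ENNReal.div_ne_zero.2 ⟨mul_ne_zero (by norm_num) hY0, ENNReal.ofReal_ne_top⟩
  have hA0t : A0 ≠ ⊤ := ENNReal.div_ne_top (ENNReal.mul_ne_top (by norm_num) hYt) hd0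
  have h1 := mul_meas_ge_le_lintegral (μ := volume.restrict (Ioo δ (2*δ))) hA A0
  rw [Measure.restrict_apply (measurableSet_le measurable_const hA)] at h1
  have h2 : volume ({r | A0 ≤ A r} ∩ Ioo δ (2*δ)) ≤ ENNReal.ofReal (δ/2) := by
    rw [← ENNReal.mul_le_mul_iff_right hA0' hA0t]
    refine (h1.trans h).trans (le_of_eq ?_)
    rw [hA0, ENNReal.ofReal_div_of_pos (by norm_num), ENNReal.ofReal_ofNat, div_eq_mul_inv, div_eq_mul_inv]
    rw [show 2 * Y * (ENNReal.ofReal δ)⁻¹ * (ENNReal.ofReal δ * 2⁻¹) = Y * (ENNReal.ofReal δ * (ENNReal.ofReal δ)⁻¹) * (2 * 2⁻¹) by ring,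
      ENNReal.mul_inv_cancel hd0 ENNReal.ofReal_ne_top, ENNReal.mul_inv_cancel (by norm_num) (by norm_num), mul_one, mul_one]
  have h3 : volume (Ioo δ (2*δ)) ≤ volume ({r | A r ≤ A0} ∩ Ioo δ (2*δ)) + volume ({r | A0 ≤ A r} ∩ Ioo δ (2*δ)) := by
    refine (measure_mono ?_).trans (measure_union_le _ _)
    intro x hx
    rcases le_total (A x) A0 with h | h
    · exact Or.inl ⟨h, hx⟩
    · exact Or.inr ⟨h, hx⟩
  rw [Real.volume_Ioo, show 2*δ - δ = δ/2 + δ/2 by ring, ENNReal.ofReal_add (by positivity) (by positivity)] at h3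
  exact (ENNReal.add_le_add_iff_right ENNReal.ofReal_ne_top).1 (h3.trans (add_le_add le_rfl h2))

lemma core {k : ℕ} {φ : ℝ → ℝ} {f : (Fin (k+1) → ℝ) → (Fin (k+1) → ℝ)} {v : ℕ → (Fin (k+1) → ℝ) → (Fin (k+1) → ℝ)}
    {x₀ : Fin (k+1) → ℝ} {δ : ℝ} {G : (Fin (k+1) → ℝ) → (Fin (k+1) → ℝ) →L[ℝ] (Fin (k+1) → ℝ)}
    (hk : 2 ≤ k) (hδ : 0 < δ) (H : GoodMap k φ f v x₀ (2*δ) G) (p : ℝ) (hp : (k:ℝ) + 1 < p) (κ : (Fin (k+1) → ℝ) → ℝ≥0∞) (hκ : Measurable κ)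
    (hle : ∀ x, ‖G x‖ₑ ^ p ≤ κ x * ENNReal.ofReal |(G x).det|) (X : ℝ≥0∞)
    (hX : ∫⁻ x in closedBall x₀ (2*δ), κ x ^ ((k:ℝ)/(p-k)) ≤ X) (hX0 : X ≠ 0) (hXt : X ≠ ⊤) :
    ENNReal.ofReal δ * volume (f '' ball x₀ δ) ^ (p/((k:ℝ)+1) - 1) ≤ C1 k p * (X / ENNReal.ofReal δ) ^ ((p-k)/k) := by
  have hk0 : (0:ℝ) < k := by exact_mod_cast (by omega : 0 < k)
  have e1 : 0 ≤ p / k := div_nonneg (by linarith) hk0.le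
  have e2 : 0 ≤ (p-k) / k := div_nonneg (by linarith) hk0.le
  have hd0 : ENNReal.ofReal δ ≠ 0 := by simpa using hδ
  set q := p/((k:ℝ)+1) with hq
  have hq1 : 1 < q := by rw [hq, one_lt_div (by positivity)]; exact hp
  set A := faceS (fun x => κ x ^ ((k:ℝ)/(p-k))) x₀ with hA
  have hAm : Measurable A := faceS_meas _ (hκ.pow_const _) x₀
  set J := faceS (fun x => ENNReal.ofReal |(G x).det|) x₀ with hJ
  have hdet : Measurable (fun x => ENNReal.ofReal |(G x).det|) := by
    have := (ContinuousLinearMap.continuous_det (𝕜 := ℝ) (E := Fin (k+1) → ℝ)).measurable.comp H.hG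
    exact this.abs.ennreal_ofReal
  set Y := NF k * X with hY
  have hY0 : Y ≠ 0 := mul_ne_zero (NF_ne_zero k) hX0
  have hYt : Y ≠ ⊤ := ENNReal.mul_ne_top (NF_ne_top k) hXt
  have hAint : ∫⁻ r in Ioo δ (2*δ), A r ≤ Y := by
    refine (faceS_int _ (hκ.pow_const _) x₀ (Ioo δ (2*δ)) measurableSet_Ioo (fun x hx => hδ.trans hx.1)).trans ?_
    refine mul_le_mul_right (le_trans (lintegral_mono_set fun x hx => ?_) hX) _
    exact mem_closedBall.2 hx.2.le
  have hch := cheb δ hδ A hAm Y hY0 hYt hAint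
  set A0 := 2 * Y / ENNReal.ofReal δ with hA0
  have hA0' : A0 ≠ 0 := ENNReal.div_ne_zero.2 ⟨mul_ne_zero (by norm_num) hY0, ENNReal.ofReal_ne_top⟩
  have hA0t : A0 ≠ ⊤ := ENNReal.div_ne_top (ENNReal.mul_ne_top (by norm_num) hYt) hd0
  set M := (CN k * NF k) ^ (p/k) * A0 ^ ((p-k)/k) * NF k with hM
  have hcnf := ENNReal.mul_ne_top (CN_ne_top k) (NF_ne_top k)
  have hMt : M ≠ ⊤ := ENNReal.mul_ne_top (ENNReal.mul_ne_top (ENNReal.rpow_ne_top_of_nonneg e1 hcnf) (ENNReal.rpow_ne_top_of_nonneg e2 hA0t)) (NF_ne_top k)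
  have hM0 : M ≠ 0 := by
    refine mul_ne_zero (mul_ne_zero ?_ ?_) (NF_ne_zero k)
    · exact (ENNReal.rpow_pos (pos_iff_ne_zero.2 (mul_ne_zero (CN_ne_zero k) (NF_ne_zero k))) hcnf).ne'
    · exact (ENNReal.rpow_pos (pos_iff_ne_zero.2 hA0') hA0t).ne'
  set W : ℝ → ℝ≥0∞ := fun r => if r ≤ 2*δ then volume (f '' ball x₀ r) else 0 with hW
  have hWt : ∀ r, W r ≠ ⊤ := by
    intro r
    by_cases h : r ≤ 2*δ
    · simp only [hW, h, if_true]
      refine ((measure_mono (image_mono (ball_subset_closedBall.trans (closedBall_subset_closedBall h)))).trans_lt ?_).ne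
      exact ((isCompact_closedBall x₀ (2*δ)).image_of_continuousOn H.hf).measure_lt_top
    · simp [hW, h]
  have hWm : ∀ r s, r ≤ s → s ≤ 2*δ → W r ≤ W s := by
    intro r s hrs hs
    simp only [hW, hs, hrs.trans hs, if_true]
    exact measure_mono (image_mono (ball_subset_ball hrs))
  have hgr := good_radius2 hk H p (by linarith) κ hκ hle
  set E := {r | A r ≤ A0} with hE
  have hEm : MeasurableSet E := measurableSet_le hAm measurable_const
  have hstep : ∀ r₁ r₂, δ ≤ r₁ → r₁ < r₂ → r₂ ≤ 2*δ → volume (E ∩ Ioo r₁ r₂) * W r₁ ^ q ≤ M * W r₂ := by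
    intro r₁ r₂ h1 h2 h3
    set c := (CN k * NF k) ^ (p/k) * A0 ^ ((p-k)/k) with hc
    have hct : c ≠ ⊤ := ENNReal.mul_ne_top (ENNReal.rpow_ne_top_of_nonneg e1 hcnf) (ENNReal.rpow_ne_top_of_nonneg e2 hA0t)
    have hEI : MeasurableSet (E ∩ Ioo r₁ r₂) := hEm.inter measurableSet_Ioo
    calc volume (E ∩ Ioo r₁ r₂) * W r₁ ^ q = ∫⁻ r in E ∩ Ioo r₁ r₂, W r₁ ^ q := by
          rw [setLIntegral_const, mul_comm]
      _ ≤ ∫⁻ r in E ∩ Ioo r₁ r₂, c * J r := by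
          refine lintegral_mono_ae ?_
          refine (ae_restrict_iff' hEI).2 ?_
          filter_upwards [hgr] with r hr hrE
          have hrI : r ∈ Ioo 0 (2*δ) := ⟨by linarith [hrE.2.1], by linarith [hrE.2.2]⟩
          have h4 := hr hrI
          calc W r₁ ^ q ≤ W r ^ q := ENNReal.rpow_le_rpow (hWm _ _ hrE.2.1.le hrI.2.le) (by linarith)
            _ = volume (f '' ball x₀ r) ^ q := by simp only [hW, hrI.2.le, if_true]
            _ ≤ _ := h4
            _ ≤ (CN k * NF k) ^ (p/k) * (J r * A0 ^ ((p-k)/k)) := by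
                refine mul_le_mul_right (mul_le_mul_right (ENNReal.rpow_le_rpow hrE.1 e2) _) _
            _ = c * J r := by rw [hc]; ring
      _ ≤ ∫⁻ r in Ioo r₁ r₂, c * J r := lintegral_mono_set inter_subset_right
      _ = c * ∫⁻ r in Ioo r₁ r₂, J r := lintegral_const_mul' _ _ hct
      _ ≤ c * (NF k * ∫⁻ x in {x | dist x x₀ ∈ Ioo r₁ r₂}, ENNReal.ofReal |(G x).det|) := by
          refine mul_le_mul_right ?_ _
          exact faceS_int _ hdet x₀ _ measurableSet_Ioo (fun x hx => (hδ.trans_le h1).trans hx.1)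
      _ ≤ c * (NF k * W r₂) := by
          refine mul_le_mul_right (mul_le_mul_right ?_ _) _
          have hsub : {x | dist x x₀ ∈ Ioo r₁ r₂} ⊆ ball x₀ r₂ := fun x hx => hx.2
          refine (area_lower f v H.hv x₀ (2*δ) H.hR H.hf H.hinj H.hlim G H.hG H.he {x | dist x x₀ ∈ Ioo r₁ r₂} 
            ((continuous_id.dist continuous_const).measurable measurableSet_Ioo) (hsub.trans (ball_subset_ball h3))).trans ?_
          simp only [hW, h3, if_true]
          exact measure_mono (image_mono hsub)
      _ = M * W r₂ := by rw [hM, hc]; ring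
  have hdg := degiorgi δ M.toReal q hδ (ENNReal.toReal_pos hM0 hMt) hq1 E (fun r => (W r).toReal) (fun r => ENNReal.toReal_nonneg)
    (fun r hr => ENNReal.toReal_mono (hWt _) (hWm _ _ hr.2 le_rfl))
    (by
      intro r₁ r₂ h1 h2 h3
      have h4 := ENNReal.toReal_mono (ENNReal.mul_ne_top hMt (hWt _)) (hstep r₁ r₂ h1 h2 h3)
      rwa [ENNReal.toReal_mul, ENNReal.toReal_mul, ← ENNReal.toReal_rpow] at h4)
  have hvE : volume (E ∩ Ioo δ (2*δ)) ≠ ⊤ :=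
    ((measure_mono inter_subset_right).trans_lt (by rw [Real.volume_Ioo]; exact ENNReal.ofReal_lt_top)).ne
  have hdg' : volume (E ∩ Ioo δ (2*δ)) * W δ ^ (q-1) ≤ 2 * M * ENNReal.ofReal (2 ^ (1/(q-1))) := by
    have h0 : (2:ℝ) * M.toReal * 2 ^ (1/(q-1)) = (2 * M * ENNReal.ofReal (2 ^ (1/(q-1)))).toReal := by
      rw [ENNReal.toReal_mul (a := 2 * M), ENNReal.toReal_mul (a := 2), ENNReal.toReal_ofReal (by positivity)]; rfl
    simp only [ENNReal.toReal_rpow] at hdg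
    rw [h0, ← ENNReal.toReal_mul] at hdg
    refine (ENNReal.toReal_le_toReal ?_ ?_).1 hdg
    · exact ENNReal.mul_ne_top hvE (ENNReal.rpow_ne_top_of_nonneg (by linarith) (hWt _))
    · exact ENNReal.mul_ne_top (ENNReal.mul_ne_top (by norm_num) hMt) ENNReal.ofReal_ne_top
  have hWδ : W δ = volume (f '' ball x₀ δ) := by simp only [hW, (by linarith : δ ≤ 2*δ), if_true]
  rw [← hWδ]
  have h2 : ENNReal.ofReal δ = 2 * ENNReal.ofReal (δ/2) := by
    rw [← ENNReal.ofReal_ofNat, ← ENNReal.ofReal_mul (by norm_num)]; congr 1; ring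
  have hAA : A0 ^ ((p-k)/k) = (2 * NF k) ^ ((p-k)/k) * (X / ENNReal.ofReal δ) ^ ((p-k)/k) := by
    rw [← ENNReal.mul_rpow_of_nonneg _ _ e2, hA0, hY]
    congr 1
    simp only [div_eq_mul_inv]; ring
  calc ENNReal.ofReal δ * W δ ^ (q-1) = 2 * (ENNReal.ofReal (δ/2) * W δ ^ (q-1)) := by rw [h2]; ring
    _ ≤ 2 * (2 * M * ENNReal.ofReal (2 ^ (1/(q-1)))) := mul_le_mul_right ((mul_le_mul_left hch _).trans hdg') _
    _ = _ := by rw [hM, hAA, C1]; ring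

end PE5

section PF1

lemma transl_L1 {n : ℕ} {F : Type*} [NormedAddCommGroup F] [NormedSpace ℝ F] [FiniteDimensional ℝ F]
    (L : Eucl n → F) (hLm : StronglyMeasurable L) (hL : Integrable L) (K : Set (Eucl n)) (hK : IsCompact K) (η : ℝ) (hη : 0 < η) :
    ∃ r > 0, ∀ t : Eucl n, ‖t‖ < r → ∫⁻ x in K, ‖L (x - t) - L x‖ₑ ≤ ENNReal.ofReal η := by
  obtain ⟨h, hhc, hhe, hhcont, hhi⟩ := hL.exists_hasCompactSupport_lintegral_sub_le (ε := ENNReal.ofReal (η/3)) (by simpa using hη)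
  have hunif : UniformContinuous h := hhcont.uniformContinuous_of_tendsto_cocompact hhc.is_zero_at_infty
  set vK := (volume K).toReal with hvK
  have hKt : volume K ≠ ⊤ := hK.measure_lt_top.ne
  set ε := η / 3 / (vK + 1) with hε
  have hvK0 : 0 ≤ vK := ENNReal.toReal_nonneg
  have hε0 : 0 < ε := by positivity
  obtain ⟨r, hr, hrh⟩ := Metric.uniformContinuous_iff.1 hunif ε hε0
  refine ⟨r, hr, fun t ht => ?_⟩
  have hmL : Measurable fun x => ‖L x - h x‖ₑ := (hLm.sub hhcont.stronglyMeasurable).enorm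
  have hmh : Measurable fun x => ‖h (x - t) - h x‖ₑ := by
    have : Continuous fun x => h (x - t) - h x := by fun_prop
    exact this.stronglyMeasurable.enorm
  calc ∫⁻ x in K, ‖L (x - t) - L x‖ₑ ≤ ∫⁻ x in K, (‖L (x - t) - h (x - t)‖ₑ + (‖h (x - t) - h x‖ₑ + ‖L x - h x‖ₑ)) := by
        refine lintegral_mono fun x => ?_
        calc ‖L (x - t) - L x‖ₑ = ‖(L (x - t) - h (x - t)) + ((h (x - t) - h x) + (h x - L x))‖ₑ := by congr 1; abel
          _ ≤ _ := (enorm_add_le _ _).trans (add_le_add le_rfl ((enorm_add_le _ _).trans (by rw [enorm_sub_rev (h x)])))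
    _ = (∫⁻ x in K, ‖L (x - t) - h (x - t)‖ₑ) + ((∫⁻ x in K, ‖h (x - t) - h x‖ₑ) + ∫⁻ x in K, ‖L x - h x‖ₑ) := by
        have hmt : Measurable fun x => ‖L (x - t) - h (x - t)‖ₑ := hmL.comp (measurable_id.sub_const t)
        rw [lintegral_add_left hmt, lintegral_add_left hmh]
    _ ≤ ENNReal.ofReal (η/3) + (ENNReal.ofReal (η/3) + ENNReal.ofReal (η/3)) := by
        refine add_le_add ?_ (add_le_add ?_ ?_)
        · refine (setLIntegral_le_lintegral _ _).trans ?_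
          rw [lintegral_sub_right_eq_self (fun x => ‖L x - h x‖ₑ) t]
          exact hhe
        · calc ∫⁻ x in K, ‖h (x - t) - h x‖ₑ ≤ ∫⁻ x in K, ENNReal.ofReal ε := by
                refine lintegral_mono fun x => ?_
                rw [← ofReal_norm, ← dist_eq_norm]
                refine ENNReal.ofReal_le_ofReal (hrh ?_).le
                rw [dist_eq_norm]; simpa using ht
            _ = ENNReal.ofReal (ε * vK) := by
                rw [setLIntegral_const, ENNReal.ofReal_mul hε0.le, hvK, ENNReal.ofReal_toReal hKt]
            _ ≤ _ := by
                refine ENNReal.ofReal_le_ofReal ?_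
                rw [hε, div_mul_eq_mul_div, div_le_iff₀ (by positivity)]
                nlinarith
        · exact (setLIntegral_le_lintegral _ _).trans hhe
    _ = _ := by
        rw [← ENNReal.ofReal_add (by positivity) (by positivity), ← ENNReal.ofReal_add (by positivity) (by positivity)]
        congr 1; ring

lemma moll_L1 {n : ℕ} {F : Type*} [NormedAddCommGroup F] [NormedSpace ℝ F] [FiniteDimensional ℝ F]
    (L : Eucl n → F) (hLm : StronglyMeasurable L) (hL : Integrable L) (K : Set (Eucl n)) (η r : ℝ)
    (hr : ∀ t : Eucl n, ‖t‖ < r → ∫⁻ x in K, ‖L (x - t) - L x‖ₑ ≤ ENNReal.ofReal η)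
    (ρ : Eucl n → ℝ) (hρ : Continuous ρ) (hρ0 : ∀ x, 0 ≤ ρ x) (hρc : HasCompactSupport ρ) (hρ1 : ∫ x, ρ x = 1)
    (hρs : Function.support ρ ⊆ ball 0 r) :
    ∫⁻ x in K, ‖(∫ t, ρ t • L (x - t)) - L x‖ₑ ≤ ENNReal.ofReal η := by
  have hρi : Integrable ρ := hρ.integrable_of_hasCompactSupport hρc
  have h1 : ∀ x, ‖(∫ t, ρ t • L (x - t)) - L x‖ₑ ≤ ∫⁻ t, ENNReal.ofReal (ρ t) * ‖L (x - t) - L x‖ₑ := by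
    intro x
    have hi : Integrable fun t => ρ t • L (x - t) := 
      hρc.convolutionExists_left (ContinuousLinearMap.lsmul ℝ ℝ) hρ hL.locallyIntegrable x
    have h2 : (∫ t, ρ t • L (x - t)) - L x = ∫ t, ρ t • (L (x - t) - L x) := by
      simp only [smul_sub]
      rw [integral_sub hi (hρi.smul_const _), integral_smul_const, hρ1, one_smul]
    rw [h2]
    refine (enorm_integral_le_lintegral_enorm _).trans (le_of_eq ?_)
    refine lintegral_congr fun t => ?_
    rw [enorm_smul, Real.enorm_of_nonneg (hρ0 t)]
  have hm : Measurable fun q : Eucl n × Eucl n => ENNReal.ofReal (ρ q.2) * ‖L (q.1 - q.2) - L q.1‖ₑ := by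
    refine (hρ.measurable.comp measurable_snd).ennreal_ofReal.mul ?_
    exact ((hLm.comp_measurable (measurable_fst.sub measurable_snd)).sub (hLm.comp_measurable measurable_fst)).enorm
  calc ∫⁻ x in K, ‖(∫ t, ρ t • L (x - t)) - L x‖ₑ ≤ ∫⁻ x in K, ∫⁻ t, ENNReal.ofReal (ρ t) * ‖L (x - t) - L x‖ₑ := lintegral_mono h1
    _ = ∫⁻ t, ∫⁻ x in K, ENNReal.ofReal (ρ t) * ‖L (x - t) - L x‖ₑ := lintegral_lintegral_swap hm.aemeasurable
    _ ≤ ∫⁻ t, ENNReal.ofReal (ρ t) * ENNReal.ofReal η := by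
        refine lintegral_mono fun t => ?_
        rw [lintegral_const_mul' _ _ ENNReal.ofReal_ne_top]
        by_cases ht : ρ t = 0
        · simp [ht]
        · refine mul_le_mul_right (hr t ?_) _
          have := hρs ht
          rwa [mem_ball, dist_zero_right] at this
    _ = ENNReal.ofReal η := by
        rw [lintegral_mul_const _ hρ.measurable.ennreal_ofReal, ← ofReal_integral_eq_lintegral_ofReal hρi (Eventually.of_forall hρ0), hρ1]
        simp

end PF1

section PF2

lemma mollify {n : ℕ} (D : Set (Eucl n)) (hD : IsOpen D) (f : Eucl n → Eucl n) (Df : Eucl n → Eucl n →L[ℝ] Eucl n)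
    (hf : ContinuousOn f D) (hw : IsWeakDerivOn D f Df) (K : Set (Eucl n)) (hK : IsCompact K) (hKD : K ⊆ D) (η : ℝ) (hη : 0 < η) :
    ∃ g : Eucl n → Eucl n, ContDiff ℝ 1 g ∧ (∀ x ∈ K, dist (g x) (f x) ≤ η) ∧ ∫⁻ x in K, ‖fderiv ℝ g x - Df x‖ₑ ≤ ENNReal.ofReal η := by
  obtain ⟨δ, hδ, hδD⟩ := hK.exists_cthickening_subset_open hD hKD
  set K' := cthickening δ K with hK'
  have hK'c : IsCompact K' := hK.cthickening
  have hK'm : MeasurableSet K' := hK'c.measurableSet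
  have hball : ∀ x ∈ K, ∀ y, dist y x ≤ δ → y ∈ K' := fun x hx y hy => mem_cthickening_of_dist_le y x δ K hx hy
  set F := K'.indicator f with hF
  have hFi : Integrable F := by
    rw [hF, integrable_indicator_iff hK'm]
    exact (hf.mono hδD).integrableOn_compact hK'c
  have hLi0 : Integrable (K'.indicator Df) := by
    have h0 : IntegrableOn Df K' volume := hw.2.1.integrableOn_compact_subset hδD hK'c
    exact IntegrableOn.integrable_indicator (ε' := Eucl n →L[ℝ] Eucl n) h0 hK'm
  set L := hLi0.1.mk _ with hL
  have hLe : K'.indicator Df =ᵐ[volume] L := hLi0.1.ae_eq_mk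
  have hLm : StronglyMeasurable L := hLi0.1.stronglyMeasurable_mk
  have hLi : Integrable L := hLi0.congr hLe
  obtain ⟨r1, hr1, hr1'⟩ := transl_L1 L hLm hLi K hK η hη
  have hunif : UniformContinuousOn f K' := hK'c.uniformContinuousOn_of_continuous (hf.mono hδD)
  obtain ⟨r2, hr2, hr2'⟩ := Metric.uniformContinuousOn_iff.1 hunif η hη
  set r := min (min r1 r2) δ with hr
  have hr0 : 0 < r := by positivity
  let b : ContDiffBump (0 : Eucl n) := ⟨r/2, r, by positivity, by linarith⟩
  set ρ := b.normed volume with hρ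
  have hρs : Function.support ρ = ball 0 r := b.support_normed_eq
  have hρts : tsupport ρ = closedBall 0 r := b.tsupport_normed_eq
  have hρc : HasCompactSupport ρ := b.hasCompactSupport_normed
  have hρd : ContDiff ℝ (⊤ : ℕ∞) ρ := b.contDiff_normed
  have hρd1 : ContDiff ℝ 1 ρ := hρd.of_le (by exact_mod_cast le_top)
  set g := convolution ρ F (ContinuousLinearMap.lsmul ℝ ℝ) volume with hg
  have hgd : ContDiff ℝ 1 g := hρc.contDiff_convolution_left (n := 1) _ hρd1 hFi.locallyIntegrable
  have hKK' : K ⊆ K' := fun x hx => hball x hx x (by simpa using hδ.le)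
  refine ⟨g, hgd, fun x hx => ?_, ?_⟩
  · have h1 : F x = f x := indicator_of_mem (hKK' hx) _
    rw [← h1]
    refine b.dist_normed_convolution_le hFi.1 fun y hy => ?_
    have hy' : dist y x < r := hy
    have hyK : y ∈ K' := hball x hx y (hy'.le.trans (min_le_right _ _))
    rw [h1, hF, indicator_of_mem hyK]
    exact (hr2' y hyK x (hKK' hx) (hy'.trans_le ((min_le_left _ _).trans (min_le_right _ _)))).le
  · have hder : ∀ x ∈ K, fderiv ℝ g x = ∫ t, ρ t • L (x - t) := by
      intro x hx
      have h1 := (hρc.hasFDerivAt_convolution_left (ContinuousLinearMap.lsmul ℝ ℝ) hρd1 hFi.locallyIntegrable x (μ := volume)).fderiv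
      rw [← hg] at h1
      rw [h1]
      ext1 v
      have hdc : Continuous (fderiv ℝ ρ) := hρd1.continuous_fderiv (by norm_num)
      have hI1 : Integrable fun t => ((ContinuousLinearMap.lsmul ℝ ℝ).precompL (Eucl n)) (fderiv ℝ ρ t) (F (x - t)) :=
        (hρc.fderiv (𝕜 := ℝ)).convolutionExists_left _ hdc hFi.locallyIntegrable x
      have hI2 : Integrable fun t => ρ t • L (x - t) :=
        hρc.convolutionExists_left (ContinuousLinearMap.lsmul ℝ ℝ) hρd1.continuous hLi.locallyIntegrable x
      rw [convolution, ContinuousLinearMap.integral_apply hI1, ContinuousLinearMap.integral_apply hI2]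
      set θ : Eucl n → ℝ := fun y => ρ (x - y) with hθ
      have hθd : ContDiff ℝ (⊤ : ℕ∞) θ := hρd.comp (contDiff_const.sub contDiff_id)
      have hθts : tsupport θ ⊆ closedBall x r := by
        refine closure_minimal ?_ isClosed_closedBall
        intro y hy
        have : x - y ∈ Function.support ρ := hy
        rw [hρs, mem_ball, dist_zero_right, ← dist_eq_norm, dist_comm] at this
        exact this.le
      have hθK : tsupport θ ⊆ K' := hθts.trans fun y hy => hball x hx y ((mem_closedBall.1 hy).trans (min_le_right _ _))
      have hθc : HasCompactSupport θ := (isCompact_closedBall x r).of_isClosed_subset (isClosed_tsupport _) hθts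
      have hθf : ∀ y, fderiv ℝ θ y v = - fderiv ℝ ρ (x - y) v := by
        intro y
        have e1 : HasFDerivAt ρ (fderiv ℝ ρ (x - y)) (x - y) := (hρd1.differentiable (by norm_num) _).hasFDerivAt
        have e2 : HasFDerivAt (fun y : Eucl n => x - y) (-(ContinuousLinearMap.id ℝ (Eucl n))) y := by
          simpa using (hasFDerivAt_id y).const_sub x
        have e3 := (e1.comp y e2).fderiv
        have e4 : fderiv ℝ θ y = (fderiv ℝ ρ (x - y)).comp (-(ContinuousLinearMap.id ℝ (Eucl n))) := e3
        rw [e4]; simp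
      have hwk := hw.2.2 θ hθd hθc (hθK.trans hδD) v
      have e5 : ∫ t, (((ContinuousLinearMap.lsmul ℝ ℝ).precompL (Eucl n)) (fderiv ℝ ρ t) (F (x - t))) v = ∫ y, (fderiv ℝ ρ (x - y) v) • F y := by
        rw [← integral_sub_left_eq_self (fun t => (((ContinuousLinearMap.lsmul ℝ ℝ).precompL (Eucl n)) (fderiv ℝ ρ t) (F (x - t))) v) volume x]
        refine integral_congr_ae (Eventually.of_forall fun y => ?_)
        simp [ContinuousLinearMap.precompL_apply]
      have e6 : ∫ t, (ρ t • L (x - t)) v = ∫ y, θ y • (L y v) := by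
        rw [← integral_sub_left_eq_self (fun t => (ρ t • L (x - t)) v) volume x]
        refine integral_congr_ae (Eventually.of_forall fun y => ?_)
        simp [hθ]
      rw [e5, e6]
      have e7 : ∫ y, θ y • (L y v) = ∫ y, θ y • (Df y v) := by
        refine integral_congr_ae ?_
        filter_upwards [hLe] with y hy
        by_cases hyK : y ∈ K'
        · rw [← hy, indicator_of_mem hyK]
        · have : θ y = 0 := image_eq_zero_of_notMem_tsupport (fun h => hyK (hθK h))
          simp [this]
      rw [e7, hwk, ← integral_neg]
      refine integral_congr_ae (Eventually.of_forall fun y => ?_)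
      simp only [hθf, neg_smul, neg_neg]
      by_cases hyK : y ∈ K'
      · rw [hF, indicator_of_mem hyK]
      · have h8 : fderiv ℝ θ y = 0 := image_eq_zero_of_notMem_tsupport (fun h => hyK (hθK (tsupport_fderiv_subset ℝ h)))
        have h9 := hθf y
        rw [h8] at h9
        have h10 : fderiv ℝ ρ (x - y) v = 0 := by simpa using h9.symm
        rw [h10]; simp
    have hm := moll_L1 L hLm hLi K η r (fun t ht => hr1' t (ht.trans_le ((min_le_left _ _).trans (min_le_left _ _)))) ρ hρd1.continuous
      (fun x => b.nonneg_normed x) hρc b.integral_normed hρs.subset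
    refine le_trans (le_of_eq ?_) hm
    refine lintegral_congr_ae ?_
    refine (ae_restrict_iff' hK.measurableSet).2 ?_
    filter_upwards [hLe] with x hx hxK
    rw [hder x hxK, ← hx, indicator_of_mem (hKK' hxK)]

end PF2

section PG1

/-- coordinates -/
noncomputable def eE (n : ℕ) : Eucl n ≃L[ℝ] (Fin n → ℝ) := EuclideanSpace.equiv (Fin n) ℝ

lemma eE_apply {n : ℕ} (x : Eucl n) (i : Fin n) : eE n x i = x i := rfl

lemma eE_mp (n : ℕ) : MeasurePreserving (eE n) volume volume := PiLp.volume_preserving_ofLp (Fin n)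

lemma eE_emb (n : ℕ) : MeasurableEmbedding (eE n) := (eE n).toHomeomorph.measurableEmbedding

lemma eE_norm_le {n : ℕ} (x : Eucl n) : ‖eE n x‖ ≤ ‖x‖ := by
  rw [pi_norm_le_iff_of_nonneg (norm_nonneg _)]
  intro i
  exact PiLp.norm_apply_le x i

lemma eE_norm_ge {n : ℕ} (hn : 1 ≤ n) (x : Eucl n) : ‖x‖ ≤ n * ‖eE n x‖ := by
  rw [EuclideanSpace.norm_eq]
  have hn' : (1:ℝ) ≤ n := by exact_mod_cast hn
  apply Real.sqrt_le_iff.2 ⟨by positivity, ?_⟩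
  calc ∑ i, ‖x.ofLp i‖ ^ 2 ≤ ∑ i : Fin n, ‖eE n x‖ ^ 2 := by
        refine Finset.sum_le_sum fun i _ => ?_
        exact pow_le_pow_left₀ (norm_nonneg _) (norm_le_pi_norm (eE n x) i) 2
    _ = n * ‖eE n x‖ ^ 2 := by simp
    _ ≤ (n * ‖eE n x‖) ^ 2 := by
        rw [mul_pow]
        refine mul_le_mul_of_nonneg_right ?_ (by positivity)
        nlinarith

lemma eE_dist_le {n : ℕ} (x y : Eucl n) : dist (eE n x) (eE n y) ≤ dist x y := by
  rw [dist_eq_norm, dist_eq_norm, ← map_sub]; exact eE_norm_le _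

lemma eE_dist_ge {n : ℕ} (hn : 1 ≤ n) (x y : Eucl n) : dist x y ≤ n * dist (eE n x) (eE n y) := by
  rw [dist_eq_norm, dist_eq_norm, ← map_sub]; exact eE_norm_ge hn _

/-- conjugation -/
noncomputable def cj {n : ℕ} (A : Eucl n →L[ℝ] Eucl n) : (Fin n → ℝ) →L[ℝ] (Fin n → ℝ) :=
  ((eE n : Eucl n →L[ℝ] (Fin n → ℝ)).comp A).comp ((eE n).symm : (Fin n → ℝ) →L[ℝ] Eucl n)

lemma cj_apply {n : ℕ} (A : Eucl n →L[ℝ] Eucl n) (z : Fin n → ℝ) : cj A z = eE n (A ((eE n).symm z)) := rfl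

lemma cj_sub {n : ℕ} (A B : Eucl n →L[ℝ] Eucl n) : cj (A - B) = cj A - cj B := by
  ext z i; simp [cj_apply]

lemma cj_cont {n : ℕ} : Continuous (cj (n := n)) := by
  unfold cj
  exact ((continuous_const.clm_comp continuous_id).clm_comp continuous_const)

lemma cj_det {n : ℕ} (A : Eucl n →L[ℝ] Eucl n) : (cj A).det = A.det := by
  have := LinearMap.det_conj (A : Eucl n →ₗ[ℝ] Eucl n) (eE n).toLinearEquiv
  rw [ContinuousLinearMap.det, ContinuousLinearMap.det, ← this]
  rfl

lemma cj_norm {n : ℕ} (hn : 1 ≤ n) (A : Eucl n →L[ℝ] Eucl n) : ‖cj A‖ ≤ n * ‖A‖ := by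
  refine ContinuousLinearMap.opNorm_le_bound _ (by positivity) fun z => ?_
  rw [cj_apply]
  calc ‖eE n (A ((eE n).symm z))‖ ≤ ‖A ((eE n).symm z)‖ := eE_norm_le _
    _ ≤ ‖A‖ * ‖(eE n).symm z‖ := A.le_opNorm _
    _ ≤ ‖A‖ * (n * ‖z‖) := by
        gcongr
        have := eE_norm_ge hn ((eE n).symm z)
        simpa using this
    _ = _ := by ring

lemma cj_zero_iff {n : ℕ} (A : Eucl n →L[ℝ] Eucl n) : cj A = 0 ↔ A = 0 := by
  constructor
  · intro h
    ext1 x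
    have : cj A (eE n x) = 0 := by rw [h]; rfl
    rw [cj_apply] at this
    simpa using this
  · intro h
    ext z i
    simp [cj_apply, h]

lemma frob_entry {n : ℕ} (A : Eucl n →L[ℝ] Eucl n) (i j : Fin n) : |A (EuclideanSpace.single j 1) i| ≤ frobNorm A := by
  unfold frobNorm
  apply Real.abs_le_sqrt
  refine le_trans ?_ (Finset.single_le_sum (f := fun i => ∑ j, (A (EuclideanSpace.single j 1) i) ^ 2) (fun i _ => Finset.sum_nonneg fun j _ => sq_nonneg _) (Finset.mem_univ i))
  exact Finset.single_le_sum (f := fun j => (A (EuclideanSpace.single j 1) i) ^ 2) (fun j _ => sq_nonneg _) (Finset.mem_univ j)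

lemma cj_frob {n : ℕ} (A : Eucl n →L[ℝ] Eucl n) : ‖cj A‖ ≤ n * frobNorm A := by
  have hf0 : 0 ≤ frobNorm A := Real.sqrt_nonneg _
  refine ContinuousLinearMap.opNorm_le_bound _ (by positivity) fun z => ?_
  rw [pi_norm_le_iff_of_nonneg (by positivity)]
  intro i
  have hz : z = ∑ j, z j • (eE n (EuclideanSpace.single j 1)) := by
    ext l
    simp [eE_apply, Finset.sum_apply, Pi.single_apply]
  have h1 : cj A z i = ∑ j, z j * (A (EuclideanSpace.single j 1) i) := by
    conv_lhs => rw [hz]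
    rw [map_sum, Finset.sum_apply]
    refine Finset.sum_congr rfl fun j _ => ?_
    rw [map_smul, Pi.smul_apply, cj_apply, ContinuousLinearEquiv.symm_apply_apply, eE_apply, smul_eq_mul]
  rw [h1]
  calc ‖∑ j, z j * (A (EuclideanSpace.single j 1) i)‖ ≤ ∑ j, ‖z j * (A (EuclideanSpace.single j 1) i)‖ := norm_sum_le _ _
    _ ≤ ∑ j : Fin n, ‖z‖ * frobNorm A := by
        refine Finset.sum_le_sum fun j _ => ?_
        rw [norm_mul]
        exact mul_le_mul (norm_le_pi_norm z j) (frob_entry A i j) (abs_nonneg _) (norm_nonneg _)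
    _ = _ := by simp; ring

lemma scale_nondec (φ : ℝ → ℝ) (hφ : NondecPos φ) (c : ℝ) (hc : 0 < c) : NondecPos (fun t => φ (t / c)) := by
  refine ⟨fun s t hs hst => hφ.1 _ _ (by positivity) (by gcongr), fun t ht => hφ.2 _ (by positivity)⟩

lemma scale_cal (φ : ℝ → ℝ) (c : ℝ) (hc : 0 < c) (a : ℝ) (hφ : NondecPos φ)
    (h : ∃ t₀ : ℝ, 0 < t₀ ∧ IntegrableOn (fun t => (t / φ t) ^ a) (Ioi t₀) volume) :
    ∃ t₀ : ℝ, 0 < t₀ ∧ IntegrableOn (fun t => (t / φ (t / c)) ^ a) (Ioi t₀) volume := by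
  obtain ⟨t₀, ht₀, hi⟩ := h
  refine ⟨c * t₀, by positivity, ?_⟩
  have h1 := (integrableOn_Ioi_comp_mul_left_iff (fun t => (t / φ t) ^ a) (c * t₀) (inv_pos.2 hc)).2 (by
    rwa [inv_mul_cancel_left₀ hc.ne'])
  have h2 : IntegrableOn (fun t => c ^ a * ((c⁻¹ * t) / φ (c⁻¹ * t)) ^ a) (Ioi (c * t₀)) volume := h1.const_mul _
  refine h2.congr_fun ?_ measurableSet_Ioi
  intro t ht
  have ht0 : 0 < t := lt_trans (by positivity : 0 < c * t₀) ht
  have hp := hφ.2 (c⁻¹ * t) (by positivity)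
  simp only
  rw [← Real.mul_rpow hc.le (by positivity)]
  congr 1
  rw [show t / c = c⁻¹ * t by ring]
  field_simp

end PG1

section PG2

lemma cube_est {k : ℕ} (hk : 2 ≤ k) (p : ℝ) (hp : (k:ℝ) + 1 < p) (D D' : Set (Eucl (k+1))) (hD : IsOpen D)
    (φ : ℝ → ℝ) (hφ : NondecPos φ) (hcal : CalderonCond (k+1) φ) (f : Eucl (k+1) → Eucl (k+1)) (Df : Eucl (k+1) → Eucl (k+1) →L[ℝ] Eucl (k+1))
    (hhom : IsHomeoOn f D D') (hOS : MemOrliczSobolevOn φ D f Df) (G : Eucl (k+1) → Eucl (k+1) →L[ℝ] Eucl (k+1)) (hG : Measurable G)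
    (hGD : ∀ᵐ x, x ∈ D → G x = Df x) (κ : Eucl (k+1) → ℝ≥0∞) (hκ : Measurable κ)
    (hle : ∀ x, ‖G x‖ₑ ^ p ≤ κ x * ENNReal.ofReal |(G x).det|) (y : Eucl (k+1)) (δ : ℝ) (hδ : 0 < δ)
    (hsub : closedBall y (((k+1:ℕ):ℝ) * (2*δ)) ⊆ D) (X : ℝ≥0∞)
    (hX : ∫⁻ x in closedBall y (((k+1:ℕ):ℝ) * (2*δ)), (((k+1:ℕ):ℝ≥0∞) ^ p * κ x) ^ ((k:ℝ)/(p-k)) ≤ X) (hX0 : X ≠ 0) (hXt : X ≠ ⊤) :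
    ENNReal.ofReal δ * volume (f '' ball y δ) ^ (p/((k:ℝ)+1) - 1) ≤ C1 k p * (X / ENNReal.ofReal δ) ^ ((p-k)/k) := by
  set N : ℝ := ((k+1:ℕ):ℝ) with hN
  have hN1 : 1 ≤ N := by rw [hN]; exact_mod_cast (by omega : 1 ≤ k+1)
  have hN0 : 0 < N := by linarith
  have hk0 : (0:ℝ) ≤ k := Nat.cast_nonneg k
  have hp0 : 0 < p := by linarith
  set e := eE (k+1) with he
  set R := 2*δ with hR
  have hR0 : 0 < R := by positivity
  set Q := closedBall (e y) R with hQ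
  set K := e ⁻¹' Q with hK
  have hKc : IsCompact K := e.toHomeomorph.isCompact_preimage.2 (isCompact_closedBall _ _)
  have hKb : K ⊆ closedBall y (N * R) := by
    intro x hx
    have h1 : dist (e x) (e y) ≤ R := hx
    exact (eE_dist_ge (by omega) x y).trans (mul_le_mul_of_nonneg_left h1 hN0.le)
  have hKD : K ⊆ D := hKb.trans hsub
  have hQK : ∀ z ∈ Q, e.symm z ∈ K := by
    intro z hz
    show e (e.symm z) ∈ Q
    rwa [e.apply_symm_apply]
  have hη : ∀ j : ℕ, 0 < (1/4:ℝ) ^ j / N := fun j => by positivity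
  choose g hgd hgs hgi using fun j : ℕ => mollify D hD f Df hhom.continuousOn hOS.1 K hKc hKD _ (hη j)
  set F : (Fin (k+1) → ℝ) → (Fin (k+1) → ℝ) := fun z => e (f (e.symm z)) with hF
  set v : ℕ → (Fin (k+1) → ℝ) → (Fin (k+1) → ℝ) := fun j z => e (g j (e.symm z)) with hv
  set G' : (Fin (k+1) → ℝ) → (Fin (k+1) → ℝ) →L[ℝ] (Fin (k+1) → ℝ) := fun z => cj (G (e.symm z)) with hG'
  set κ' : (Fin (k+1) → ℝ) → ℝ≥0∞ := fun z => ((k+1:ℕ):ℝ≥0∞) ^ p * κ (e.symm z) with hκ'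
  have hmp := eE_mp (k+1)
  have hemb := eE_emb (k+1)
  rw [← he] at hmp hemb
  have hfd : ∀ j z, fderiv ℝ (v j) z = cj (fderiv ℝ (g j) (e.symm z)) := by
    intro j z
    have e1 : HasFDerivAt (g j) (fderiv ℝ (g j) (e.symm z)) (e.symm z) := ((hgd j).differentiable (by norm_num) _).hasFDerivAt
    have e2 : HasFDerivAt e.symm (e.symm : (Fin (k+1) → ℝ) →L[ℝ] Eucl (k+1)) z := e.symm.hasFDerivAt
    have e3 := (e.hasFDerivAt (x := g j (e.symm z))).comp z (e1.comp z e2)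
    exact e3.fderiv
  have hDae : ∀ᵐ x, x ∈ K → G x = Df x := by
    filter_upwards [hGD] with x hx hxK using hx (hKD hxK)
  have hKm : MeasurableSet K := hKc.measurableSet
  have H : GoodMap k (fun t => φ (t / N)) F v (e y) R G' := by
    refine ⟨scale_nondec φ hφ N hN0, ?_, ?_, hR0, ?_, ?_, ?_, ?_, ?_, ?_, ?_⟩
    · refine scale_cal φ N hN0 _ hφ ?_
      have : (1 / ((k:ℝ) - 1)) = 1 / (((k+1:ℕ):ℝ) - 2) := by push_cast; congr 1; ring
      rw [this]; exact hcal
    · intro j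
      exact e.contDiff.comp ((hgd j).comp e.symm.contDiff)
    · refine e.continuous.comp_continuousOn ((hhom.continuousOn.mono hKD).comp e.symm.continuous.continuousOn hQK)
    · intro a ha b hb hab
      have h1 : f (e.symm a) = f (e.symm b) := e.injective hab
      exact e.symm.injective (hhom.injOn (hKD (hQK a ha)) (hKD (hQK b hb)) h1)
    · intro r hr
      have h1 : F '' ball (e y) r = e '' (f '' (e.symm '' ball (e y) r)) := by
        rw [image_image, image_image]
      rw [h1]
      refine e.toHomeomorph.isOpenMap _ (hhom.isOpenMapOn _ ?_ (e.symm.toHomeomorph.isOpenMap _ isOpen_ball))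
      rintro _ ⟨z, hz, rfl⟩
      exact hKD (hQK z (ball_subset_closedBall.trans (closedBall_subset_closedBall hr) hz))
    · intro z hz
      refine (e.continuous.tendsto _).comp ?_
      rw [tendsto_iff_dist_tendsto_zero]
      refine squeeze_zero (fun _ => dist_nonneg) (fun j => hgs j _ (hQK z hz)) ?_
      have := (tendsto_pow_atTop_nhds_zero_of_lt_one (by norm_num : (0:ℝ) ≤ 1/4) (by norm_num)).div_const N
      simpa using this
    · exact cj_cont.measurable.comp (hG.comp e.symm.continuous.measurable)
    · intro j
      calc ∫⁻ z in Q, ‖fderiv ℝ (v j) z - G' z‖ₑ = ∫⁻ x in K, ‖cj (fderiv ℝ (g j) x - G x)‖ₑ := by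
            rw [← hmp.setLIntegral_comp_preimage_emb hemb]
            refine lintegral_congr fun x => ?_
            rw [hfd, hG', cj_sub, e.symm_apply_apply]
            simp only [e.symm_apply_apply]
        _ ≤ ∫⁻ x in K, ENNReal.ofReal N * ‖fderiv ℝ (g j) x - Df x‖ₑ := by
            refine lintegral_mono_ae ((ae_restrict_iff' hKm).2 ?_)
            filter_upwards [hDae] with x hx hxK
            rw [hx hxK, ← ofReal_norm, ← ofReal_norm, ← ENNReal.ofReal_mul hN0.le]
            exact ENNReal.ofReal_le_ofReal (cj_norm (by omega) _)
        _ = ENNReal.ofReal N * ∫⁻ x in K, ‖fderiv ℝ (g j) x - Df x‖ₑ := lintegral_const_mul' _ _ ENNReal.ofReal_ne_top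
        _ ≤ ENNReal.ofReal N * ENNReal.ofReal ((1/4) ^ j / N) := mul_le_mul_right (hgi j) _
        _ = ENNReal.ofReal ((1/4) ^ j) := by
            rw [← ENNReal.ofReal_mul hN0.le]; congr 1; field_simp
    · have h1 : ∫⁻ z in Q, ENNReal.ofReal (φ (‖G' z‖ / N)) = ∫⁻ x in K, ENNReal.ofReal (φ (‖cj (G x)‖ / N)) := by
        rw [← hmp.setLIntegral_comp_preimage_emb hemb]
        refine lintegral_congr fun x => ?_
        simp only [hG', e.symm_apply_apply]
      rw [h1]
      refine ((lintegral_mono_ae ((ae_restrict_iff' hKm).2 ?_)).trans_lt (hOS.2 K hKD hKc)).ne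
      filter_upwards [hDae] with x hx hxK
      rw [hx hxK]
      refine ENNReal.ofReal_le_ofReal ?_
      have h2 := cj_frob (Df x)
      rw [← hN] at h2
      by_cases h0 : Df x = 0
      · rw [(cj_zero_iff _).2 h0, h0]
        have : frobNorm (0 : Eucl (k+1) →L[ℝ] Eucl (k+1)) = 0 := by simp [frobNorm]
        rw [this]; simp
      · have h3 : 0 < ‖cj (Df x)‖ := norm_pos_iff.2 fun h => h0 ((cj_zero_iff _).1 h)
        refine hφ.1 _ _ (by positivity) ?_
        rw [div_le_iff₀ hN0]; linarith
  have hκm : Measurable κ' := measurable_const.mul (hκ.comp e.symm.continuous.measurable)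
  have hle' : ∀ z, ‖G' z‖ₑ ^ p ≤ κ' z * ENNReal.ofReal |(G' z).det| := by
    intro z
    have h1 : ‖G' z‖ₑ ≤ ((k+1:ℕ):ℝ≥0∞) * ‖G (e.symm z)‖ₑ := by
      rw [← ENNReal.ofReal_natCast, ← ofReal_norm, ← ofReal_norm, ← ENNReal.ofReal_mul hN0.le]
      exact ENNReal.ofReal_le_ofReal (cj_norm (by omega) _)
    calc ‖G' z‖ₑ ^ p ≤ (((k+1:ℕ):ℝ≥0∞) * ‖G (e.symm z)‖ₑ) ^ p := ENNReal.rpow_le_rpow h1 hp0.le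
      _ = ((k+1:ℕ):ℝ≥0∞) ^ p * ‖G (e.symm z)‖ₑ ^ p := ENNReal.mul_rpow_of_nonneg _ _ hp0.le
      _ ≤ ((k+1:ℕ):ℝ≥0∞) ^ p * (κ (e.symm z) * ENNReal.ofReal |(G (e.symm z)).det|) := mul_le_mul_right (hle _) _
      _ = _ := by rw [← mul_assoc, hG', cj_det]
  have hX' : ∫⁻ z in closedBall (e y) (2*δ), κ' z ^ ((k:ℝ)/(p-k)) ≤ X := by
    refine le_trans (le_of_eq ?_) ((lintegral_mono_set hKb).trans hX)
    rw [hK, hQ, ← hmp.setLIntegral_comp_preimage_emb hemb]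
    refine lintegral_congr fun x => ?_
    simp only [hκ', e.symm_apply_apply]
  have hc := core hk hδ H p hp κ' hκm hle' X hX' hX0 hXt
  refine le_trans (mul_le_mul_right (ENNReal.rpow_le_rpow ?_ ?_) _) hc
  · have h1 : f '' ball y δ ⊆ e ⁻¹' (F '' ball (e y) δ) := by
      rintro _ ⟨x, hx, rfl⟩
      refine ⟨e x, ?_, ?_⟩
      · exact (eE_dist_le x y).trans_lt hx
      · simp [hF]
    refine (measure_mono h1).trans (le_of_eq ?_)
    exact hmp.measure_preimage_emb hemb _
  · rw [sub_nonneg, one_le_div (by positivity)]; exact hp.le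

end PG2

section PG3

lemma alg_est (k : ℕ) (hk : 2 ≤ k) (p : ℝ) (hp : (k:ℝ) + 1 < p) (s V A C w d : ℝ≥0∞) (hs0 : s ≠ 0) (hst : s ≠ ⊤) (hd0 : d ≠ 0) (hdt : d ≠ ⊤)
    (h : (d * s) * V ^ (p/((k:ℝ)+1) - 1) ≤ C * ((w * A * s ^ (k+1)) / (d * s)) ^ ((p-k)/k)) :
    V ≤ (d⁻¹ * C * (w / d) ^ ((p-k)/k)) ^ (1/(p/((k:ℝ)+1) - 1)) * A ^ (((k:ℝ)+1) * (p-k) / (k * (p - (k+1)))) * s ^ (k+1) := by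
  have hk0 : (0:ℝ) < k := by exact_mod_cast (by omega : 0 < k)
  have hpk : 0 < p - k := by linarith
  have e2 : 0 ≤ (p-k)/k := by positivity
  set q1 := p/((k:ℝ)+1) - 1 with hq1
  have hq0 : 0 < q1 := by rw [hq1, sub_pos, one_lt_div (by positivity)]; exact hp
  have hsn0 : s ^ (k+1) ≠ 0 := pow_ne_zero _ hs0
  have hsnt : s ^ (k+1) ≠ ⊤ := ENNReal.pow_ne_top hst
  set U := V / s ^ (k+1) with hU
  have hVU : V = U * s ^ (k+1) := (ENNReal.div_mul_cancel hsn0 hsnt).symm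
  have h1 : (w * A * s ^ (k+1)) / (d * s) = (w / d * A) * s ^ (k:ℝ) := by
    rw [div_eq_mul_inv, ENNReal.mul_inv (Or.inl hd0) (Or.inl hdt), ENNReal.rpow_natCast, div_eq_mul_inv, pow_succ]
    rw [show w * A * (s ^ k * s) * (d⁻¹ * s⁻¹) = w * d⁻¹ * A * s ^ k * (s * s⁻¹) by ring, ENNReal.mul_inv_cancel hs0 hst, mul_one]
  rw [h1, ENNReal.mul_rpow_of_nonneg _ _ e2, ENNReal.mul_rpow_of_nonneg (w/d) _ e2, ← ENNReal.rpow_mul, hVU, ENNReal.mul_rpow_of_nonneg _ _ hq0.le,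
    ← ENNReal.rpow_natCast s (k+1), ← ENNReal.rpow_mul, show (k:ℝ) * ((p-k)/k) = p - k by field_simp] at h
  have hss : s * s ^ (((k+1:ℕ):ℝ) * q1) = s ^ (p - k) := by
    conv_lhs => rw [← ENNReal.rpow_one s, ← ENNReal.rpow_mul, one_mul]
    rw [← ENNReal.rpow_add _ _ hs0 hst]
    congr 1
    rw [hq1]; push_cast; field_simp; ring
  have hsp0 : s ^ (p - k) ≠ 0 := (ENNReal.rpow_pos (pos_iff_ne_zero.2 hs0) hst).ne'
  have hspt : s ^ (p - k) ≠ ⊤ := ENNReal.rpow_ne_top_of_nonneg hpk.le hst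
  have h2 : d * U ^ q1 ≤ C * ((w/d) ^ ((p-k)/k) * A ^ ((p-k)/k)) := by
    rw [← ENNReal.mul_le_mul_iff_left hsp0 hspt]
    calc d * U ^ q1 * s ^ (p - k) = d * s * (U ^ q1 * s ^ (((k+1:ℕ):ℝ) * q1)) := by rw [← hss]; ring
      _ ≤ _ := h
      _ = _ := by ring
  have h3 : U ^ q1 ≤ (d⁻¹ * C * (w / d) ^ ((p-k)/k)) * A ^ ((p-k)/k) := by
    calc U ^ q1 = d⁻¹ * (d * U ^ q1) := by rw [← mul_assoc, ENNReal.inv_mul_cancel hd0 hdt, one_mul]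
      _ ≤ d⁻¹ * (C * ((w/d) ^ ((p-k)/k) * A ^ ((p-k)/k))) := mul_le_mul_right h2 _
      _ = _ := by ring
  have h4 : U ≤ (d⁻¹ * C * (w / d) ^ ((p-k)/k)) ^ (1/q1) * A ^ (((k:ℝ)+1) * (p-k) / (k * (p - (k+1)))) := by
    have h5 := ENNReal.rpow_le_rpow h3 (by positivity : 0 ≤ 1/q1)
    rw [← ENNReal.rpow_mul, mul_one_div_cancel hq0.ne', ENNReal.rpow_one, ENNReal.mul_rpow_of_nonneg _ _ (by positivity), ← ENNReal.rpow_mul] at h5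
    have h6 : (p-k)/k * (1/q1) = ((k:ℝ)+1) * (p-k) / (k * (p - (k+1))) := by
      have : p - (k+1) ≠ 0 := by linarith
      have h7 : q1 = (p - (k+1)) / (k+1) := by rw [hq1]; field_simp
      rw [h7]; field_simp
    rwa [h6] at h5
  conv_lhs => rw [hVU]
  exact mul_le_mul_left h4 _

lemma good_G {n : ℕ} (hn : 1 ≤ n) (p : ℝ) (hp : 0 < p) (D : Set (Eucl n)) (hD : IsOpen D) (Df : Eucl n → Eucl n →L[ℝ] Eucl n)
    (hDf : LocallyIntegrableOn Df D volume) (hfd : HasFiniteDistortionOn D Df) :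
    ∃ G : Eucl n → Eucl n →L[ℝ] Eucl n, Measurable G ∧ (∀ᵐ x, x ∈ D → G x = Df x) ∧ Measurable (distortionKp p G) ∧
      (∀ x, ‖G x‖ₑ ^ p ≤ distortionKp p G x * ENNReal.ofReal |(G x).det|) ∧ ∀ x, distortionKp p G x ≠ 0 := by
  obtain ⟨Kd, -, hK⟩ := hfd
  have hm : AEStronglyMeasurable Df (volume.restrict D) := hDf.aestronglyMeasurable
  set M := hm.mk Df with hM
  have hMm : Measurable M := hm.stronglyMeasurable_mk.measurable
  have hME : Df =ᵐ[volume.restrict D] M := hm.ae_eq_mk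
  set T : Set (Eucl n) := {x | 0 < (M x).det} with hT
  have hdm : Measurable fun x => (M x).det := (ContinuousLinearMap.continuous_det (𝕜 := ℝ) (E := Eucl n)).measurable.comp hMm
  have hTm : MeasurableSet T := measurableSet_lt measurable_const hdm
  set G : Eucl n → Eucl n →L[ℝ] Eucl n := fun x => if x ∈ T then M x else 0 with hG
  have hGm : Measurable G := Measurable.ite hTm hMm measurable_const
  have hGdm : Measurable fun x => (G x).det := (ContinuousLinearMap.continuous_det (𝕜 := ℝ) (E := Eucl n)).measurable.comp hGm
  have hdet0 : (0 : Eucl n →L[ℝ] Eucl n).det = 0 := by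
    have : Nontrivial (Eucl n) := by
      have : Nonempty (Fin n) := ⟨⟨0, by omega⟩⟩
      infer_instance
    rw [ContinuousLinearMap.det]
    exact LinearMap.det_zero'' (M := Eucl n) (R := ℝ)
  have hle : ∀ x, ‖G x‖ₑ ^ p ≤ distortionKp p G x * ENNReal.ofReal |(G x).det| := by
    intro x
    by_cases hx : x ∈ T
    · have h1 : G x = M x := by simp only [hG, hx, if_true]
      have h2 : 0 < (G x).det := by rw [h1]; exact hx
      rw [distortionKp, if_pos h2.ne', abs_of_pos h2, ← ENNReal.ofReal_mul (by positivity), div_mul_cancel₀ _ h2.ne', ← ofReal_norm,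
        ENNReal.ofReal_rpow_of_nonneg (norm_nonneg _) hp.le]
    · have h1 : G x = 0 := by simp only [hG, hx, if_false]
      rw [h1, ← ofReal_norm, norm_zero, ENNReal.ofReal_zero, ENNReal.zero_rpow_of_pos hp]; exact zero_le
  refine ⟨G, hGm, ?_, ?_, hle, ?_⟩
  · rw [← ae_restrict_iff' hD.measurableSet]
    filter_upwards [hME, hK] with x h1 h2
    by_cases hx : x ∈ T
    · simp only [hG, hx, if_true, h1]
    · simp only [hG, hx, if_false]
      have h3 : (Df x).det ≤ 0 := by rw [h1]; exact not_lt.1 hx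
      have h4 : ‖Df x‖ ^ n ≤ 0 := h2.2.trans (mul_nonpos_of_nonneg_of_nonpos (by linarith [h2.1]) h3)
      have h5 : ‖Df x‖ = 0 := pow_eq_zero_iff (by omega) |>.1 (le_antisymm h4 (by positivity))
      exact (norm_eq_zero.1 h5).symm
  · unfold distortionKp
    refine Measurable.ite (hGdm (measurableSet_singleton 0).compl) ?_ ?_
    · exact ((hGm.norm.pow_const _).div hGdm).ennreal_ofReal
    · exact Measurable.ite (hGm (measurableSet_singleton 0)) measurable_const measurable_const
  · intro x h0
    have h1 := hle x
    rw [h0, zero_mul, nonpos_iff_eq_zero, ENNReal.rpow_eq_zero_iff_of_pos hp, ← ofReal_norm, ENNReal.ofReal_eq_zero] at h1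
    have h2 : G x = 0 := norm_le_zero_iff.1 h1
    rw [distortionKp, h2, hdet0] at h0
    simp at h0

end PG3

section PG4

/-- covering of the closed unit ball -/
theorem cov_exists (m : ℕ) (r : ℝ) (hr : 0 < r) : ∃ t : Finset (Eucl m),
    (∀ z ∈ t, ‖z‖ ≤ 1) ∧ ∀ x : Eucl m, ‖x‖ ≤ 1 → ∃ z ∈ t, ‖x - z‖ < r := by
  obtain ⟨t, ht, hf, hc⟩ := (isCompact_closedBall (0 : Eucl m) 1).finite_cover_balls hr
  refine ⟨hf.toFinset, ?_, ?_⟩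
  · intro z hz
    have := ht (hf.mem_toFinset.1 hz)
    simpa using this
  · intro x hx
    have h1 : x ∈ closedBall (0 : Eucl m) 1 := by simpa using hx
    have h2 := hc h1
    simp only [mem_iUnion, exists_prop] at h2
    obtain ⟨z, hz, h3⟩ := h2
    exact ⟨z, hf.mem_toFinset.2 hz, by rwa [mem_ball, dist_eq_norm] at h3⟩

theorem main_k (k : ℕ) (hk : 2 ≤ k) (p : ℝ) (hp : (k:ℝ) + 1 < p) :
    ∃ c : ℝ≥0∞, 0 < c ∧ c < ⊤ ∧
      ∀ (D D' : Set (Eucl (k+1))), IsOpen D →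
      ∀ φ : ℝ → ℝ, NondecPos φ → CalderonCond (k+1) φ →
      ∀ (f : Eucl (k+1) → Eucl (k+1)) (Df : Eucl (k+1) → Eucl (k+1) →L[ℝ] Eucl (k+1)),
        IsHomeoOn f D D' → MemOrliczSobolevOn φ D f Df → HasFiniteDistortionOn D Df →
      ∀ x₀ ∈ D, ∀ ε : ℝ, 0 < ε → ball x₀ (4 * ε) ⊆ D →
        volume (f '' ball x₀ (2 * ε)) / volume (ball x₀ (2 * ε)) ≤
          c * ((∫⁻ x in ball x₀ (4 * ε),
                  distortionKp p Df x ^ ((k:ℝ)/(p-k))) /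
                volume (ball x₀ (4 * ε)))
            ^ (((k:ℝ)+1)*(p-k)/(k*(p-(k+1)))) := by
  have hk0 : (0:ℝ) < k := by exact_mod_cast (by omega : 0 < k)
  have hpk : 0 < p - k := by linarith
  set N : ℝ := ((k+1:ℕ):ℝ) with hN
  have hN0 : 0 < N := by rw [hN]; positivity
  obtain ⟨t, ht1, ht2⟩ := cov_exists (k+1) (1/(4*N)) (by positivity)
  set ω : ℝ≥0∞ := volume (ball (0 : Eucl (k+1)) 1) with hω
  have hω0 : ω ≠ 0 := (measure_ball_pos volume _ one_pos).ne'
  have hωt : ω ≠ ⊤ := measure_ball_lt_top.ne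
  set d : ℝ≥0∞ := ENNReal.ofReal (1/(2*N)) with hd
  have hd0 : d ≠ 0 := by rw [hd]; exact (ENNReal.ofReal_pos.2 (by positivity)).ne'
  have hdt : d ≠ ⊤ := ENNReal.ofReal_ne_top
  set a : ℝ := (k:ℝ)/(p-k) with ha
  have ha0 : 0 < a := by rw [ha]; positivity
  set M : ℝ≥0∞ := (((k+1:ℕ):ℝ≥0∞)^p)^a with hM
  have hM1 : ((k+1:ℕ):ℝ≥0∞)^p ≠ 0 := by
    rw [Ne, ENNReal.rpow_eq_zero_iff_of_pos (by linarith)]; exact_mod_cast (by omega : k+1 ≠ 0)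
  have hM2 : ((k+1:ℕ):ℝ≥0∞)^p ≠ ⊤ := ENNReal.rpow_ne_top_of_nonneg (by linarith) (ENNReal.natCast_ne_top _)
  have hM0 : M ≠ 0 := by
    rw [hM, Ne, ENNReal.rpow_eq_zero_iff_of_pos ha0]; exact hM1
  have hMt : M ≠ ⊤ := ENNReal.rpow_ne_top_of_nonneg ha0.le hM2
  set w : ℝ≥0∞ := M * (ω * 4^(k+1)) with hw
  have hwt : w ≠ ⊤ := ENNReal.mul_ne_top hMt (ENNReal.mul_ne_top hωt (by simp))
  set C3 : ℝ≥0∞ := (d⁻¹*C1 k p*(w/d)^((p-k)/k))^(1/(p/((k:ℝ)+1)-1)) with hC3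
  have hq : 0 < p/((k:ℝ)+1)-1 := by
    rw [sub_pos, lt_div_iff₀ (by positivity)]; linarith
  have hC3t : C3 ≠ ⊤ := by
    refine ENNReal.rpow_ne_top_of_nonneg (by positivity) ?_
    refine ENNReal.mul_ne_top (ENNReal.mul_ne_top (ENNReal.inv_ne_top.2 hd0) (C1_ne_top k hk p hp)) ?_
    exact ENNReal.rpow_ne_top_of_nonneg (by positivity) (ENNReal.div_ne_top hwt hd0)
  set b : ℝ := ((k:ℝ)+1)*(p-k)/(k*(p-(k+1))) with hb
  have hb0 : 0 < b := by
    rw [hb]; have : 0 < p - (k+1) := by linarith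
    positivity
  have hvol : ∀ (x : Eucl (k+1)) (c r : ℝ), 0 < c → 0 < r →
      volume (ball x (c * r)) = ENNReal.ofReal c ^ (k+1) * ω * ENNReal.ofReal r ^ (k+1) := by
    intro x c r hc hr
    rw [Measure.addHaar_ball_of_pos _ _ (by positivity), finrank_euclideanSpace, Fintype.card_fin,
      mul_pow, ENNReal.ofReal_mul (by positivity), ENNReal.ofReal_pow hc.le, ENNReal.ofReal_pow hr.le]
    ring
  refine ⟨(t.card : ℝ≥0∞) * C3 * (2^(k+1) * ω)⁻¹ + 1, by positivity, ?_, ?_⟩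
  · refine lt_top_iff_ne_top.2 (ENNReal.add_ne_top.2 ⟨?_, ENNReal.one_ne_top⟩)
    exact ENNReal.mul_ne_top (ENNReal.mul_ne_top (ENNReal.natCast_ne_top _) hC3t)
      (ENNReal.inv_ne_top.2 (mul_ne_zero (by simp) hω0))
  intro D D' hD φ hφ hcal f Df hhom hOS hfd x₀ hx₀ ε hε hball
  obtain ⟨G, hG, hGD, hκ, hle, hκ0⟩ := good_G (by omega : 1 ≤ k+1) p (by linarith) D hD Df hOS.1.2.1 hfd
  set I : ℝ≥0∞ := ∫⁻ x in ball x₀ (4 * ε), distortionKp p Df x ^ a with hI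
  have hIG : I = ∫⁻ x in ball x₀ (4 * ε), distortionKp p G x ^ a := by
    rw [hI]
    refine setLIntegral_congr_fun_ae measurableSet_ball ?_
    filter_upwards [hGD] with x hx hxb
    simp only [distortionKp, hx (hball hxb)]
  set s : ℝ≥0∞ := ENNReal.ofReal ε with hs
  have hs0 : s ≠ 0 := (ENNReal.ofReal_pos.2 hε).ne'
  have hst : s ≠ ⊤ := ENNReal.ofReal_ne_top
  have hv4 : volume (ball x₀ (4 * ε)) = ω * 4^(k+1) * s^(k+1) := by
    rw [hvol x₀ 4 ε (by norm_num) hε, mul_comm (_ ^ _) ω]; simp [hs]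
  have hv2 : volume (ball x₀ (2 * ε)) = 2^(k+1) * ω * s^(k+1) := by
    rw [hvol x₀ 2 ε (by norm_num) hε]; simp [hs]
  have hv40 : volume (ball x₀ (4 * ε)) ≠ 0 := (measure_ball_pos volume _ (by positivity)).ne'
  have hv4t : volume (ball x₀ (4 * ε)) ≠ ⊤ := measure_ball_lt_top.ne
  set A : ℝ≥0∞ := I / volume (ball x₀ (4 * ε)) with hA
  by_cases hIt : I = ⊤
  · have : A = ⊤ := by rw [hA, hIt, ENNReal.top_div_of_ne_top hv4t]
    rw [this, ENNReal.top_rpow_of_pos hb0, ENNReal.mul_top (by positivity)]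
    exact le_top
  have hI0 : I ≠ 0 := by
    intro h0
    rw [hIG, lintegral_eq_zero_iff (hκ.pow_const a)] at h0
    have h1 : ∀ᵐ x ∂(volume.restrict (ball x₀ (4*ε))), False := by
      filter_upwards [h0] with x hx
      have hx' : distortionKp p G x ^ a = 0 := hx
      rw [ENNReal.rpow_eq_zero_iff_of_pos ha0] at hx'
      exact hκ0 x hx'
    rw [ae_iff] at h1
    simp at h1
    exact absurd h1 (by positivity)
  have hX : M * I = w * A * s^(k+1) := by
    have : I = A * volume (ball x₀ (4 * ε)) := (ENNReal.div_mul_cancel hv40 hv4t).symm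
    conv_lhs => rw [this, hv4]
    rw [hw]; ring
  have key : ∀ z ∈ t, volume (f '' ball (x₀ + (2*ε) • z) (ε/(2*N))) ≤ C3 * A^b * s^(k+1) := by
    intro z hz
    have hr : N * (2 * (ε/(2*N))) = ε := by field_simp
    have hsub4 : closedBall (x₀ + (2*ε) • z) (N * (2 * (ε/(2*N)))) ⊆ ball x₀ (4*ε) := by
      rw [hr]
      refine closedBall_subset_ball' ?_
      rw [dist_eq_norm, add_sub_cancel_left, norm_smul, Real.norm_of_nonneg (by positivity)]
      have := mul_le_mul_of_nonneg_left (ht1 z hz) (by positivity : 0 ≤ 2*ε)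
      linarith
    have hXle : ∫⁻ x in closedBall (x₀ + (2*ε) • z) (N * (2 * (ε/(2*N)))),
        (((k+1:ℕ):ℝ≥0∞)^p * distortionKp p G x)^((k:ℝ)/(p-k)) ≤ M * I := by
      refine (lintegral_mono_set hsub4).trans ?_
      rw [hIG, ← lintegral_const_mul _ (hκ.pow_const a)]
      refine lintegral_mono fun x => ?_
      rw [← ha, ENNReal.mul_rpow_of_nonneg _ _ ha0.le]
    have h := cube_est hk p hp D D' hD φ hφ hcal f Df hhom hOS G hG hGD (distortionKp p G) hκ hle
      (x₀ + (2*ε) • z) (ε/(2*N)) (by positivity) (hsub4.trans hball) (M * I) hXle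
      (mul_ne_zero hM0 hI0) (ENNReal.mul_ne_top hMt hIt)
    have hδ : ENNReal.ofReal (ε/(2*N)) = d * s := by
      rw [hd, hs, ← ENNReal.ofReal_mul (by positivity)]; congr 1; ring
    rw [hδ, hX] at h
    exact alg_est k hk p hp s _ A (C1 k p) w d hs0 hst hd0 hdt h
  have hcov : f '' ball x₀ (2*ε) ⊆ ⋃ z ∈ t, f '' ball (x₀ + (2*ε) • z) (ε/(2*N)) := by
    rintro _ ⟨x, hx, rfl⟩
    rw [mem_ball, dist_eq_norm] at hx
    obtain ⟨z, hz, h1⟩ := ht2 ((2*ε)⁻¹ • (x - x₀)) (by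
      rw [norm_smul, Real.norm_of_nonneg (by positivity), inv_mul_le_iff₀ (by positivity)]; linarith)
    refine mem_iUnion₂.2 ⟨z, hz, x, ?_, rfl⟩
    rw [mem_ball, dist_eq_norm]
    have h2 : x - (x₀ + (2*ε) • z) = (2*ε) • ((2*ε)⁻¹ • (x - x₀) - z) := by
      rw [smul_sub, smul_inv_smul₀ (by positivity)]; abel
    rw [h2, norm_smul, Real.norm_of_nonneg (by positivity)]
    calc 2*ε * ‖(2*ε)⁻¹ • (x - x₀) - z‖ < 2*ε * (1/(4*N)) := by gcongr
      _ = ε/(2*N) := by field_simp; norm_num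
  have hV : volume (f '' ball x₀ (2*ε)) ≤ (t.card : ℝ≥0∞) * (C3 * A^b * s^(k+1)) := by
    refine (measure_mono hcov).trans ((measure_biUnion_finset_le _ _).trans ?_)
    refine (Finset.sum_le_sum key).trans ?_
    rw [Finset.sum_const, nsmul_eq_mul]
  have hv20 : volume (ball x₀ (2 * ε)) ≠ 0 := (measure_ball_pos volume _ (by positivity)).ne'
  have hv2t : volume (ball x₀ (2 * ε)) ≠ ⊤ := measure_ball_lt_top.ne
  rw [ENNReal.div_le_iff hv20 hv2t]
  have hW0 : (2^(k+1) * ω : ℝ≥0∞) ≠ 0 := mul_ne_zero (by simp) hω0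
  have hWt : (2^(k+1) * ω : ℝ≥0∞) ≠ ⊤ := ENNReal.mul_ne_top (by simp) hωt
  calc volume (f '' ball x₀ (2*ε)) ≤ (t.card : ℝ≥0∞) * (C3 * A^b * s^(k+1)) := hV
    _ = (t.card : ℝ≥0∞) * (C3 * A^b * s^(k+1)) * ((2^(k+1) * ω)⁻¹ * (2^(k+1) * ω)) := by
        rw [ENNReal.inv_mul_cancel hW0 hWt, mul_one]
    _ = ((t.card : ℝ≥0∞) * C3 * (2^(k+1) * ω)⁻¹) * A^b * volume (ball x₀ (2 * ε)) := by
        rw [hv2]; ring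
    _ ≤ _ := by gcongr; exact le_self_add



end PG4

/-- for `p ∈ (n, n+1/(n-2))` there is a constant `c₂ = c₂(n,p)` such that for
every homeomorphism of finite distortion `f : D → D'` of class `W^{1,φ}_loc` (Calderón-type
condition on `φ`), every `x₀ ∈ D` and `ε > 0` with `B(x₀,4ε) ⊆ D`:
`m(fB(x₀,2ε))/m(B(x₀,2ε)) ≤ c₂ (⨍_{B(x₀,4ε)} K_p^{(n-1)/(p-n+1)} dm)^{n(p-n+1)/(n(p-n+1)-p)}`. -/
theorem stmt_12 (n : ℕ) (hn : 3 ≤ n) (p : ℝ)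
    (hp : p ∈ Ioo (n : ℝ) ((n : ℝ) + 1 / ((n : ℝ) - 2))) :
    ∃ c : ℝ≥0∞, 0 < c ∧ c < ⊤ ∧
      ∀ (D D' : Set (Eucl n)), IsOpen D → IsConnected D → IsOpen D' → IsConnected D' →
      ∀ φ : ℝ → ℝ, NondecPos φ → CalderonCond n φ →
      ∀ (f : Eucl n → Eucl n) (Df : Eucl n → Eucl n →L[ℝ] Eucl n),
        IsHomeoOn f D D' → MemOrliczSobolevOn φ D f Df → HasFiniteDistortionOn D Df →
      ∀ x₀ ∈ D, ∀ ε : ℝ, 0 < ε → ball x₀ (4 * ε) ⊆ D →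
        volume (f '' ball x₀ (2 * ε)) / volume (ball x₀ (2 * ε)) ≤
          c * ((∫⁻ x in ball x₀ (4 * ε),
                  distortionKp p Df x ^ (((n:ℝ)-1)/(p-(n:ℝ)+1))) /
                volume (ball x₀ (4 * ε)))
            ^ ((n:ℝ)*(p-(n:ℝ)+1)/((n:ℝ)*(p-(n:ℝ)+1)-p)) := by
  obtain ⟨k, rfl⟩ : ∃ k, n = k + 1 := ⟨n - 1, by omega⟩
  have hp1 : (k:ℝ) + 1 < p := by have := hp.1; push_cast at this; exact this
  obtain ⟨c, hc0, hct, h⟩ := main_k k (by omega) p hp1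
  refine ⟨c, hc0, hct, ?_⟩
  intro D D' hD _ _ _ φ hφ hcal f Df hhom hOS hfd x₀ hx₀ ε hε hball
  have h1 := h D D' hD φ hφ hcal f Df hhom hOS hfd x₀ hx₀ ε hε hball
  have e1 : (((k+1:ℕ):ℝ)-1)/(p-((k+1:ℕ):ℝ)+1) = (k:ℝ)/(p-k) := by
    push_cast; congr 1 <;> ring
  have e2 : ((k+1:ℕ):ℝ)*(p-((k+1:ℕ):ℝ)+1)/(((k+1:ℕ):ℝ)*(p-((k+1:ℕ):ℝ)+1)-p)
      = ((k:ℝ)+1)*(p-k)/(k*(p-(k+1))) := by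
    push_cast; congr 1 <;> ring
  rw [e1, e2]
  exact h1
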